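/- arXiv:2303.03325 — 7 statements merged into one kernel-verified Lean document; each statement's English description precedes it below -/
import Mathlib

section
/- Fix a real number s ≥ 0 and let o_s ∈ [0,∞)^{d₁+k+d} be the point whose first d₁ coordinates equal s/d₁, whose next k coordinates equal s/k, and whose last d coordinates equal s/d. Then o_s belongs to N_R(Q) if and only if there exist a constant c > 0 and a neighborhood 𝒩 of Q in the (finite-dimensional) space of trilinear forms on ℝ^{d₁} × ℝ^k × ℝ^d such that every trilinear form Q' ∈ 𝒩 satisfies 𝒬_{Q'}[u,v,w] ≥ c |det u|^{s/d₁} |det v|^{s/k} |det w|^{s/d} for all bases u of ℝ^{d₁}, v of ℝ^k, w of ℝ^d. -/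
noncomputable section

open MeasureTheory
open scoped BigOperators ENNReal NNReal

namespace Statement3

abbrev E (n : ℕ) : Type := EuclideanSpace ℝ (Fin n)

/-- Evaluation of the trilinear form on `ℝ^{d₁} × ℝ^k × ℝ^d` with coefficient array `c`. -/
def triEval {d₁ k d : ℕ} (c : Fin d₁ → Fin k → Fin d → ℝ)
    (u : E d₁) (v : E k) (w : E d) : ℝ :=
  ∑ i : Fin d₁, ∑ i' : Fin k, ∑ i'' : Fin d, u i * v i' * w i'' * c i i' i''

/-- The determinant `Q_s(t; v₁,…,v_s; w₁,…,w_s)`. -/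
def Qdet {d₁ k d : ℕ} (c : Fin d₁ → Fin k → Fin d → ℝ) (s : ℕ)
    (t : E d₁) (v : Fin s → E k) (w : Fin s → E d) : ℝ :=
  Matrix.det (Matrix.of fun i j : Fin s => triEval c t (v i) (w j))

/-- Iterated directional derivative along the directions `a 0, …, a (s-1)`. -/
def iterDir {d₁ : ℕ} : (s : ℕ) → (Fin s → E d₁) → (E d₁ → ℝ) → E d₁ → ℝ
  | 0, _, g => g
  | s + 1, a, g => fun t => fderiv ℝ (iterDir s (fun i => a i.succ) g) t (a 0)

/-- `β` counts the sequence `I`. -/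
def Counts {m s : ℕ} (β : Fin m → ℕ) (I : Fin s → Fin m) : Prop :=
  ∀ ℓ : Fin m, (Finset.univ.filter fun j => I j = ℓ).card = β ℓ

/-- Membership in the set `N₀(Q, ũ, ṽ, w̃)`. -/
def InN0 {d₁ k d : ℕ} (c : Fin d₁ → Fin k → Fin d → ℝ)
    (u : Fin d₁ → E d₁) (v : Fin k → E k) (w : Fin d → E d)
    (p : (Fin d₁ → ℕ) × (Fin k → ℕ) × (Fin d → ℕ)) : Prop :=
  (p.1 = 0 ∧ p.2.1 = 0 ∧ p.2.2 = 0) ∨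
  ∃ s : ℕ, 1 ≤ s ∧ s ≤ min d k ∧
    ∃ (I : Fin s → Fin d₁) (I' : Fin s → Fin k) (I'' : Fin s → Fin d),
      Counts p.1 I ∧ Counts p.2.1 I' ∧ Counts p.2.2 I'' ∧
      iterDir s (fun j => u (I j))
        (fun t => Qdet c s t (fun j => v (I' j)) (fun j => w (I'' j))) 0 ≠ 0

def toPoint {d₁ k d : ℕ} (p : (Fin d₁ → ℕ) × (Fin k → ℕ) × (Fin d → ℕ)) :
    (Fin d₁ → ℝ) × (Fin k → ℝ) × (Fin d → ℝ) :=
  ((fun i => (p.1 i : ℝ)), (fun i => (p.2.1 i : ℝ)), fun i => (p.2.2 i : ℝ))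

/-- The Newton-type diagram `N_R(Q)`. -/
def NR {d₁ k d : ℕ} (c : Fin d₁ → Fin k → Fin d → ℝ) :
    Set ((Fin d₁ → ℝ) × (Fin k → ℝ) × (Fin d → ℝ)) :=
  { x | ∀ (u : Fin d₁ → E d₁) (v : Fin k → E k) (w : Fin d → E d),
      Orthonormal ℝ u → Orthonormal ℝ v → Orthonormal ℝ w →
      x ∈ convexHull ℝ (toPoint '' { p | InN0 c u v w p }) }


/-- The quantity `𝒬_Q[u,v,w]`. -/
def calQ {d₁ k d : ℕ} (c : Fin d₁ → Fin k → Fin d → ℝ)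
    (u : Fin d₁ → E d₁) (v : Fin k → E k) (w : Fin d → E d) : ℝ :=
  Real.sqrt (1 + ∑ s ∈ Finset.Icc 1 (min d k),
    ∑ I : Fin s → Fin d₁, ∑ I' : Fin s → Fin k, ∑ I'' : Fin s → Fin d,
      (iterDir s (fun j => u (I j))
        (fun t => Qdet c s t (fun j => v (I' j)) (fun j => w (I'' j))) 0) ^ 2)

/-- Determinant of the matrix whose columns are `u 0, …, u (m-1)`. -/
def detb {m : ℕ} (u : Fin m → E m) : ℝ :=
  Matrix.det (Matrix.of fun i j : Fin m => u j i)


/-! ### Linearity of the trilinear form -/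

lemma triEval_u {d₁ k d : ℕ} (c : Fin d₁ → Fin k → Fin d → ℝ) (v : E k) (w : E d) :
    IsLinearMap ℝ (fun u : E d₁ => triEval c u v w) := by
  constructor
  · intro x y
    simp only [triEval, PiLp.add_apply, add_mul, Finset.sum_add_distrib]
  · intro r x
    simp only [triEval, PiLp.smul_apply, smul_eq_mul, Finset.mul_sum, mul_assoc]

lemma triEval_v {d₁ k d : ℕ} (c : Fin d₁ → Fin k → Fin d → ℝ) (u : E d₁) (w : E d) :
    IsLinearMap ℝ (fun v : E k => triEval c u v w) := by
  constructor
  · intro x y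
    simp only [triEval, PiLp.add_apply, add_mul, mul_add, Finset.sum_add_distrib]
  · intro r x
    simp only [triEval, PiLp.smul_apply, smul_eq_mul, Finset.mul_sum]
    refine Finset.sum_congr rfl fun i _ => Finset.sum_congr rfl fun j _ =>
      Finset.sum_congr rfl fun l _ => ?_
    ring

lemma triEval_w {d₁ k d : ℕ} (c : Fin d₁ → Fin k → Fin d → ℝ) (u : E d₁) (v : E k) :
    IsLinearMap ℝ (fun w : E d => triEval c u v w) := by
  constructor
  · intro x y
    simp only [triEval, PiLp.add_apply, add_mul, mul_add, Finset.sum_add_distrib]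
  · intro r x
    simp only [triEval, PiLp.smul_apply, smul_eq_mul, Finset.mul_sum]
    refine Finset.sum_congr rfl fun i _ => Finset.sum_congr rfl fun j _ =>
      Finset.sum_congr rfl fun l _ => ?_
    ring

/-- The polarized determinant form. -/
def Fp {d₁ k d : ℕ} (c : Fin d₁ → Fin k → Fin d → ℝ) (s : ℕ)
    (a : Fin s → E d₁) (v : Fin s → E k) (w : Fin s → E d) : ℝ :=
  ∑ τ : Equiv.Perm (Fin s), Matrix.det (Matrix.of fun i j => triEval c (a (τ i)) (v i) (w j))

/-- determinant as a multilinear map in the `t` variables. -/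
def MA {d₁ k d : ℕ} (c : Fin d₁ → Fin k → Fin d → ℝ) (s : ℕ)
    (v : Fin s → E k) (w : Fin s → E d) : MultilinearMap ℝ (fun _ : Fin s => E d₁) ℝ :=
  (Matrix.detRowAlternating (n := Fin s) (R := ℝ)).toMultilinearMap.compLinearMap
    (fun i => LinearMap.pi fun j => (triEval_u c (v i) (w j)).mk')

lemma MA_apply {d₁ k d : ℕ} (c : Fin d₁ → Fin k → Fin d → ℝ) (s : ℕ)
    (v : Fin s → E k) (w : Fin s → E d) (a : Fin s → E d₁) :
    MA c s v w a = Matrix.det (Matrix.of fun i j => triEval c (a i) (v i) (w j)) := rfl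

lemma continuous_triEval {d₁ k d : ℕ} :
    Continuous (fun p : (Fin d₁ → Fin k → Fin d → ℝ) × E d₁ × E k × E d =>
      triEval p.1 p.2.1 p.2.2.1 p.2.2.2) := by
  unfold triEval
  fun_prop

lemma continuous_Fp {d₁ k d : ℕ} (s : ℕ) :
    Continuous (fun p : (Fin d₁ → Fin k → Fin d → ℝ) × (Fin s → E d₁) × (Fin s → E k) ×
      (Fin s → E d) => Fp p.1 s p.2.1 p.2.2.1 p.2.2.2) := by
  unfold Fp
  refine continuous_finsetSum _ fun τ _ => Continuous.matrix_det ?_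
  refine continuous_matrix fun i j => ?_
  exact continuous_triEval.comp (f := fun p : (Fin d₁ → Fin k → Fin d → ℝ) × (Fin s → E d₁) ×
    (Fin s → E k) × (Fin s → E d) => (p.1, p.2.1 (τ i), p.2.2.1 i, p.2.2.2 j)) (by fun_prop)

lemma iterDir_eq_iteratedFDeriv {d₁ : ℕ} (g : E d₁ → ℝ) (hg : ContDiff ℝ (⊤ : ℕ∞) g) (s : ℕ) :
    ∀ (a : Fin s → E d₁) (t : E d₁), iterDir s a g t = iteratedFDeriv ℝ s g t a := by
  induction s with
  | zero => intro a t; simp [iterDir]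
  | succ s ih =>
    intro a t
    rw [iteratedFDeriv_succ_apply_left]
    simp only [iterDir]
    have : iterDir s (fun i => a i.succ) g
        = fun t => iteratedFDeriv ℝ s g t (fun i => a i.succ) := by
      funext t; exact ih _ t
    rw [this, fderiv_continuousMultilinear_apply_const_apply]
    · rfl
    · exact (hg.differentiable_iteratedFDeriv (by exact_mod_cast ENat.natCast_lt_top s)) t

lemma iterDir_Qdet {d₁ k d : ℕ} (c : Fin d₁ → Fin k → Fin d → ℝ) (s : ℕ)
    (a : Fin s → E d₁) (v : Fin s → E k) (w : Fin s → E d) (t : E d₁) :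
    iterDir s a (fun t => Qdet c s t v w) t = Fp c s a v w := by
  let A : ContinuousMultilinearMap ℝ (fun _ : Fin s => E d₁) ℝ :=
    { MA c s v w with
      cont := by
        change Continuous fun a : Fin s → E d₁ =>
          Matrix.det (Matrix.of fun i j => triEval c (a i) (v i) (w j))
        refine Continuous.matrix_det (continuous_matrix fun i j => ?_)
        exact continuous_triEval.comp (f := fun a : Fin s → E d₁ => (c, a i, v i, w j))
          (by fun_prop) }
  have h : (fun t => Qdet c s t v w) = fun t => A (fun _ => t) := rfl
  have hc : ContDiff ℝ (⊤ : ℕ∞) (fun t => A (fun _ => t)) :=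
    A.contDiff.comp (contDiff_pi.2 fun _ => contDiff_id)
  rw [h, iterDir_eq_iteratedFDeriv _ hc, ContinuousMultilinearMap.iteratedFDeriv_comp_diagonal]
  rfl

def FA {d₁ k d : ℕ} (c : Fin d₁ → Fin k → Fin d → ℝ) (s : ℕ)
    (v : Fin s → E k) (w : Fin s → E d) : MultilinearMap ℝ (fun _ : Fin s => E d₁) ℝ :=
  ∑ τ : Equiv.Perm (Fin s), (MA c s v w).domDomCongr τ.symm

def FV {d₁ k d : ℕ} (c : Fin d₁ → Fin k → Fin d → ℝ) (s : ℕ)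
    (a : Fin s → E d₁) (w : Fin s → E d) : MultilinearMap ℝ (fun _ : Fin s => E k) ℝ :=
  ∑ τ : Equiv.Perm (Fin s),
    (Matrix.detRowAlternating (n := Fin s) (R := ℝ)).toMultilinearMap.compLinearMap
    (fun i => LinearMap.pi fun j => (triEval_v c (a (τ i)) (w j)).mk')

def FW {d₁ k d : ℕ} (c : Fin d₁ → Fin k → Fin d → ℝ) (s : ℕ)
    (a : Fin s → E d₁) (v : Fin s → E k) : MultilinearMap ℝ (fun _ : Fin s => E d) ℝ :=
  ∑ τ : Equiv.Perm (Fin s),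
    (Matrix.detRowAlternating (n := Fin s) (R := ℝ)).toMultilinearMap.compLinearMap
    (fun j => LinearMap.pi fun i => (triEval_w c (a (τ i)) (v i)).mk')

lemma FA_apply {d₁ k d : ℕ} (c : Fin d₁ → Fin k → Fin d → ℝ) (s : ℕ)
    (a : Fin s → E d₁) (v : Fin s → E k) (w : Fin s → E d) :
    FA c s v w a = Fp c s a v w := by
  unfold FA Fp
  rw [_root_.sum_apply]
  refine Fintype.sum_equiv (Equiv.inv _) _ _ fun τ => ?_
  rfl

lemma FV_apply {d₁ k d : ℕ} (c : Fin d₁ → Fin k → Fin d → ℝ) (s : ℕ)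
    (a : Fin s → E d₁) (v : Fin s → E k) (w : Fin s → E d) :
    FV c s a w v = Fp c s a v w := by
  unfold FV Fp
  rw [_root_.sum_apply]
  rfl

lemma FW_apply {d₁ k d : ℕ} (c : Fin d₁ → Fin k → Fin d → ℝ) (s : ℕ)
    (a : Fin s → E d₁) (v : Fin s → E k) (w : Fin s → E d) :
    FW c s a v w = Fp c s a v w := by
  unfold FW Fp
  rw [_root_.sum_apply]
  refine Finset.sum_congr rfl fun τ _ => ?_
  rw [← Matrix.det_transpose]
  rfl

/-! ### Scaling and linear change of frames -/

lemma prod_exp_counts {m s : ℕ} {β : Fin m → ℕ} {I : Fin s → Fin m} (h : Counts β I)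
    (a : Fin m → ℝ) : ∏ j, Real.exp (a (I j)) = Real.exp (∑ l, (β l : ℝ) * a l) := by
  rw [← Real.exp_sum]
  congr 1
  rw [← Finset.sum_fiberwise (s := Finset.univ) (g := I)]
  refine Finset.sum_congr rfl fun l _ => ?_
  rw [← h l, Finset.sum_congr rfl (g := fun _ => a l), Finset.sum_const, nsmul_eq_mul]
  intro j hj
  rw [(Finset.mem_filter.1 hj).2]

/-- The linear functional with coefficients `a, b, g`. -/
def ell {d₁ k d : ℕ} (a : Fin d₁ → ℝ) (b : Fin k → ℝ) (g : Fin d → ℝ)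
    (x : (Fin d₁ → ℝ) × (Fin k → ℝ) × (Fin d → ℝ)) : ℝ :=
  ∑ l, x.1 l * a l + ∑ l, x.2.1 l * b l + ∑ l, x.2.2 l * g l

lemma Fp_scale {d₁ k d : ℕ} (c : Fin d₁ → Fin k → Fin d → ℝ) (s : ℕ)
    (u : Fin d₁ → E d₁) (v : Fin k → E k) (w : Fin d → E d)
    (a : Fin d₁ → ℝ) (b : Fin k → ℝ) (g : Fin d → ℝ)
    (p : (Fin d₁ → ℕ) × (Fin k → ℕ) × (Fin d → ℕ))
    (I : Fin s → Fin d₁) (I' : Fin s → Fin k) (I'' : Fin s → Fin d)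
    (h : Counts p.1 I) (h' : Counts p.2.1 I') (h'' : Counts p.2.2 I'') :
    Fp c s (fun j => Real.exp (a (I j)) • u (I j)) (fun j => Real.exp (b (I' j)) • v (I' j))
      (fun j => Real.exp (g (I'' j)) • w (I'' j)) =
    Real.exp (ell a b g (toPoint p)) *
      Fp c s (fun j => u (I j)) (fun j => v (I' j)) (fun j => w (I'' j)) := by
  rw [← FA_apply, MultilinearMap.map_smul_univ, FA_apply, ← FV_apply,
    MultilinearMap.map_smul_univ, FV_apply, ← FW_apply, MultilinearMap.map_smul_univ, FW_apply,
    prod_exp_counts h, prod_exp_counts h', prod_exp_counts h'']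
  simp only [ell, toPoint, Real.exp_add, smul_eq_mul]
  ring

lemma multilinear_bound {n s : ℕ} {V : Type*} [AddCommGroup V] [Module ℝ V]
    (f : MultilinearMap ℝ (fun _ : Fin s => V) ℝ) (u u' : Fin n → V) (O : Fin n → Fin n → ℝ)
    (hO : ∀ i j, |O i j| ≤ 1) (hu : ∀ i, u' i = ∑ j, O i j • u j) (B : ℝ)
    (hB : ∀ J : Fin s → Fin n, |f (fun j => u (J j))| ≤ B) (I : Fin s → Fin n) :
    |f (fun j => u' (I j))| ≤ (n : ℝ) ^ s * B := by
  simp only [hu]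
  rw [MultilinearMap.map_sum]
  refine (Finset.abs_sum_le_sum_abs _ _).trans ?_
  have : ∀ J ∈ (Finset.univ : Finset (Fin s → Fin n)),
      |f (fun i => O (I i) (J i) • u (J i))| ≤ B := by
    intro J _
    rw [MultilinearMap.map_smul_univ, smul_eq_mul, abs_mul, Finset.abs_prod]
    have h1 : ∏ i, |O (I i) (J i)| ≤ 1 :=
      Finset.prod_le_one (fun _ _ => abs_nonneg _) fun _ _ => hO _ _
    calc _ ≤ 1 * |f (fun j => u (J j))| := mul_le_mul_of_nonneg_right h1 (abs_nonneg _)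
      _ ≤ B := by rw [one_mul]; exact hB J
  refine (Finset.sum_le_card_nsmul _ _ _ this).trans ?_
  simp

/-! ### Determinants and the singular value decomposition -/

/-- matrix with columns `u`. -/
def colM {m : ℕ} (u : Fin m → E m) : Matrix (Fin m) (Fin m) ℝ := Matrix.of fun i j => u j i

lemma colM_gram {m : ℕ} (u : Fin m → E m) (i j : Fin m) :
    ((colM u).transpose * colM u) i j = inner ℝ (u i) (u j) := by
  simp [colM, Matrix.mul_apply, PiLp.inner_apply, mul_comm]

lemma detb_scale {m : ℕ} (r : Fin m → ℝ) (u : Fin m → E m) :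
    detb (fun i => r i • u i) = (∏ i, r i) * detb u := by
  unfold detb
  rw [← Matrix.det_mul_row]
  rfl

lemma abs_detb_orthonormal {m : ℕ} (u : Fin m → E m) (hu : Orthonormal ℝ u) :
    |detb u| = 1 := by
  have h : (colM u).transpose * colM u = 1 := by
    ext i j
    rw [colM_gram, orthonormal_iff_ite.1 hu i j, Matrix.one_apply]
  have h2 := congrArg Matrix.det h
  rw [Matrix.det_mul, Matrix.det_transpose, Matrix.det_one] at h2
  have h3 : |(colM u).det| * |(colM u).det| = 1 := by rw [← abs_mul, h2, abs_one]
  have h4 : |detb u| = |(colM u).det| := rfl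
  rw [h4]
  nlinarith [abs_nonneg (colM u).det]

lemma detb_ne_zero {m : ℕ} (u : Fin m → E m) (hu : LinearIndependent ℝ u) : detb u ≠ 0 := by
  intro h
  obtain ⟨x, hx, hx0⟩ := Matrix.exists_mulVec_eq_zero_iff.2 h
  apply hx
  have := Fintype.linearIndependent_iff.1 hu x (by
    ext i
    have := congrFun hx0 i
    simp only [Matrix.mulVec, dotProduct, Matrix.of_apply, Pi.zero_apply] at this
    simp only [WithLp.ofLp_sum, WithLp.ofLp_smul, Finset.sum_apply, Pi.smul_apply, smul_eq_mul]
    simpa [mul_comm] using this)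
  funext i
  exact this i

lemma svd {m : ℕ} (u : Fin m → E m) (hu : LinearIndependent ℝ u) :
    ∃ (O : Fin m → Fin m → ℝ) (a : Fin m → ℝ) (e : Fin m → E m), Orthonormal ℝ e ∧
      (∀ i j, |O i j| ≤ 1) ∧ (∀ i, Real.exp (a i) • e i = ∑ j, O i j • u j) ∧
      |detb u| = Real.exp (∑ i, a i) := by
  have hG : ((colM u).transpose * colM u).IsHermitian := by
    have := Matrix.isHermitian_conjTranspose_mul_self (colM u)
    rwa [Matrix.conjTranspose_eq_transpose_of_trivial] at this
  let V : Matrix (Fin m) (Fin m) ℝ := hG.eigenvectorUnitary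
  have hV : V ∈ Matrix.unitaryGroup (Fin m) ℝ := hG.eigenvectorUnitary.2
  have hVV : V.transpose * V = 1 := by
    have := (Matrix.mem_unitaryGroup_iff'.1 hV)
    rwa [Matrix.star_eq_conjTranspose, Matrix.conjTranspose_eq_transpose_of_trivial] at this
  have hspec := hG.conjStarAlgAut_star_eigenvectorUnitary
  rw [Unitary.conjStarAlgAut_star_apply] at hspec
  change star V * _ * V = _ at hspec
  rw [Matrix.star_eq_conjTranspose, Matrix.conjTranspose_eq_transpose_of_trivial] at hspec
  let n : Fin m → E m := fun i => ∑ j, V j i • u j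
  have hn : colM n = colM u * V := by
    ext i j
    simp [colM, n, Matrix.mul_apply, mul_comm]
  have hgram : (colM n).transpose * colM n
      = Matrix.diagonal (RCLike.ofReal ∘ hG.eigenvalues) := by
    rw [hn, Matrix.transpose_mul, ← hspec]
    simp only [Matrix.mul_assoc]
  have hdetV : |V.det| = 1 := by
    have h2 := congrArg Matrix.det hVV
    rw [Matrix.det_mul, Matrix.det_transpose, Matrix.det_one] at h2
    have h3 : |V.det| * |V.det| = 1 := by rw [← abs_mul, h2, abs_one]
    nlinarith [abs_nonneg V.det]
  have hdet : |detb n| = |detb u| := by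
    change |(colM n).det| = |(colM u).det|
    rw [hn, Matrix.det_mul, abs_mul, hdetV, mul_one]
  have hn0 : ∀ i, n i ≠ 0 := by
    intro i hi
    have h0 : detb n = 0 := by
      apply Matrix.det_eq_zero_of_column_eq_zero i
      intro j
      simp [hi]
    rw [h0, abs_zero] at hdet
    exact detb_ne_zero u hu (abs_eq_zero.1 hdet.symm)
  have hexp : ∀ i, Real.exp (Real.log ‖n i‖) = ‖n i‖ := fun i =>
    Real.exp_log (norm_pos_iff.2 (hn0 i))
  have he : Orthonormal ℝ (fun i => ‖n i‖⁻¹ • n i) := by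
    constructor
    · intro i
      rw [norm_smul, norm_inv, norm_norm, inv_mul_cancel₀ (norm_ne_zero_iff.2 (hn0 i))]
    · intro i j hij
      change inner ℝ (‖n i‖⁻¹ • n i) (‖n j‖⁻¹ • n j) = 0
      rw [inner_smul_left, inner_smul_right, ← colM_gram, hgram, Matrix.diagonal_apply_ne _ hij]
      simp
  have hne : ∀ i, Real.exp (Real.log ‖n i‖) • (‖n i‖⁻¹ • n i) = n i := by
    intro i
    rw [hexp, smul_smul, mul_inv_cancel₀ (norm_ne_zero_iff.2 (hn0 i)), one_smul]
  refine ⟨fun i j => V j i, fun i => Real.log ‖n i‖, fun i => ‖n i‖⁻¹ • n i, he, ?_, ?_, ?_⟩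
  · intro i j
    exact entry_norm_bound_of_unitary hV j i
  · exact hne
  · have h1 : detb n = detb (fun i => Real.exp (Real.log ‖n i‖) • (‖n i‖⁻¹ • n i)) := by
      congr 1
      funext i
      exact (hne i).symm
    rw [← hdet, h1, detb_scale, abs_mul, abs_detb_orthonormal _ he, mul_one, Real.exp_sum,
      Finset.abs_prod]
    exact Finset.prod_congr rfl fun i _ => abs_of_pos (Real.exp_pos _)

lemma isCompact_orthonormal (m : ℕ) : IsCompact {e : Fin m → E m | Orthonormal ℝ e} := by
  refine Metric.isCompact_of_isClosed_isBounded ?_ ?_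
  · simp only [orthonormal_iff_ite, Set.setOf_forall]
    refine isClosed_iInter fun i => isClosed_iInter fun j => ?_
    exact isClosed_eq (by fun_prop) continuous_const
  · refine (Metric.isBounded_closedBall (x := (0 : Fin m → E m)) (r := 1)).subset ?_
    intro e he
    rw [mem_closedBall_zero_iff, pi_norm_le_iff_of_nonneg zero_le_one]
    intro i
    exact (he.1 i).le

/-! ### The quantity `calQ` -/

lemma calQ_eq {d₁ k d : ℕ} (c : Fin d₁ → Fin k → Fin d → ℝ)
    (u : Fin d₁ → E d₁) (v : Fin k → E k) (w : Fin d → E d) :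
    calQ c u v w = Real.sqrt (1 + ∑ s ∈ Finset.Icc 1 (min d k),
    ∑ I : Fin s → Fin d₁, ∑ I' : Fin s → Fin k, ∑ I'' : Fin s → Fin d,
      (Fp c s (fun j => u (I j)) (fun j => v (I' j)) (fun j => w (I'' j))) ^ 2) := by
  simp only [calQ, iterDir_Qdet]

lemma one_le_calQ {d₁ k d : ℕ} (c : Fin d₁ → Fin k → Fin d → ℝ)
    (u : Fin d₁ → E d₁) (v : Fin k → E k) (w : Fin d → E d) : 1 ≤ calQ c u v w := by
  rw [calQ_eq, Real.one_le_sqrt, le_add_iff_nonneg_right]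
  positivity

lemma abs_Fp_le_calQ {d₁ k d : ℕ} (c : Fin d₁ → Fin k → Fin d → ℝ)
    (u : Fin d₁ → E d₁) (v : Fin k → E k) (w : Fin d → E d) (s : ℕ)
    (hs : s ∈ Finset.Icc 1 (min d k))
    (I : Fin s → Fin d₁) (I' : Fin s → Fin k) (I'' : Fin s → Fin d) :
    |Fp c s (fun j => u (I j)) (fun j => v (I' j)) (fun j => w (I'' j))| ≤ calQ c u v w := by
  rw [calQ_eq]
  apply Real.abs_le_sqrt
  have h1 := Finset.single_le_sum (s := Finset.Icc 1 (min d k)) (f := fun s =>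
    ∑ I : Fin s → Fin d₁, ∑ I' : Fin s → Fin k, ∑ I'' : Fin s → Fin d,
      (Fp c s (fun j => u (I j)) (fun j => v (I' j)) (fun j => w (I'' j))) ^ 2)
      (fun _ _ => by positivity) hs
  have h2 := Finset.single_le_sum (s := Finset.univ) (f := fun I : Fin s → Fin d₁ =>
    ∑ I' : Fin s → Fin k, ∑ I'' : Fin s → Fin d,
      (Fp c s (fun j => u (I j)) (fun j => v (I' j)) (fun j => w (I'' j))) ^ 2)
      (fun _ _ => by positivity) (Finset.mem_univ I)
  have h3 := Finset.single_le_sum (s := Finset.univ) (f := fun I' : Fin s → Fin k =>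
    ∑ I'' : Fin s → Fin d,
      (Fp c s (fun j => u (I j)) (fun j => v (I' j)) (fun j => w (I'' j))) ^ 2)
      (fun _ _ => by positivity) (Finset.mem_univ I')
  have h4 := Finset.single_le_sum (s := Finset.univ) (f := fun I'' : Fin s → Fin d =>
      (Fp c s (fun j => u (I j)) (fun j => v (I' j)) (fun j => w (I'' j))) ^ 2)
      (fun _ _ => by positivity) (Finset.mem_univ I'')
  linarith

lemma Fp_change_bound {d₁ k d : ℕ} (c : Fin d₁ → Fin k → Fin d → ℝ)
    (u u' : Fin d₁ → E d₁) (v v' : Fin k → E k) (w w' : Fin d → E d)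
    (O₁ : Fin d₁ → Fin d₁ → ℝ) (O₂ : Fin k → Fin k → ℝ) (O₃ : Fin d → Fin d → ℝ)
    (h1 : ∀ i j, |O₁ i j| ≤ 1) (h2 : ∀ i j, |O₂ i j| ≤ 1) (h3 : ∀ i j, |O₃ i j| ≤ 1)
    (hu : ∀ i, u' i = ∑ j, O₁ i j • u j) (hv : ∀ i, v' i = ∑ j, O₂ i j • v j)
    (hw : ∀ i, w' i = ∑ j, O₃ i j • w j) (s : ℕ) (B : ℝ)
    (hB : ∀ (I : Fin s → Fin d₁) (I' : Fin s → Fin k) (I'' : Fin s → Fin d),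
      |Fp c s (fun j => u (I j)) (fun j => v (I' j)) (fun j => w (I'' j))| ≤ B)
    (I : Fin s → Fin d₁) (I' : Fin s → Fin k) (I'' : Fin s → Fin d) :
    |Fp c s (fun j => u' (I j)) (fun j => v' (I' j)) (fun j => w' (I'' j))|
      ≤ (d : ℝ) ^ s * ((k : ℝ) ^ s * ((d₁ : ℝ) ^ s * B)) := by
  rw [← FW_apply]
  refine multilinear_bound _ w w' O₃ h3 hw _ (fun K'' => ?_) I''
  rw [FW_apply, ← FV_apply]
  refine multilinear_bound _ v v' O₂ h2 hv _ (fun K' => ?_) I'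
  rw [FV_apply, ← FA_apply]
  refine multilinear_bound _ u u' O₁ h1 hu _ (fun K => ?_) I
  rw [FA_apply]
  exact hB K K' K''

/-! ### The local lower bound -/

/-- Lower bound with constant `ε` at the exponent `o`. -/
def Claim {d₁ k d : ℕ} (o : (Fin d₁ → ℝ) × (Fin k → ℝ) × (Fin d → ℝ)) (ε : ℝ)
    (c : Fin d₁ → Fin k → Fin d → ℝ)
    (e : (Fin d₁ → E d₁) × (Fin k → E k) × (Fin d → E d)) : Prop :=
  ∀ (a : Fin d₁ → ℝ) (b : Fin k → ℝ) (g : Fin d → ℝ) (B : ℝ), 1 ≤ B →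
    (∀ s ∈ Finset.Icc 1 (min d k), ∀ (I : Fin s → Fin d₁) (I' : Fin s → Fin k)
      (I'' : Fin s → Fin d),
      |Fp c s (fun j => Real.exp (a (I j)) • e.1 (I j)) (fun j => Real.exp (b (I' j)) • e.2.1 (I' j))
      (fun j => Real.exp (g (I'' j)) • e.2.2 (I'' j))| ≤ B) →
    ε * Real.exp (ell a b g o) ≤ B

lemma Claim.mono {d₁ k d : ℕ} {o : (Fin d₁ → ℝ) × (Fin k → ℝ) × (Fin d → ℝ)} {ε ε' : ℝ}
    {c : Fin d₁ → Fin k → Fin d → ℝ}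
    {e : (Fin d₁ → E d₁) × (Fin k → E k) × (Fin d → E d)} (h : Claim o ε c e) (hε : ε' ≤ ε) :
    Claim o ε' c e := fun a b g B h1 h2 =>
  (mul_le_mul_of_nonneg_right hε (Real.exp_pos _).le).trans (h a b g B h1 h2)

lemma claim_point {d₁ k d : ℕ} (c : Fin d₁ → Fin k → Fin d → ℝ)
    (e : (Fin d₁ → E d₁) × (Fin k → E k) × (Fin d → E d))
    (p : (Fin d₁ → ℕ) × (Fin k → ℕ) × (Fin d → ℕ)) (hp : InN0 c e.1 e.2.1 e.2.2 p) :
    ∃ ε > 0, ∀ᶠ q in nhds (c, e), Claim (toPoint p) ε q.1 q.2 := by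
  rcases hp with ⟨h1, h2, h3⟩ | ⟨s, hs1, hs2, I, I', I'', hI, hI', hI'', hF⟩
  · refine ⟨1, one_pos, Filter.Eventually.of_forall fun q a b g B hB _ => ?_⟩
    simpa [ell, toPoint, h1, h2, h3] using hB
  · rw [iterDir_Qdet] at hF
    have hpos := abs_pos.2 hF
    have hcont : Continuous (fun q : (Fin d₁ → Fin k → Fin d → ℝ) ×
        ((Fin d₁ → E d₁) × (Fin k → E k) × (Fin d → E d)) =>
        |Fp q.1 s (fun j => q.2.1 (I j)) (fun j => q.2.2.1 (I' j)) (fun j => q.2.2.2 (I'' j))|) := by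
      refine continuous_abs.comp ((continuous_Fp s).comp
        (f := fun q : (Fin d₁ → Fin k → Fin d → ℝ) ×
        ((Fin d₁ → E d₁) × (Fin k → E k) × (Fin d → E d)) => (q.1, (fun j => q.2.1 (I j)),
          (fun j => q.2.2.1 (I' j)), (fun j => q.2.2.2 (I'' j)))) ?_)
      fun_prop
    refine ⟨_, half_pos hpos, ?_⟩
    filter_upwards [hcont.continuousAt.eventually_const_lt (half_lt_self hpos)] with q hq
    intro a b g B hB h
    have h2 := h s (Finset.mem_Icc.2 ⟨hs1, hs2⟩) I I' I''
    rw [Fp_scale q.1 s _ _ _ a b g p I I' I'' hI hI' hI'', abs_mul,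
      abs_of_pos (Real.exp_pos _), mul_comm] at h2
    exact (mul_le_mul_of_nonneg_right hq.le (Real.exp_pos _).le).trans h2

lemma ell_sum {d₁ k d : ℕ} {ι : Type*} [Fintype ι] (a : Fin d₁ → ℝ) (b : Fin k → ℝ)
    (g : Fin d → ℝ) (θ : ι → ℝ) (z : ι → (Fin d₁ → ℝ) × (Fin k → ℝ) × (Fin d → ℝ)) :
    ell a b g (∑ i, θ i • z i) = ∑ i, θ i * ell a b g (z i) := by
  have h : IsLinearMap ℝ (ell a b g) := by
    constructor
    · intro x y
      simp only [ell, Prod.fst_add, Prod.snd_add, Pi.add_apply, add_mul, Finset.sum_add_distrib]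
      ring
    · intro r x
      simp only [ell, Prod.smul_fst, Prod.smul_snd, Pi.smul_apply, smul_eq_mul, mul_add,
        Finset.mul_sum, mul_assoc]
  have := map_sum h.mk' (fun i => θ i • z i) Finset.univ
  simp only [map_smul, smul_eq_mul] at this
  exact this

lemma claim_hull {d₁ k d : ℕ} (c : Fin d₁ → Fin k → Fin d → ℝ)
    (e : (Fin d₁ → E d₁) × (Fin k → E k) × (Fin d → E d))
    (o : (Fin d₁ → ℝ) × (Fin k → ℝ) × (Fin d → ℝ))
    (ho : o ∈ convexHull ℝ (toPoint '' { p | InN0 c e.1 e.2.1 e.2.2 p })) :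
    ∃ ε > 0, ∀ᶠ q in nhds (c, e), Claim o ε q.1 q.2 := by
  obtain ⟨ι, _, θ, z, hθ, hθ1, hz, rfl⟩ := mem_convexHull_iff_exists_fintype.1 ho
  have key : ∀ i, ∃ ε > 0, ∀ᶠ q in nhds (c, e), Claim (z i) ε q.1 q.2 := by
    intro i
    obtain ⟨p, hp, hpz⟩ := hz i
    rw [← hpz]
    exact claim_point c e p hp
  choose ε hε hev using key
  have hR : 0 ≤ ∑ i, θ i * (ε i)⁻¹ :=
    Finset.sum_nonneg fun i _ => mul_nonneg (hθ i) (inv_pos.2 (hε i)).le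
  refine ⟨(1 + ∑ i, θ i * (ε i)⁻¹)⁻¹, by positivity, ?_⟩
  filter_upwards [Filter.eventually_all.2 hev] with q hq
  intro a b g B hB h
  have h1 : Real.exp (ell a b g (∑ i, θ i • z i)) ≤ ∑ i, θ i * Real.exp (ell a b g (z i)) := by
    rw [ell_sum]
    exact convexOn_exp.map_sum_le (fun i _ => hθ i) hθ1 (fun i _ => Set.mem_univ _)
  have h2 : ∑ i, θ i * Real.exp (ell a b g (z i)) ≤ ∑ i, θ i * ((ε i)⁻¹ * B) := by
    refine Finset.sum_le_sum fun i _ => mul_le_mul_of_nonneg_left ?_ (hθ i)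
    rw [le_inv_mul_iff₀ (hε i)]
    exact hq i a b g B hB h
  have h3 : ∑ i, θ i * ((ε i)⁻¹ * B) = (∑ i, θ i * (ε i)⁻¹) * B := by
    rw [Finset.sum_mul]
    exact Finset.sum_congr rfl fun i _ => by ring
  rw [inv_mul_le_iff₀ (by positivity)]
  linarith

lemma claim_uniform {d₁ k d : ℕ} (c : Fin d₁ → Fin k → Fin d → ℝ)
    (o : (Fin d₁ → ℝ) × (Fin k → ℝ) × (Fin d → ℝ)) (ho : o ∈ NR c) :
    ∃ ε > 0, ∀ᶠ c' in nhds c, ∀ e ∈ {e : Fin d₁ → E d₁ | Orthonormal ℝ e} ×ˢ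
      ({e : Fin k → E k | Orthonormal ℝ e} ×ˢ {e : Fin d → E d | Orthonormal ℝ e}),
      Claim o ε c' e := by
  have hK := (isCompact_orthonormal d₁).prod ((isCompact_orthonormal k).prod
    (isCompact_orthonormal d))
  refine hK.induction_on (p := fun S => ∃ ε > 0, ∀ᶠ c' in nhds c, ∀ e ∈ S, Claim o ε c' e)
    ?_ ?_ ?_ ?_
  · exact ⟨1, one_pos, Filter.Eventually.of_forall fun _ e he => he.elim⟩
  · rintro S T hST ⟨ε, hε, h⟩
    exact ⟨ε, hε, h.mono fun c' h e he => h e (hST he)⟩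
  · rintro S T ⟨ε, hε, h⟩ ⟨ε', hε', h'⟩
    refine ⟨min ε ε', lt_min hε hε', ?_⟩
    filter_upwards [h, h'] with c' h h' e he
    rcases he with he | he
    · exact (h e he).mono (min_le_left _ _)
    · exact (h' e he).mono (min_le_right _ _)
  · rintro e ⟨h1, h2, h3⟩
    obtain ⟨ε, hε, h⟩ := claim_hull c e o (ho e.1 e.2.1 e.2.2 h1 h2 h3)
    rw [nhds_prod_eq] at h
    obtain ⟨P, hP, R, hR, hPR⟩ := Filter.eventually_prod_iff.1 h
    exact ⟨{x | R x}, mem_nhdsWithin_of_mem_nhds hR, ε, hε,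
      hP.mono fun c' hc' e he => hPR hc' he⟩

lemma ell_const {d₁ k d : ℕ} (a : Fin d₁ → ℝ) (b : Fin k → ℝ) (g : Fin d → ℝ) (x y z : ℝ) :
    Real.exp (ell a b g ((fun _ => x), (fun _ => y), fun _ => z)) =
      Real.exp (∑ i, a i) ^ x * Real.exp (∑ i, b i) ^ y * Real.exp (∑ i, g i) ^ z := by
  rw [← Real.exp_mul, ← Real.exp_mul, ← Real.exp_mul, ← Real.exp_add, ← Real.exp_add]
  congr 1
  simp only [ell, ← Finset.mul_sum]
  ring

lemma finite_N0 {d₁ k d : ℕ} (c : Fin d₁ → Fin k → Fin d → ℝ)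
    (u : Fin d₁ → E d₁) (v : Fin k → E k) (w : Fin d → E d) :
    {p | InN0 c u v w p}.Finite := by
  refine ((Set.finite_Icc (0 : Fin d₁ → ℕ) (fun _ => min d k)).prod
    ((Set.finite_Icc (0 : Fin k → ℕ) (fun _ => min d k)).prod
      (Set.finite_Icc (0 : Fin d → ℕ) (fun _ => min d k)))).subset ?_
  rintro ⟨p, q, r⟩ hp
  suffices h : p ≤ (fun _ => min d k) ∧ q ≤ (fun _ => min d k) ∧ r ≤ (fun _ => min d k) from
    ⟨⟨fun _ => Nat.zero_le _, h.1⟩, ⟨fun _ => Nat.zero_le _, h.2.1⟩,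
      ⟨fun _ => Nat.zero_le _, h.2.2⟩⟩
  rcases hp with ⟨h1, h2, h3⟩ | ⟨s, hs1, hs2, I, I', I'', hI, hI', hI'', hF⟩
  · simp only at h1 h2 h3
    subst h1 h2 h3
    exact ⟨fun _ => Nat.zero_le _, fun _ => Nat.zero_le _, fun _ => Nat.zero_le _⟩
  · have aux : ∀ {m : ℕ} {β : Fin m → ℕ} {I : Fin s → Fin m}, Counts β I →
        β ≤ fun _ => min d k := by
      intro m β I h l
      rw [← h l]
      exact ((Finset.card_le_univ _).trans (by simp)).trans hs2
    exact ⟨aux hI, aux hI', aux hI''⟩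

lemma dual_eq_ell {d₁ k d : ℕ} (f : ((Fin d₁ → ℝ) × (Fin k → ℝ) × (Fin d → ℝ)) →ₗ[ℝ] ℝ) :
    ∃ a b g, ∀ x, f x = ell a b g x := by
  refine ⟨fun i => f (Pi.single i 1, 0, 0), fun i => f (0, Pi.single i 1, 0),
    fun i => f (0, 0, Pi.single i 1), fun x => ?_⟩
  obtain ⟨x, y, z⟩ := x
  have h : ((x, y, z) : (Fin d₁ → ℝ) × (Fin k → ℝ) × (Fin d → ℝ)) =
      LinearMap.inl ℝ _ _ x + LinearMap.inr ℝ _ _ (LinearMap.inl ℝ _ _ y) +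
        LinearMap.inr ℝ _ _ (LinearMap.inr ℝ _ _ z) := by simp
  rw [h, map_add, map_add, ← LinearMap.comp_apply, ← LinearMap.comp_apply f,
    ← LinearMap.comp_apply f, ← LinearMap.comp_apply, ← LinearMap.comp_apply (f ∘ₗ _),
    LinearMap.pi_apply_eq_sum_univ (f ∘ₗ _) x, LinearMap.pi_apply_eq_sum_univ _ y,
    LinearMap.pi_apply_eq_sum_univ _ z]
  have hs : ∀ {m : ℕ} (i : Fin m), (fun j => if i = j then (1 : ℝ) else 0) = Pi.single i 1 := by
    intro m i; funext j; simp [Pi.single_apply, eq_comm]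
  simp [ell, hs]
  rfl

lemma exists_counts {m s : ℕ} (I : Fin s → Fin m) : ∃ β : Fin m → ℕ, Counts β I :=
  ⟨_, fun _ => rfl⟩

/-- Upper bound for `calQ` on rescaled frames. -/
lemma calQ_scale_le {d₁ k d : ℕ} (c : Fin d₁ → Fin k → Fin d → ℝ)
    (u : Fin d₁ → E d₁) (v : Fin k → E k) (w : Fin d → E d)
    (a : Fin d₁ → ℝ) (b : Fin k → ℝ) (g : Fin d → ℝ) (M : ℝ)
    (hM : ∀ p, InN0 c u v w p → ell a b g (toPoint p) ≤ M) :
    calQ c (fun i => Real.exp (a i) • u i) (fun i => Real.exp (b i) • v i)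
      (fun i => Real.exp (g i) • w i) ≤ Real.exp M * calQ c u v w := by
  have hM0 : 0 ≤ M := by
    have := hM 0 (Or.inl ⟨rfl, rfl, rfl⟩)
    simpa [ell, toPoint] using this
  rw [calQ_eq, calQ_eq]
  apply Real.sqrt_le_iff.2
  refine ⟨by positivity, ?_⟩
  rw [mul_pow, Real.sq_sqrt (by positivity), mul_add, mul_one]
  refine add_le_add ?_ ?_
  · exact one_le_pow₀ (Real.one_le_exp hM0)
  · simp only [Finset.mul_sum]
    refine Finset.sum_le_sum fun s hs => Finset.sum_le_sum fun I _ => Finset.sum_le_sum fun I' _ =>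
      Finset.sum_le_sum fun I'' _ => ?_
    rw [Finset.mem_Icc] at hs
    obtain ⟨p, hp⟩ := exists_counts I
    obtain ⟨p', hp'⟩ := exists_counts I'
    obtain ⟨p'', hp''⟩ := exists_counts I''
    rw [Fp_scale c s u v w a b g (p, p', p'') I I' I'' hp hp' hp'', mul_pow]
    by_cases hF : Fp c s (fun j => u (I j)) (fun j => v (I' j)) (fun j => w (I'' j)) = 0
    · rw [hF]; simp
    · refine mul_le_mul_of_nonneg_right ?_ (sq_nonneg _)
      refine pow_le_pow_left₀ (Real.exp_pos _).le (Real.exp_le_exp.2 (hM _ (Or.inr ?_))) 2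
      refine ⟨s, hs.1, hs.2, I, I', I'', hp, hp', hp'', ?_⟩
      rwa [iterDir_Qdet]

lemma ell_smul {d₁ k d : ℕ} (a : Fin d₁ → ℝ) (b : Fin k → ℝ) (g : Fin d → ℝ) (T : ℝ)
    (x : (Fin d₁ → ℝ) × (Fin k → ℝ) × (Fin d → ℝ)) :
    ell (fun i => T * a i) (fun i => T * b i) (fun i => T * g i) x = T * ell a b g x := by
  simp only [ell, mul_add, Finset.mul_sum]
  congr 1
  · congr 1 <;> exact Finset.sum_congr rfl fun i _ => by ring
  · exact Finset.sum_congr rfl fun i _ => by ring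

lemma abs_detb_scale {m : ℕ} (a : Fin m → ℝ) (e : Fin m → E m) (he : Orthonormal ℝ e) :
    |detb (fun i => Real.exp (a i) • e i)| = Real.exp (∑ i, a i) := by
  rw [detb_scale, abs_mul, abs_detb_orthonormal e he, mul_one, ← Real.exp_sum,
    abs_of_pos (Real.exp_pos _)]

lemma linInd_scale {m : ℕ} (a : Fin m → ℝ) (e : Fin m → E m) (he : Orthonormal ℝ e) :
    LinearIndependent ℝ (fun i => Real.exp (a i) • e i) :=
  he.linearIndependent.units_smul (fun i => Units.mk0 (Real.exp (a i)) (Real.exp_ne_zero _))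

theorem statement3
    (d₁ k d : ℕ) (hd₁ : 0 < d₁) (hk : 0 < k) (hd : 0 < d)
    (c : Fin d₁ → Fin k → Fin d → ℝ) (s : ℝ) (hs : 0 ≤ s) :
    (((fun _ => s / (d₁ : ℝ)), (fun _ => s / (k : ℝ)), fun _ => s / (d : ℝ)) ∈ NR c) ↔
    ∃ c₀ : ℝ, 0 < c₀ ∧ ∃ 𝒩 ∈ nhds c, ∀ c' ∈ 𝒩,
      ∀ (u : Fin d₁ → E d₁) (v : Fin k → E k) (w : Fin d → E d),
        LinearIndependent ℝ u → LinearIndependent ℝ v → LinearIndependent ℝ w →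
        c₀ * |detb u| ^ (s / (d₁ : ℝ)) * |detb v| ^ (s / (k : ℝ)) *
            |detb w| ^ (s / (d : ℝ)) ≤ calQ c' u v w := by
  constructor
  · intro ho
    obtain ⟨ε, hε, hev⟩ := claim_uniform c _ ho
    have h1d : (1 : ℝ) ≤ d := by exact_mod_cast hd
    have h1k : (1 : ℝ) ≤ k := by exact_mod_cast hk
    have h1d1 : (1 : ℝ) ≤ d₁ := by exact_mod_cast hd₁
    set n := min d k with hn
    set C : ℝ := (d : ℝ) ^ n * ((k : ℝ) ^ n * (d₁ : ℝ) ^ n) with hC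
    have hC1 : 1 ≤ C := one_le_mul_of_one_le_of_one_le (one_le_pow₀ h1d)
      (one_le_mul_of_one_le_of_one_le (one_le_pow₀ h1k) (one_le_pow₀ h1d1))
    have hC0 : 0 < C := by linarith
    refine ⟨ε / C, by positivity, _, hev, ?_⟩
    intro c' hc' u v w hu hv hw
    obtain ⟨O₁, a, e₁, he₁, hO₁, hae₁, hdet₁⟩ := svd u hu
    obtain ⟨O₂, b, e₂, he₂, hO₂, hae₂, hdet₂⟩ := svd v hv
    obtain ⟨O₃, g, e₃, he₃, hO₃, hae₃, hdet₃⟩ := svd w hw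
    have hq := one_le_calQ c' u v w
    have := hc' (e₁, e₂, e₃) ⟨he₁, he₂, he₃⟩ a b g (C * calQ c' u v w)
      (one_le_mul_of_one_le_of_one_le hC1 hq) (by
        intro s hs I I' I''
        refine (Fp_change_bound c' u (fun i => Real.exp (a i) • e₁ i) v
          (fun i => Real.exp (b i) • e₂ i) w (fun i => Real.exp (g i) • e₃ i)
          O₁ O₂ O₃ hO₁ hO₂ hO₃ hae₁ hae₂ hae₃ s (calQ c' u v w)
          (fun I I' I'' => abs_Fp_le_calQ c' u v w s hs I I' I'') I I' I'').trans ?_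
        have hsn : s ≤ n := (Finset.mem_Icc.1 hs).2
        rw [hC, mul_assoc, mul_assoc]
        have hq0 : 0 ≤ calQ c' u v w := by linarith
        gcongr)
    rw [ell_const, ← hdet₁, ← hdet₂, ← hdet₃] at this
    calc _ = C⁻¹ * (ε * (|detb u| ^ (s / (d₁ : ℝ)) * |detb v| ^ (s / (k : ℝ)) *
            |detb w| ^ (s / (d : ℝ)))) := by ring
      _ ≤ _ := by rwa [inv_mul_le_iff₀ hC0]
  · rintro ⟨c₀, hc₀, 𝒩, h𝒩, H⟩ u v w hu hv hw
    by_contra hcon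
    set o : (Fin d₁ → ℝ) × (Fin k → ℝ) × (Fin d → ℝ) :=
      ((fun _ => s / (d₁ : ℝ)), (fun _ => s / (k : ℝ)), fun _ => s / (d : ℝ)) with ho
    obtain ⟨f, M, hfM, hMo⟩ := geometric_hahn_banach_closed_point (convex_convexHull ℝ _)
      (((finite_N0 c u v w).image toPoint).isClosed_convexHull ℝ) hcon
    obtain ⟨a, b, g, hf⟩ := dual_eq_ell f.toLinearMap
    have hf' : ∀ x, f x = ell a b g x := hf
    have hM : ∀ p, InN0 c u v w p → ell a b g (toPoint p) ≤ M := by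
      intro p hp
      rw [← hf']
      exact (hfM _ (subset_convexHull ℝ _ ⟨p, hp, rfl⟩)).le
    rw [hf'] at hMo
    have key : ∀ T : ℝ, 0 ≤ T → c₀ * Real.exp (T * (ell a b g o - M)) ≤ calQ c u v w := by
      intro T hT
      have h1 := H c (mem_of_mem_nhds h𝒩) _ _ _ (linInd_scale (fun i => T * a i) u hu)
        (linInd_scale (fun i => T * b i) v hv) (linInd_scale (fun i => T * g i) w hw)
      rw [abs_detb_scale _ u hu, abs_detb_scale _ v hv, abs_detb_scale _ w hw, mul_assoc,
        mul_assoc, ← mul_assoc (_ ^ _), ← ell_const, ell_smul] at h1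
      have h2 := calQ_scale_le c u v w (fun i => T * a i) (fun i => T * b i) (fun i => T * g i)
        (T * M) (fun p hp => by
          rw [ell_smul]; exact mul_le_mul_of_nonneg_left (hM p hp) hT)
      have h3 := h1.trans h2
      rw [mul_sub, Real.exp_sub, mul_div_assoc', div_le_iff₀ (Real.exp_pos _), mul_comm (calQ _ _ _ _)]
      exact h3
    have hδ : 0 < ell a b g o - M := by linarith
    have hq := one_le_calQ c u v w
    have hk := key (calQ c u v w / c₀ / (ell a b g o - M)) (by positivity)
    rw [div_mul_cancel₀ _ hδ.ne'] at hk
    have h4 := Real.add_one_le_exp (calQ c u v w / c₀)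
    have h5 := mul_le_mul_of_nonneg_left h4 hc₀.le
    rw [mul_add, mul_div_cancel₀ _ hc₀.ne'] at h5
    linarith

end Statement3
end
end

section
/- Fix a real number s ≥ 0 and let o_s ∈ [0,∞)^{d₁+k+d} be the point whose first d₁ coordinates equal s/d₁, whose next k coordinates equal s/k, and whose last d coordinates equal s/d. Then o_s does NOT belong to N_R(Q) if and only if there exist orthonormal bases u = (u_i) of ℝ^{d₁}, v = (v_i) of ℝ^k, w = (w_i) of ℝ^d and real symmetric matrices D₁ (d₁×d₁), D₂ (k×k), D₃ (d×d), each diagonalized by the respective basis (each u_i is an eigenvector of D₁, each v_i of D₂, each w_i of D₃), with trace(D₁) > 0 and trace(D₂) = trace(D₃) = 0, such that |det(e^{τD₂}v_i)_i| = 1 = |det(e^{τD₃}w_i)_i| for all τ ∈ ℝ, |det(e^{τD₁}u_i)_i| → ∞ as τ → ∞, and 𝒬_Q[(e^{τD₁}u_i)_i, (e^{τD₂}v_i)_i, (e^{τD₃}w_i)_i] / ( |det(e^{τD₁}u_i)_i|^{s/d₁} |det(e^{τD₂}v_i)_i|^{s/k} |det(e^{τD₃}w_i)_i|^{s/d} )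 → 0 as τ → ∞. -/
noncomputable section

open MeasureTheory
open scoped BigOperators ENNReal NNReal

namespace Statement4

abbrev E (n : ℕ) : Type := EuclideanSpace ℝ (Fin n)

/-- Evaluation of the trilinear form on `ℝ^{d₁} × ℝ^k × ℝ^d` with coefficient array `c`. -/
def triEval {d₁ k d : ℕ} (c : Fin d₁ → Fin k → Fin d → ℝ)
    (u : E d₁) (v : E k) (w : E d) : ℝ :=
  ∑ i : Fin d₁, ∑ i' : Fin k, ∑ i'' : Fin d, u i * v i' * w i'' * c i i' i''

/-- The determinant `Q_s(t; v₁,…,v_s; w₁,…,w_s)`. -/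
def Qdet {d₁ k d : ℕ} (c : Fin d₁ → Fin k → Fin d → ℝ) (s : ℕ)
    (t : E d₁) (v : Fin s → E k) (w : Fin s → E d) : ℝ :=
  Matrix.det (Matrix.of fun i j : Fin s => triEval c t (v i) (w j))

/-- Iterated directional derivative along the directions `a 0, …, a (s-1)`. -/
def iterDir {d₁ : ℕ} : (s : ℕ) → (Fin s → E d₁) → (E d₁ → ℝ) → E d₁ → ℝ
  | 0, _, g => g
  | s + 1, a, g => fun t => fderiv ℝ (iterDir s (fun i => a i.succ) g) t (a 0)

/-- `β` counts the sequence `I`. -/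
def Counts {m s : ℕ} (β : Fin m → ℕ) (I : Fin s → Fin m) : Prop :=
  ∀ ℓ : Fin m, (Finset.univ.filter fun j => I j = ℓ).card = β ℓ

/-- Membership in the set `N₀(Q, ũ, ṽ, w̃)`. -/
def InN0 {d₁ k d : ℕ} (c : Fin d₁ → Fin k → Fin d → ℝ)
    (u : Fin d₁ → E d₁) (v : Fin k → E k) (w : Fin d → E d)
    (p : (Fin d₁ → ℕ) × (Fin k → ℕ) × (Fin d → ℕ)) : Prop :=
  (p.1 = 0 ∧ p.2.1 = 0 ∧ p.2.2 = 0) ∨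
  ∃ s : ℕ, 1 ≤ s ∧ s ≤ min d k ∧
    ∃ (I : Fin s → Fin d₁) (I' : Fin s → Fin k) (I'' : Fin s → Fin d),
      Counts p.1 I ∧ Counts p.2.1 I' ∧ Counts p.2.2 I'' ∧
      iterDir s (fun j => u (I j))
        (fun t => Qdet c s t (fun j => v (I' j)) (fun j => w (I'' j))) 0 ≠ 0

def toPoint {d₁ k d : ℕ} (p : (Fin d₁ → ℕ) × (Fin k → ℕ) × (Fin d → ℕ)) :
    (Fin d₁ → ℝ) × (Fin k → ℝ) × (Fin d → ℝ) :=
  ((fun i => (p.1 i : ℝ)), (fun i => (p.2.1 i : ℝ)), fun i => (p.2.2 i : ℝ))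

/-- The Newton-type diagram `N_R(Q)`. -/
def NR {d₁ k d : ℕ} (c : Fin d₁ → Fin k → Fin d → ℝ) :
    Set ((Fin d₁ → ℝ) × (Fin k → ℝ) × (Fin d → ℝ)) :=
  { x | ∀ (u : Fin d₁ → E d₁) (v : Fin k → E k) (w : Fin d → E d),
      Orthonormal ℝ u → Orthonormal ℝ v → Orthonormal ℝ w →
      x ∈ convexHull ℝ (toPoint '' { p | InN0 c u v w p }) }


/-- The quantity `𝒬_Q[u,v,w]`. -/
def calQ {d₁ k d : ℕ} (c : Fin d₁ → Fin k → Fin d → ℝ)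
    (u : Fin d₁ → E d₁) (v : Fin k → E k) (w : Fin d → E d) : ℝ :=
  Real.sqrt (1 + ∑ s ∈ Finset.Icc 1 (min d k),
    ∑ I : Fin s → Fin d₁, ∑ I' : Fin s → Fin k, ∑ I'' : Fin s → Fin d,
      (iterDir s (fun j => u (I j))
        (fun t => Qdet c s t (fun j => v (I' j)) (fun j => w (I'' j))) 0) ^ 2)

/-- Determinant of the matrix whose columns are `u 0, …, u (m-1)`. -/
def detb {m : ℕ} (u : Fin m → E m) : ℝ :=
  Matrix.det (Matrix.of fun i j : Fin m => u j i)

lemma fderiv_cmul {n : ℕ} (C : ℝ) (g : E n → ℝ) (t : E n) :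
    fderiv ℝ (fun t => C * g t) t = C • fderiv ℝ g t := by
  have := congrFun (fderiv_const_smul_field (𝕜 := ℝ) (f := g) C) t
  exact this

lemma iterDir_const_mul {d₁ : ℕ} (s : ℕ) (x : Fin s → E d₁) (C : ℝ) (g : E d₁ → ℝ) :
    iterDir s x (fun t => C * g t) = fun t => C * iterDir s x g t := by
  induction s with
  | zero => rfl
  | succ s ih =>
    funext t
    simp only [iterDir]
    rw [ih, fderiv_cmul]
    rfl

lemma iterDir_smul {d₁ : ℕ} (s : ℕ) (a : Fin s → ℝ) (x : Fin s → E d₁) (g : E d₁ → ℝ) :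
    iterDir s (fun j => a j • x j) g = fun t => (∏ j, a j) * iterDir s x g t := by
  induction s with
  | zero => funext t; simp [iterDir]
  | succ s ih =>
    funext t
    simp only [iterDir]
    rw [ih (fun j => a j.succ) (fun j => x j.succ), fderiv_cmul, map_smul]
    simp only [ContinuousLinearMap.smul_apply, smul_eq_mul, Fin.prod_univ_succ]
    ring

lemma triEval_smul {d₁ k d : ℕ} (c : Fin d₁ → Fin k → Fin d → ℝ) (t : E d₁) (v : E k) (w : E d)
    (b e : ℝ) : triEval c t (b • v) (e • w) = b * (e * triEval c t v w) := by
  simp only [triEval, Finset.mul_sum]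
  refine Finset.sum_congr rfl fun i _ => Finset.sum_congr rfl fun i' _ =>
    Finset.sum_congr rfl fun i'' _ => ?_
  simp
  ring

lemma Qdet_smul {d₁ k d : ℕ} (c : Fin d₁ → Fin k → Fin d → ℝ) (s : ℕ) (t : E d₁)
    (b e : Fin s → ℝ) (v : Fin s → E k) (w : Fin s → E d) :
    Qdet c s t (fun j => b j • v j) (fun j => e j • w j)
      = (∏ j, b j) * (∏ j, e j) * Qdet c s t v w := by
  simp only [Qdet, triEval_smul]
  have h1 := Matrix.det_mul_column b (Matrix.of fun i j : Fin s => e j * triEval c t (v i) (w j))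
  have h2 := Matrix.det_mul_row e (Matrix.of fun i j : Fin s => triEval c t (v i) (w j))
  simp only [Matrix.of_apply] at h1 h2
  rw [h1, h2]
  ring

/-- The coefficient. -/
def cf {d₁ k d : ℕ} (c : Fin d₁ → Fin k → Fin d → ℝ)
    (u : Fin d₁ → E d₁) (v : Fin k → E k) (w : Fin d → E d) (s : ℕ)
    (I : Fin s → Fin d₁) (I' : Fin s → Fin k) (I'' : Fin s → Fin d) : ℝ :=
  iterDir s (fun j => u (I j))
        (fun t => Qdet c s t (fun j => v (I' j)) (fun j => w (I'' j))) 0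

def ex {d₁ k d : ℕ} (μ : Fin d₁ → ℝ) (ν : Fin k → ℝ) (ρ : Fin d → ℝ) (s : ℕ)
    (I : Fin s → Fin d₁) (I' : Fin s → Fin k) (I'' : Fin s → Fin d) : ℝ :=
  ∑ j, μ (I j) + ∑ j, ν (I' j) + ∑ j, ρ (I'' j)

lemma cf_exp {d₁ k d : ℕ} (c : Fin d₁ → Fin k → Fin d → ℝ)
    (u : Fin d₁ → E d₁) (v : Fin k → E k) (w : Fin d → E d)
    (μ : Fin d₁ → ℝ) (ν : Fin k → ℝ) (ρ : Fin d → ℝ) (τ : ℝ) (s : ℕ)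
    (I : Fin s → Fin d₁) (I' : Fin s → Fin k) (I'' : Fin s → Fin d) :
    iterDir s (fun j => Real.exp (τ * μ (I j)) • u (I j))
        (fun t => Qdet c s t (fun j => Real.exp (τ * ν (I' j)) • v (I' j))
          (fun j => Real.exp (τ * ρ (I'' j)) • w (I'' j))) 0
      = Real.exp (τ * ex μ ν ρ s I I' I'') * cf c u v w s I I' I'' := by
  simp only [Qdet_smul]
  rw [iterDir_const_mul, iterDir_smul]
  simp only [← Real.exp_sum, ← Finset.mul_sum, cf, ex, mul_add, Real.exp_add]
  ring

lemma calQ_exp {d₁ k d : ℕ} (c : Fin d₁ → Fin k → Fin d → ℝ)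
    (u : Fin d₁ → E d₁) (v : Fin k → E k) (w : Fin d → E d)
    (μ : Fin d₁ → ℝ) (ν : Fin k → ℝ) (ρ : Fin d → ℝ) (τ L : ℝ) :
    calQ c (fun i => Real.exp (τ * μ i) • u i) (fun i => Real.exp (τ * ν i) • v i)
      (fun i => Real.exp (τ * ρ i) • w i) / Real.exp (τ * L)
    = Real.sqrt (Real.exp (τ * (0 - L)) ^ 2 + ∑ s ∈ Finset.Icc 1 (min d k),
    ∑ I : Fin s → Fin d₁, ∑ I' : Fin s → Fin k, ∑ I'' : Fin s → Fin d,
      (Real.exp (τ * (ex μ ν ρ s I I' I'' - L)) * cf c u v w s I I' I'') ^ 2) := by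
  have h : ∀ x : ℝ, Real.exp (τ * (x - L)) = Real.exp (τ * x) / Real.exp (τ * L) := by
    intro x; rw [mul_sub, Real.exp_sub]
  have hp := Real.exp_pos (τ * L)
  simp only [calQ, cf_exp, h]
  rw [div_eq_iff hp.ne']
  nth_rewrite 3 [← Real.sqrt_sq hp.le]
  rw [← Real.sqrt_mul (by positivity)]
  congr 1
  rw [add_mul]
  congr 1
  · simp
    try field_simp
  · simp only [Finset.sum_mul]
    refine Finset.sum_congr rfl fun s _ => Finset.sum_congr rfl fun i _ =>
      Finset.sum_congr rfl fun i' _ => Finset.sum_congr rfl fun i'' _ => ?_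
    field_simp

def obasis {m : ℕ} (u : Fin m → E m) (hu : Orthonormal ℝ u) : OrthonormalBasis (Fin m) ℝ (E m) :=
  OrthonormalBasis.mk hu
    (hu.linearIndependent.span_eq_top_of_card_eq_finrank' (by simp)).ge

lemma obasis_apply {m : ℕ} (u : Fin m → E m) (hu : Orthonormal ℝ u) (i : Fin m) :
    obasis u hu i = u i := by simp [obasis]

lemma abs_detb {m : ℕ} (u : Fin m → E m) (hu : Orthonormal ℝ u) : |detb u| = 1 := by
  have h : (Matrix.of fun i j : Fin m => u j i).transpose * (Matrix.of fun i j : Fin m => u j i)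
      = 1 := by
    ext i j
    have := orthonormal_iff_ite.1 hu i j
    rw [Matrix.mul_apply, Matrix.one_apply, ← this]
    simp [PiLp.inner_apply, mul_comm]
  have h2 := congrArg Matrix.det h
  rw [Matrix.det_mul, Matrix.det_transpose, Matrix.det_one] at h2
  have h3 : detb u * detb u = 1 := h2
  rw [← abs_mul_abs_self] at h3
  nlinarith [abs_nonneg (detb u)]

lemma abs_detb_exp {m : ℕ} (u : Fin m → E m) (hu : Orthonormal ℝ u) (μ : Fin m → ℝ) (τ : ℝ) :
    |detb (fun i => Real.exp (τ * μ i) • u i)| = Real.exp (τ * ∑ i, μ i) := by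
  have h2 := Matrix.det_mul_row (fun i => Real.exp (τ * μ i)) (Matrix.of fun i j : Fin m => u j i)
  have h3 : detb (fun i => Real.exp (τ * μ i) • u i)
      = (∏ i, Real.exp (τ * μ i)) * detb u := by
    rw [detb, detb, ← h2]
    rfl
  rw [h3, abs_mul, abs_detb u hu, ← Real.exp_sum, ← Finset.mul_sum, mul_one, abs_of_pos (Real.exp_pos _)]

lemma trace_eq {m : ℕ} (u : Fin m → E m) (hu : Orthonormal ℝ u) (μ : Fin m → ℝ)
    (D : E m →ₗ[ℝ] E m) (h : ∀ i, D (u i) = μ i • u i) :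
    LinearMap.trace ℝ (E m) D = ∑ i, μ i := by
  rw [LinearMap.trace_eq_sum_inner D (obasis u hu)]
  refine Finset.sum_congr rfl fun i _ => ?_
  rw [obasis_apply, h, inner_smul_right, real_inner_self_eq_norm_sq, hu.1 i]
  simp

lemma exists_D {m : ℕ} (u : Fin m → E m) (hu : Orthonormal ℝ u) (μ : Fin m → ℝ) :
    ∃ D : E m →ₗ[ℝ] E m, D.IsSymmetric ∧ ∀ i, D (u i) = μ i • u i := by
  refine ⟨∑ i, μ i • ((innerₛₗ ℝ (u i)).smulRight (u i)), ?_, ?_⟩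
  · intro x y
    simp only [LinearMap.sum_apply, LinearMap.smul_apply, LinearMap.smulRight_apply,
      innerₛₗ_apply_apply, sum_inner, inner_sum, inner_smul_left, inner_smul_right]
    refine Finset.sum_congr rfl fun i _ => ?_
    rw [real_inner_comm x (u i)]
    simp only [conj_trivial]
    ring
  · intro j
    simp [LinearMap.sum_apply, orthonormal_iff_ite.1 hu]

/-- The pairing. -/
def pr {d₁ k d : ℕ} (μ : Fin d₁ → ℝ) (ν : Fin k → ℝ) (ρ : Fin d → ℝ)
    (x : (Fin d₁ → ℝ) × (Fin k → ℝ) × (Fin d → ℝ)) : ℝ :=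
  ∑ i, x.1 i * μ i + ∑ i, x.2.1 i * ν i + ∑ i, x.2.2 i * ρ i

lemma pr_linear {d₁ k d : ℕ} (μ : Fin d₁ → ℝ) (ν : Fin k → ℝ) (ρ : Fin d → ℝ) :
    IsLinearMap ℝ (pr μ ν ρ) := by
  constructor
  · intro x y
    simp only [pr, Prod.fst_add, Prod.snd_add, Pi.add_apply, add_mul, Finset.sum_add_distrib]
    ring
  · intro a x
    simp only [pr, Prod.smul_fst, Prod.smul_snd, Pi.smul_apply, smul_eq_mul, mul_assoc,
      ← Finset.mul_sum]
    ring

lemma counts_sum {m s : ℕ} (β : Fin m → ℕ) (I : Fin s → Fin m) (h : Counts β I) (μ : Fin m → ℝ) :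
    ∑ i, (β i : ℝ) * μ i = ∑ j, μ (I j) := by
  rw [← Finset.sum_fiberwise Finset.univ I]
  refine Finset.sum_congr rfl fun i _ => ?_
  rw [← h i, Finset.sum_congr rfl (g := fun _ => μ i)]
  · simp
  · intro j hj
    rw [(Finset.mem_filter.1 hj).2]

lemma counts_exists {m s : ℕ} (I : Fin s → Fin m) : ∃ β, Counts β I := ⟨_, fun _ => rfl⟩

lemma counts_le {m s : ℕ} (β : Fin m → ℕ) (I : Fin s → Fin m) (h : Counts β I) (i : Fin m) :
    β i ≤ s := by
  rw [← h i]
  exact (Finset.card_le_univ _).trans (by simp)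

lemma N0_finite {d₁ k d : ℕ} (c : Fin d₁ → Fin k → Fin d → ℝ)
    (u : Fin d₁ → E d₁) (v : Fin k → E k) (w : Fin d → E d) : {p | InN0 c u v w p}.Finite := by
  refine (Set.Finite.prod (Set.finite_Icc (0 : Fin d₁ → ℕ) (fun _ => min d k))
    (Set.Finite.prod (Set.finite_Icc (0 : Fin k → ℕ) (fun _ => min d k))
      (Set.finite_Icc (0 : Fin d → ℕ) (fun _ => min d k)))).subset ?_
  rintro ⟨a, b, e⟩ h
  rcases h with ⟨h1, h2, h3⟩ | ⟨s, h1, h2, I, I', I'', c1, c2, c3, -⟩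
  · simp only at h1 h2 h3
    subst h1 h2 h3
    refine ⟨⟨le_rfl, ?_⟩, ⟨le_rfl, ?_⟩, ⟨le_rfl, ?_⟩⟩ <;> intro i <;> exact Nat.zero_le _
  · refine ⟨⟨fun i => Nat.zero_le _, ?_⟩, ⟨fun i => Nat.zero_le _, ?_⟩,
      ⟨fun i => Nat.zero_le _, ?_⟩⟩
    · intro i; exact (counts_le _ _ c1 i).trans h2
    · intro i; exact (counts_le _ _ c2 i).trans h2
    · intro i; exact (counts_le _ _ c3 i).trans h2

lemma pr_toPoint {d₁ k d s : ℕ} (μ : Fin d₁ → ℝ) (ν : Fin k → ℝ) (ρ : Fin d → ℝ)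
    (p : (Fin d₁ → ℕ) × (Fin k → ℕ) × (Fin d → ℕ))
    (I : Fin s → Fin d₁) (I' : Fin s → Fin k) (I'' : Fin s → Fin d)
    (c1 : Counts p.1 I) (c2 : Counts p.2.1 I') (c3 : Counts p.2.2 I'') :
    pr μ ν ρ (toPoint p) = ex μ ν ρ s I I' I'' := by
  simp only [pr, toPoint, ex]
  rw [counts_sum _ _ c1, counts_sum _ _ c2, counts_sum _ _ c3]

lemma functional_eq {d₁ k d : ℕ} (f : ((Fin d₁ → ℝ) × (Fin k → ℝ) × (Fin d → ℝ)) →ₗ[ℝ] ℝ) :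
    ∃ (μ : Fin d₁ → ℝ) (ν : Fin k → ℝ) (ρ : Fin d → ℝ), ∀ x, f x = pr μ ν ρ x := by
  let f1 := f ∘ₗ LinearMap.inl ℝ _ _
  let f2 := f ∘ₗ LinearMap.inr ℝ _ _ ∘ₗ LinearMap.inl ℝ _ _
  let f3 := f ∘ₗ LinearMap.inr ℝ _ _ ∘ₗ LinearMap.inr ℝ _ _
  refine ⟨fun i => f1 (fun j => if i = j then 1 else 0), fun i => f2 (fun j => if i = j then 1 else 0),
    fun i => f3 (fun j => if i = j then 1 else 0), fun x => ?_⟩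
  have h : f x = f1 x.1 + f2 x.2.1 + f3 x.2.2 := by
    simp only [f1, f2, f3, LinearMap.comp_apply, ← map_add]
    congr 1
    simp
  rw [h, LinearMap.pi_apply_eq_sum_univ f1, LinearMap.pi_apply_eq_sum_univ f2,
    LinearMap.pi_apply_eq_sum_univ f3]
  simp only [smul_eq_mul, pr]

lemma tendsto_sum_zero' {ι : Type} (S : Finset ι) (F : ι → ℝ → ℝ)
    (h : ∀ i ∈ S, Filter.Tendsto (F i) Filter.atTop (nhds 0)) :
    Filter.Tendsto (fun τ => ∑ i ∈ S, F i τ) Filter.atTop (nhds 0) := by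
  simpa using tendsto_finsetSum S h

lemma le_sum4 {d₁ k d : ℕ} (S : Finset ℕ)
    (F : (r : ℕ) → (Fin r → Fin d₁) → (Fin r → Fin k) → (Fin r → Fin d) → ℝ)
    (hF : ∀ r I I' I'', 0 ≤ F r I I' I'') (r : ℕ) (hr : r ∈ S) (I : Fin r → Fin d₁)
    (I' : Fin r → Fin k) (I'' : Fin r → Fin d) :
    F r I I' I'' ≤ ∑ s ∈ S, ∑ I : Fin s → Fin d₁, ∑ I' : Fin s → Fin k, ∑ I'' : Fin s → Fin d,
      F s I I' I'' := by
  have a3 : ∀ r I I', 0 ≤ ∑ I'', F r I I' I'' :=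
    fun r I I' => Finset.sum_nonneg fun _ _ => hF _ _ _ _
  have a2 : ∀ r I, 0 ≤ ∑ I', ∑ I'', F r I I' I'' :=
    fun r I => Finset.sum_nonneg fun _ _ => a3 _ _ _
  have a1 : ∀ r, 0 ≤ ∑ I, ∑ I', ∑ I'', F r I I' I'' :=
    fun r => Finset.sum_nonneg fun _ _ => a2 _ _
  calc F r I I' I'' ≤ ∑ I'', F r I I' I'' :=
        Finset.single_le_sum (f := fun I'' => F r I I' I'') (fun _ _ => hF _ _ _ _)
          (Finset.mem_univ I'')
    _ ≤ ∑ I', ∑ I'', F r I I' I'' :=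
        Finset.single_le_sum (f := fun I' => ∑ I'', F r I I' I'') (fun _ _ => a3 _ _ _)
          (Finset.mem_univ I')
    _ ≤ ∑ I, ∑ I', ∑ I'', F r I I' I'' :=
        Finset.single_le_sum (f := fun I => ∑ I', ∑ I'', F r I I' I'') (fun _ _ => a2 _ _)
          (Finset.mem_univ I)
    _ ≤ _ := Finset.single_le_sum (f := fun r => ∑ I, ∑ I', ∑ I'', F r I I' I'')
          (fun _ _ => a1 _) hr

lemma tendsto_exp_neg {a : ℝ} (h : a < 0) :
    Filter.Tendsto (fun τ : ℝ => Real.exp (τ * a)) Filter.atTop (nhds 0) :=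
  Real.tendsto_exp_atBot.comp (Filter.tendsto_id.atTop_mul_const_of_neg h)

theorem statement4
    (d₁ k d : ℕ) (hd₁ : 0 < d₁) (hk : 0 < k) (hd : 0 < d)
    (c : Fin d₁ → Fin k → Fin d → ℝ) (s : ℝ) (hs : 0 ≤ s) :
    (((fun _ => s / (d₁ : ℝ)), (fun _ => s / (k : ℝ)), fun _ => s / (d : ℝ)) ∉ NR c) ↔
    ∃ (u : Fin d₁ → E d₁) (v : Fin k → E k) (w : Fin d → E d),
      Orthonormal ℝ u ∧ Orthonormal ℝ v ∧ Orthonormal ℝ w ∧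
      ∃ (D₁ : E d₁ →ₗ[ℝ] E d₁) (D₂ : E k →ₗ[ℝ] E k) (D₃ : E d →ₗ[ℝ] E d)
        (μ : Fin d₁ → ℝ) (ν : Fin k → ℝ) (ρ : Fin d → ℝ),
        D₁.IsSymmetric ∧ D₂.IsSymmetric ∧ D₃.IsSymmetric ∧
        (∀ i, D₁ (u i) = μ i • u i) ∧ (∀ i, D₂ (v i) = ν i • v i) ∧
        (∀ i, D₃ (w i) = ρ i • w i) ∧
        0 < LinearMap.trace ℝ (E d₁) D₁ ∧
        LinearMap.trace ℝ (E k) D₂ = 0 ∧ LinearMap.trace ℝ (E d) D₃ = 0 ∧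
        (∀ τ : ℝ, |detb (fun i => Real.exp (τ * ν i) • v i)| = 1) ∧
        (∀ τ : ℝ, |detb (fun i => Real.exp (τ * ρ i) • w i)| = 1) ∧
        Filter.Tendsto (fun τ : ℝ => |detb (fun i => Real.exp (τ * μ i) • u i)|)
          Filter.atTop Filter.atTop ∧
        Filter.Tendsto (fun τ : ℝ =>
            calQ c (fun i => Real.exp (τ * μ i) • u i)
                (fun i => Real.exp (τ * ν i) • v i)
                (fun i => Real.exp (τ * ρ i) • w i) /
              (|detb (fun i => Real.exp (τ * μ i) • u i)| ^ (s / (d₁ : ℝ)) *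
               |detb (fun i => Real.exp (τ * ν i) • v i)| ^ (s / (k : ℝ)) *
               |detb (fun i => Real.exp (τ * ρ i) • w i)| ^ (s / (d : ℝ))))
          Filter.atTop (nhds 0) := by
  have hd₁' : (d₁ : ℝ) ≠ 0 := by positivity
  have hk' : (k : ℝ) ≠ 0 := by positivity
  have hd' : (d : ℝ) ≠ 0 := by positivity
  constructor
  · intro h
    simp only [NR, Set.mem_ofPred_eq, not_forall] at h
    obtain ⟨u, v, w, hu, hv, hw, hn⟩ := h
    obtain ⟨f, a, hfa, hfb⟩ := geometric_hahn_banach_closed_point (convex_convexHull ℝ _)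
      (((N0_finite c u v w).image toPoint).isClosed_convexHull ℝ) hn
    obtain ⟨μ, ν, ρ, hf⟩ := functional_eq f.toLinearMap
    have hf' : ∀ x, f x = pr μ ν ρ x := hf
    set mν := (∑ i, ν i) / k with hmν
    set mρ := (∑ i, ρ i) / d with hmρ
    set μ' : Fin d₁ → ℝ := fun i => μ i + mν + mρ with hμ'
    set ν' : Fin k → ℝ := fun i => ν i - mν with hν'
    set ρ' : Fin d → ℝ := fun i => ρ i - mρ with hρ'
    have sν : ∑ i, ν' i = 0 := by
      simp only [hν', Finset.sum_sub_distrib, hmν]; simp; field_simp; simp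
    have sρ : ∑ i, ρ' i = 0 := by
      simp only [hρ', Finset.sum_sub_distrib, hmρ]; simp; field_simp; simp
    have sμ : ∑ i, μ' i = ∑ i, μ i + d₁ * mν + d₁ * mρ := by
      simp only [hμ', Finset.sum_add_distrib]; simp
    set L := (∑ i, μ' i) * (s / d₁) with hL
    have ho : a < L := by
      rw [hf'] at hfb
      refine hfb.trans_eq ?_
      rw [hL, sμ]
      simp only [pr, ← Finset.mul_sum, hmν, hmρ]
      field_simp
    have hex : ∀ r I I' I'', ex μ' ν' ρ' r I I' I'' = ex μ ν ρ r I I' I'' := by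
      intro r I I' I''
      simp only [ex, hμ', hν', hρ', Finset.sum_add_distrib, Finset.sum_sub_distrib]
      simp
      ring
    have h0 : 0 < L := by
      refine lt_trans ?_ ho
      have := hfa (toPoint 0) (subset_convexHull ℝ _ ⟨0, Or.inl ⟨rfl, rfl, rfl⟩, rfl⟩)
      rw [hf'] at this
      simpa [pr, toPoint] using this
    have hneg : ∀ r ∈ Finset.Icc 1 (min d k), ∀ I I' I'', cf c u v w r I I' I'' ≠ 0 →
        ex μ' ν' ρ' r I I' I'' - L < 0 := by
      intro r hr I I' I'' hc
      obtain ⟨p1, c1⟩ := counts_exists I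
      obtain ⟨p2, c2⟩ := counts_exists I'
      obtain ⟨p3, c3⟩ := counts_exists I''
      have := hfa (toPoint (p1, p2, p3)) (subset_convexHull ℝ _ ⟨(p1, p2, p3), Or.inr
        ⟨r, (Finset.mem_Icc.1 hr).1, (Finset.mem_Icc.1 hr).2, I, I', I'', c1, c2, c3, hc⟩, rfl⟩)
      rw [hf', pr_toPoint μ ν ρ _ I I' I'' c1 c2 c3, ← hex] at this
      linarith
    have hS : 0 < ∑ i, μ' i := by
      by_contra hcon
      have : L ≤ 0 := mul_nonpos_of_nonpos_of_nonneg (not_lt.1 hcon) (by positivity)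
      linarith
    obtain ⟨D₁, s1, e1⟩ := exists_D u hu μ'
    obtain ⟨D₂, s2, e2⟩ := exists_D v hv ν'
    obtain ⟨D₃, s3, e3⟩ := exists_D w hw ρ'
    refine ⟨u, v, w, hu, hv, hw, D₁, D₂, D₃, μ', ν', ρ', s1, s2, s3, e1, e2, e3, ?_, ?_, ?_, ?_,
      ?_, ?_, ?_⟩
    · rwa [trace_eq u hu μ' D₁ e1]
    · rw [trace_eq v hv ν' D₂ e2, sν]
    · rw [trace_eq w hw ρ' D₃ e3, sρ]
    · intro τ; rw [abs_detb_exp v hv, sν]; simp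
    · intro τ; rw [abs_detb_exp w hw, sρ]; simp
    · simp only [abs_detb_exp u hu]
      exact Real.tendsto_exp_atTop.comp (Filter.tendsto_id.atTop_mul_const hS)
    · simp only [abs_detb_exp u hu, abs_detb_exp v hv, abs_detb_exp w hw, sν, sρ, mul_zero,
        Real.exp_zero, Real.one_rpow, mul_one, ← Real.exp_mul, mul_assoc]
      rw [← hL]
      simp only [calQ_exp]
      rw [← Real.sqrt_zero]
      refine (Real.continuous_sqrt.tendsto 0).comp ?_
      have z1 : Filter.Tendsto (fun τ : ℝ => Real.exp (τ * (0 - L)) ^ 2) Filter.atTop (nhds 0) := by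
        simpa using (tendsto_exp_neg (a := 0 - L) (by linarith)).pow 2
      rw [← add_zero (0 : ℝ)]
      refine Filter.Tendsto.add (by simpa using z1) ?_
      refine tendsto_sum_zero' _ _ fun r hr => ?_
      refine tendsto_sum_zero' _ _ fun I _ => tendsto_sum_zero' _ _ fun I' _ =>
        tendsto_sum_zero' _ _ fun I'' _ => ?_
      by_cases hc : cf c u v w r I I' I'' = 0
      · simp [hc]
      · simpa using ((tendsto_exp_neg (hneg r hr I I' I'' hc)).mul_const
          (cf c u v w r I I' I'')).pow 2
  · rintro ⟨u, v, w, hu, hv, hw, D₁, D₂, D₃, μ, ν, ρ, s1, s2, s3, e1, e2, e3, t1, t2, t3, -, -, -,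
      hT⟩ hN
    have hN := hN u v w hu hv hw
    rw [trace_eq u hu μ D₁ e1] at t1
    rw [trace_eq v hv ν D₂ e2] at t2
    rw [trace_eq w hw ρ D₃ e3] at t3
    simp only [abs_detb_exp u hu, abs_detb_exp v hv, abs_detb_exp w hw, t2, t3, mul_zero,
        Real.exp_zero, Real.one_rpow, mul_one, ← Real.exp_mul, mul_assoc] at hT
    set L := (∑ i, μ i) * (s / d₁) with hL
    simp only [calQ_exp] at hT
    have key : ∃ p, InN0 c u v w p ∧ L ≤ pr μ ν ρ (toPoint p) := by
      by_contra hcon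
      push Not at hcon
      have := convexHull_min (s := toPoint '' { p | InN0 c u v w p })
        (t := {x | pr μ ν ρ x < L}) (by rintro _ ⟨p, hp, rfl⟩; exact hcon p hp)
        (convex_halfSpace_lt (pr_linear μ ν ρ) L) hN
      simp only [Set.mem_ofPred_eq, pr, ← Finset.mul_sum, t2, t3] at this
      rw [hL] at this
      linarith
    obtain ⟨p, hp, hLp⟩ := key
    have fin : ∃ C : ℝ, 0 < C ∧ ∀ τ : ℝ, 0 ≤ τ → C ^ 2 ≤
        (Real.exp (τ * (0 - L)) ^ 2 + ∑ s ∈ Finset.Icc 1 (min d k),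
        ∑ I : Fin s → Fin d₁, ∑ I' : Fin s → Fin k, ∑ I'' : Fin s → Fin d,
        (Real.exp (τ * (ex μ ν ρ s I I' I'' - L)) * cf c u v w s I I' I'') ^ 2) := by
      rcases hp with ⟨h1, h2, h3⟩ | ⟨r, h1, h2, I, I', I'', c1, c2, c3, hc⟩
      · refine ⟨1, one_pos, fun τ hτ => ?_⟩
        simp only [pr, toPoint, h1, h2, h3] at hLp
        simp at hLp
        have : 1 ≤ Real.exp (τ * (0 - L)) := Real.one_le_exp (mul_nonneg hτ (by linarith))
        have h5 : (1 : ℝ) ^ 2 ≤ Real.exp (τ * (0 - L)) ^ 2 := by gcongr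
        refine h5.trans (le_add_of_nonneg_right (by positivity))
      · rw [pr_toPoint μ ν ρ p I I' I'' c1 c2 c3] at hLp
        change cf c u v w r I I' I'' ≠ 0 at hc
        refine ⟨|cf c u v w r I I' I''|, abs_pos.2 hc, fun τ hτ => ?_⟩
        have h6 : 1 ≤ Real.exp (τ * (ex μ ν ρ r I I' I'' - L)) :=
          Real.one_le_exp (mul_nonneg hτ (by linarith))
        have h7 : |cf c u v w r I I' I''| ^ 2 ≤
            (Real.exp (τ * (ex μ ν ρ r I I' I'' - L)) * cf c u v w r I I' I'') ^ 2 := by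
          rw [mul_pow, sq_abs]
          exact le_mul_of_one_le_left (sq_nonneg _) (one_le_pow₀ h6)
        refine h7.trans (le_trans ?_ (le_add_of_nonneg_left (sq_nonneg _)))
        exact le_sum4 (Finset.Icc 1 (min d k)) (fun r I I' I'' =>
          (Real.exp (τ * (ex μ ν ρ r I I' I'' - L)) * cf c u v w r I I' I'') ^ 2)
          (fun _ _ _ _ => sq_nonneg _) r (Finset.mem_Icc.2 ⟨h1, h2⟩) I I' I''
    obtain ⟨C, hC, hCb⟩ := fin
    have := ge_of_tendsto hT (b := C) (by
      filter_upwards [Filter.eventually_ge_atTop 0] with τ hτ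
      exact Real.le_sqrt_of_sq_le (hCb τ hτ))
    linarith

end Statement4
end
end

section
/- Let H be a real Hilbert space and let V₁ ⊇ V₂ ⊇ ⋯ ⊇ V_ℓ be a decreasing sequence of nontrivial finite-dimensional subspaces of H, and let v₁,…,v_m be a basis of V₁. Then there exists a basis u₁,…,u_m of V₁ such that: for every j ∈ {1,…,ℓ}, the span of u_{m−dim V_j+1},…,u_m equals V_j; and Σ_{i=1}^m ⟨x, v_i⟩⟨v_i, y⟩ = Σ_{i=1}^m ⟨x, u_i⟩⟨u_i, y⟩ for all x, y ∈ H. -/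
noncomputable section

open scoped BigOperators RealInnerProductSpace

theorem adapted_aux {E : Type*} [NormedAddCommGroup E] [InnerProductSpace ℝ E]
    [FiniteDimensional ℝ E] (ℓ m : ℕ) : ∀ (K : Submodule ℝ E) (W : Fin ℓ → Submodule ℝ E),
    Module.finrank ℝ K = m → Antitone W → (∀ j, W j ≤ K) →
    ∃ b : Fin m → E, Orthonormal ℝ b ∧ (∀ i, b i ∈ K) ∧
      ∀ j (i : Fin m), m - Module.finrank ℝ (W j) ≤ (i : ℕ) → b i ∈ W j := by
  induction m with
  | zero =>
    intro K W _ _ _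
    exact ⟨Fin.elim0, ⟨fun i => i.elim0, fun i => i.elim0⟩, fun i => i.elim0,
      fun _ i => i.elim0⟩
  | succ m ih =>
    intro K W hK hW hWK
    have hM : ∃ M : Submodule ℝ E, M ≤ K ∧ M ≠ K ∧ ∀ j, W j ≠ K → W j ≤ M := by
      by_cases h : ∃ j, W j ≠ K
      · classical
        let S : Finset (Fin ℓ) := Finset.univ.filter (fun j => W j ≠ K)
        have hS : S.Nonempty := by
          obtain ⟨j, hj⟩ := h
          exact ⟨j, by simp [S, hj]⟩
        refine ⟨W (S.min' hS), hWK _, ?_, ?_⟩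
        · have := S.min'_mem hS
          exact (Finset.mem_filter.1 this).2
        · intro j hj
          exact hW (S.min'_le j (by simp [S, hj]))
      · push Not at h
        refine ⟨⊥, bot_le, ?_, fun j hj => absurd (h j) hj⟩
        rintro rfl
        simp at hK
    obtain ⟨M, hMK, hne, hM⟩ := hM
    have hex : ∃ e : E, ‖e‖ = 1 ∧ e ∈ K ∧ e ∈ Mᗮ := by
      have h1 : Mᗮ ⊓ K ≠ ⊥ := by
        intro h
        have := Submodule.sup_orthogonal_inf_of_hasOrthogonalProjection hMK
        rw [h, sup_bot_eq] at this
        exact hne this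
      obtain ⟨x, hx, hx0⟩ := Submodule.exists_mem_ne_zero_of_ne_bot h1
      refine ⟨(‖x‖⁻¹ : ℝ) • x, ?_, K.smul_mem _ hx.2, Submodule.smul_mem _ _ hx.1⟩
      rw [norm_smul, norm_inv, norm_norm, inv_mul_cancel₀ (norm_ne_zero_iff.2 hx0)]
    obtain ⟨e, he1, heK, heM⟩ := hex
    have he0 : e ≠ 0 := by rintro rfl; simp at he1
    set L : Submodule ℝ E := (ℝ ∙ e)
    have hLK : L ≤ K := (Submodule.span_singleton_le_iff_mem _ _).2 heK
    have hfr := Submodule.finrank_add_inf_finrank_orthogonal hLK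
    rw [finrank_span_singleton he0, hK] at hfr
    obtain ⟨b, hb, hbK, hbW⟩ := ih (Lᗮ ⊓ K) (fun j => W j ⊓ (Lᗮ ⊓ K)) (by omega)
      (fun i j hij => inf_le_inf_right _ (hW hij)) (fun j => inf_le_right)
    have hbe : ∀ i, ⟪e, b i⟫ = 0 := fun i =>
      Submodule.mem_orthogonal_singleton_iff_inner_right.1 (hbK i).1
    refine ⟨Fin.cons e b, ⟨?_, ?_⟩, ?_, ?_⟩
    · intro i
      refine Fin.cases ?_ (fun i => ?_) i
      · simpa using he1
      · simpa using hb.1 i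
    · intro i j
      refine Fin.cases ?_ (fun i => ?_) i <;> refine Fin.cases ?_ (fun j => ?_) j
      · simp
      · intro _; simpa using hbe j
      · intro _; simpa [real_inner_comm] using hbe i
      · intro hij
        simpa using hb.2 (fun h => hij (by rw [h]))
    · intro i
      refine Fin.cases ?_ (fun i => ?_) i
      · simpa using heK
      · simpa using (hbK i).2
    · intro j i hi
      by_cases hj : W j = K
      · rw [hj]
        refine Fin.cases ?_ (fun i => ?_) i
        · simpa using heK
        · simpa using (hbK i).2
      · have hlt := Submodule.finrank_lt_finrank_of_lt (lt_of_le_of_ne (hWK j) hj)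
        have hle : W j ≤ Lᗮ ⊓ K := by
          refine le_inf (fun x hx => ?_) (hWK j)
          rw [Submodule.mem_orthogonal_singleton_iff_inner_left]
          exact heM x (hM j hj hx)
        revert hi
        refine Fin.cases ?_ (fun i => ?_) i
        · intro hi
          simp only [Fin.val_zero] at hi
          omega
        · intro hi
          have := hbW j i (by
            have hq : W j ⊓ (Lᗮ ⊓ K) = W j := inf_eq_left.2 hle
            change m - Module.finrank ℝ ↥(W j ⊓ (Lᗮ ⊓ K)) ≤ _
            rw [hq]
            simp only [Fin.val_succ] at hi
            omega)
          simpa using this.1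

theorem statement5
    {H : Type*} [NormedAddCommGroup H] [InnerProductSpace ℝ H]
    (ℓ m : ℕ) (hℓ : 0 < ℓ)
    (V : Fin ℓ → Submodule ℝ H)
    (hdec : ∀ i j : Fin ℓ, i ≤ j → V j ≤ V i)
    (hnt : ∀ j, V j ≠ ⊥)
    (hfd : ∀ j, FiniteDimensional ℝ (V j))
    (v : Fin m → H) (hli : LinearIndependent ℝ v)
    (hsp : Submodule.span ℝ (Set.range v) = V ⟨0, hℓ⟩) :
    ∃ u : Fin m → H,
      LinearIndependent ℝ u ∧
      (∀ j : Fin ℓ,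
        Submodule.span ℝ (u '' { i : Fin m | m - Module.finrank ℝ (V j) ≤ (i : ℕ) }) = V j) ∧
      ∀ x y : H, ∑ i, ⟪x, v i⟫ * ⟪v i, y⟫ = ∑ i, ⟪x, u i⟫ * ⟪u i, y⟫ := by
  classical
  let T : EuclideanSpace ℝ (Fin m) →ₗ[ℝ] H :=
    (Fintype.linearCombination ℝ v) ∘ₗ (WithLp.linearEquiv 2 ℝ (Fin m → ℝ)).toLinearMap
  have hT : ∀ c, T c = ∑ i, c i • v i := fun c => by
    simp [T, Fintype.linearCombination_apply]
  have hTinj : Function.Injective T := by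
    have := hli.fintypeLinearCombination_injective
    exact this.comp (WithLp.linearEquiv 2 ℝ (Fin m → ℝ)).injective
  have hTr : LinearMap.range T = V ⟨0, hℓ⟩ := by
    rw [← hsp, ← Fintype.range_linearCombination]
    exact LinearMap.range_comp_of_range_eq_top _ (LinearEquiv.range _)
  have hV0 : ∀ j, V j ≤ LinearMap.range T := fun j => by
    rw [hTr]; exact hdec _ _ (Fin.mk_le_of_le_val (Nat.zero_le _))
  have hmap : ∀ j, ((V j).comap T).map T = V j := fun j => by
    rw [Submodule.map_comap_eq, inf_eq_right.2 (hV0 j)]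
  have hfin : ∀ j, Module.finrank ℝ ((V j).comap T) = Module.finrank ℝ (V j) := fun j => by
    conv_rhs => rw [← hmap j]
    exact (Submodule.equivMapOfInjective T hTinj _).finrank_eq
  obtain ⟨b, hb, -, hbW⟩ := adapted_aux ℓ m (⊤ : Submodule ℝ (EuclideanSpace ℝ (Fin m)))
    (fun j => (V j).comap T) (by simp) (fun i j hij => Submodule.comap_mono (hdec i j hij))
    (fun _ => le_top)
  have hu : LinearIndependent ℝ (fun i => T (b i)) :=
    hb.linearIndependent.map' T (LinearMap.ker_eq_bot.2 hTinj)
  refine ⟨fun i => T (b i), hu, ?_, ?_⟩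
  · intro j
    have := hfd j
    apply Submodule.eq_of_le_of_finrank_le
    · rw [Submodule.span_le]
      rintro _ ⟨i, hi, rfl⟩
      exact hbW j i (by rw [hfin]; exact hi)
    · have hdm : Module.finrank ℝ (V j) ≤ m := by
        rw [← hfin]
        simpa using Submodule.finrank_le ((V j).comap T)
      set d := Module.finrank ℝ (V j)
      have hli2 : LinearIndependent ℝ
          (fun k : Fin d => T (b ⟨m - d + k, by omega⟩)) :=
        hu.comp (fun k : Fin d => (⟨m - d + k, by omega⟩ : Fin m)) (fun k l h => by
          have := congrArg Fin.val h
          simp only at this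
          exact Fin.ext (by omega))
      have h2 := finrank_span_eq_card hli2
      rw [Fintype.card_fin] at h2
      refine h2.symm.le.trans ?_
      have : FiniteDimensional ℝ (Submodule.span ℝ ((fun i => T (b i)) ''
          { i : Fin m | m - d ≤ (i : ℕ) })) :=
        FiniteDimensional.span_of_finite ℝ (Set.toFinite _)
      apply Submodule.finrank_mono
      apply Submodule.span_mono
      rintro _ ⟨k, rfl⟩
      exact ⟨⟨m - d + k, by omega⟩, by simp; omega, rfl⟩
  · intro x y
    let A : H → EuclideanSpace ℝ (Fin m) := fun x => WithLp.toLp 2 (fun i => ⟪v i, x⟫)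
    have hA : ∀ c x, ⟪T c, x⟫ = ⟪c, A x⟫ := fun c x => by
      rw [hT, sum_inner, PiLp.inner_apply]
      simp [A, real_inner_smul_left, mul_comm]
    have hspan : ⊤ ≤ Submodule.span ℝ (Set.range b) := by
      rw [hb.linearIndependent.span_eq_top_of_card_eq_finrank' (by simp)]
    let B : OrthonormalBasis (Fin m) ℝ (EuclideanSpace ℝ (Fin m)) := OrthonormalBasis.mk hb hspan
    have h1 := B.sum_inner_mul_inner (A x) (A y)
    have hB : ∀ i, B i = b i := fun i => by simp [B]
    have h2 : ∑ i, ⟪x, v i⟫ * ⟪v i, y⟫ = ⟪A x, A y⟫ := by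
      rw [PiLp.inner_apply]
      simp [A, real_inner_comm, mul_comm]
    rw [h2, ← h1]
    refine Finset.sum_congr rfl fun i _ => ?_
    rw [hB, hA, real_inner_comm (T (b i)) x, hA, real_inner_comm (b i) (A x)]
end
end

section
/- Let H be a finite-dimensional real Hilbert space and let v₁,…,v_m and w₁,…,w_m be two linearly independent families of vectors in H. Then the following are equivalent: (1) Σ_{i=1}^m ⟨x, v_i⟩⟨v_i, y⟩ = Σ_{i=1}^m ⟨x, w_i⟩⟨w_i, y⟩ for all x, y ∈ H; (2) for every integer k ≥ 1 and every k-linear functional L : H^k → ℝ, Σ_{i₁,…,i_k=1}^m |L(v_{i₁},…,v_{i_k})|² = Σ_{i₁,…,i_k=1}^m |L(w_{i₁},…,w_{i_k})|²; (3) there exists an m×m real orthogonal matrix O such that v_i = Σ_{j=1}^m O_{ij} w_j for every i ∈ {1,…,m}. -/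
noncomputable section

open Matrix
open scoped BigOperators RealInnerProductSpace

theorem aux32 {H : Type*} [NormedAddCommGroup H] [InnerProductSpace ℝ H]
    (m : ℕ) (v w : Fin m → H) (O : Matrix (Fin m) (Fin m) ℝ) (hO : Oᵀ * O = 1)
    (h : ∀ i, v i = ∑ j, O i j • w j) (k : ℕ)
    (L : MultilinearMap ℝ (fun _ : Fin k => H) ℝ) :
    ∑ I : Fin k → Fin m, |L (fun j => v (I j))| ^ 2 =
      ∑ I : Fin k → Fin m, |L (fun j => w (I j))| ^ 2 := by
  have hO' : ∀ a b, ∑ i, O i a * O i b = if a = b then 1 else 0 := by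
    intro a b
    have := congrFun (congrFun hO a) b
    simpa [Matrix.mul_apply, Matrix.one_apply] using this
  have hP : ∀ J K : Fin k → Fin m,
      ∑ I : Fin k → Fin m, (∏ j, O (I j) (J j)) * (∏ j, O (I j) (K j)) =
        if J = K then 1 else 0 := by
    intro J K
    simp_rw [← Finset.prod_mul_distrib]
    rw [← Fintype.prod_sum (fun j i => O i (J j) * O i (K j))]
    simp_rw [hO']
    split_ifs with hJ
    · simp [hJ]
    · obtain ⟨j, hj⟩ := Function.ne_iff.mp hJ
      exact Finset.prod_eq_zero (Finset.mem_univ j) (by simp [hj])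
  have hL : ∀ I : Fin k → Fin m, L (fun j => v (I j)) =
      ∑ J : Fin k → Fin m, (∏ j, O (I j) (J j)) * L (fun j => w (J j)) := by
    intro I
    simp_rw [h]
    rw [MultilinearMap.map_sum]
    refine Finset.sum_congr rfl fun J _ => ?_
    rw [MultilinearMap.map_smul_univ L (fun j => O (I j) (J j)) (fun j => w (J j)), smul_eq_mul]
  simp_rw [sq_abs, hL, sq, Finset.sum_mul_sum]
  rw [Finset.sum_comm]
  refine Finset.sum_congr rfl fun J _ => ?_
  rw [Finset.sum_comm]
  have : ∀ K : Fin k → Fin m, ∑ I : Fin k → Fin m,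
      (∏ j, O (I j) (J j)) * L (fun j => w (J j)) * ((∏ j, O (I j) (K j)) * L (fun j => w (K j)))
      = (if J = K then 1 else 0) * (L (fun j => w (J j)) * L (fun j => w (K j))) := by
    intro K
    rw [← hP, Finset.sum_mul]
    exact Finset.sum_congr rfl fun I _ => by ring
  simp_rw [this]
  simp

theorem aux21 {H : Type*} [NormedAddCommGroup H] [InnerProductSpace ℝ H]
    (m : ℕ) (v w : Fin m → H)
    (h : ∀ L : MultilinearMap ℝ (fun _ : Fin 1 => H) ℝ,
        ∑ I : Fin 1 → Fin m, |L (fun j => v (I j))| ^ 2 =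
          ∑ I : Fin 1 → Fin m, |L (fun j => w (I j))| ^ 2) (x y : H) :
    ∑ i, ⟪x, v i⟫ * ⟪v i, y⟫ = ∑ i, ⟪x, w i⟫ * ⟪w i, y⟫ := by
  have hq : ∀ z : H, ∑ i, ⟪z, v i⟫ ^ 2 = ∑ i, ⟪z, w i⟫ ^ 2 := by
    intro z
    have := h (MultilinearMap.ofSubsingleton ℝ H ℝ (0 : Fin 1) (innerₛₗ ℝ z))
    rw [← (Equiv.funUnique (Fin 1) (Fin m)).symm.sum_comp,
      ← (Equiv.funUnique (Fin 1) (Fin m)).symm.sum_comp] at this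
    simpa using this
  have e : ∀ u : Fin m → H, ∑ i, ⟪x, u i⟫ * ⟪u i, y⟫ =
      (∑ i, ⟪x + y, u i⟫ ^ 2 - ∑ i, ⟪x, u i⟫ ^ 2 - ∑ i, ⟪y, u i⟫ ^ 2) / 2 := by
    intro u
    rw [← Finset.sum_sub_distrib, ← Finset.sum_sub_distrib, Finset.sum_div]
    refine Finset.sum_congr rfl fun i _ => ?_
    rw [inner_add_left, real_inner_comm y (u i)]
    ring
  rw [e, e, hq, hq, hq]

theorem aux13 {H : Type*} [NormedAddCommGroup H] [InnerProductSpace ℝ H] [FiniteDimensional ℝ H]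
    (m : ℕ) (v w : Fin m → H) (hw : LinearIndependent ℝ w)
    (h : ∀ x y : H, ∑ i, ⟪x, v i⟫ * ⟪v i, y⟫ = ∑ i, ⟪x, w i⟫ * ⟪w i, y⟫) :
    ∃ O : Matrix (Fin m) (Fin m) ℝ, Oᵀ * O = 1 ∧ ∀ i, v i = ∑ j, O i j • w j := by
  have hmem : ∀ i, v i ∈ Submodule.span ℝ (Set.range w) := by
    intro i
    rw [← Submodule.orthogonal_orthogonal (Submodule.span ℝ (Set.range w)),
      Submodule.mem_orthogonal]
    intro x hx
    rw [Submodule.mem_orthogonal'] at hx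
    have hz : ∀ j, ⟪x, w j⟫ = 0 := fun j => hx _ (Submodule.subset_span ⟨j, rfl⟩)
    have h1 := h x x
    simp only [hz, zero_mul, Finset.sum_const_zero] at h1
    rw [Finset.sum_eq_zero_iff_of_nonneg] at h1
    · have := h1 i (Finset.mem_univ i)
      rw [real_inner_comm] at this
      simpa [real_inner_comm] using this
    · intro j _
      rw [real_inner_comm x (v j)]
      exact mul_self_nonneg _
  have hc : ∀ i, ∃ c : Fin m → ℝ, ∑ j, c j • w j = v i := fun i =>
    (Submodule.mem_span_range_iff_exists_fun ℝ).mp (hmem i)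
  choose O hO using hc
  have hd : ∀ a : Fin m, ∃ x : H, ∀ j, ⟪x, w j⟫ = if a = j then 1 else 0 := by
    intro a
    obtain ⟨g, hg⟩ := LinearMap.exists_leftInverse_of_injective
      (Fintype.linearCombination ℝ w) (LinearMap.ker_eq_bot.mpr hw.fintypeLinearCombination_injective)
    refine ⟨(InnerProductSpace.toDual ℝ H).symm
      (LinearMap.toContinuousLinearMap ((LinearMap.proj a).comp g)), fun j => ?_⟩
    rw [InnerProductSpace.toDual_symm_apply]
    have := congrFun (LinearMap.congr_fun hg (Pi.single j 1)) a
    simpa [Fintype.linearCombination_apply_single, Pi.single_apply] using this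
  choose d hd using hd
  refine ⟨O, ?_, fun i => (hO i).symm⟩
  have hdv : ∀ a i, ⟪d a, v i⟫ = O i a := by
    intro a i
    rw [← hO, inner_sum]
    simp [inner_smul_right, hd]
  ext a b
  have := h (d a) (d b)
  simp_rw [fun i => real_inner_comm (d b) (v i), fun i => real_inner_comm (d b) (w i), hdv, hd]
    at this
  refine (Matrix.mul_apply (M := Oᵀ) (N := O)).trans (this.trans ?_)
  rw [Matrix.one_apply]
  simp [eq_comm]

theorem statement7
    {H : Type*} [NormedAddCommGroup H] [InnerProductSpace ℝ H] [FiniteDimensional ℝ H]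
    (m : ℕ) (v w : Fin m → H)
    (hv : LinearIndependent ℝ v) (hw : LinearIndependent ℝ w) :
    ((∀ x y : H, ∑ i, ⟪x, v i⟫ * ⟪v i, y⟫ = ∑ i, ⟪x, w i⟫ * ⟪w i, y⟫) ↔
      (∀ k : ℕ, 1 ≤ k → ∀ L : MultilinearMap ℝ (fun _ : Fin k => H) ℝ,
        ∑ I : Fin k → Fin m, |L (fun j => v (I j))| ^ 2 =
          ∑ I : Fin k → Fin m, |L (fun j => w (I j))| ^ 2)) ∧
    ((∀ x y : H, ∑ i, ⟪x, v i⟫ * ⟪v i, y⟫ = ∑ i, ⟪x, w i⟫ * ⟪w i, y⟫) ↔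
      (∃ O : Matrix (Fin m) (Fin m) ℝ, Oᵀ * O = 1 ∧
        ∀ i, v i = ∑ j, O i j • w j)) := by
  have h13 := aux13 m v w hw
  have h21 := aux21 m v w
  refine ⟨⟨fun h => ?_, fun h => h21 (h 1 le_rfl)⟩, ⟨h13, ?_⟩⟩
  · obtain ⟨O, hO, hvw⟩ := h13 h
    exact fun k _ L => aux32 m v w O hO hvw k L
  · rintro ⟨O, hO, hvw⟩
    exact h21 (aux32 m v w O hO hvw 1)
end
end

section
/- Let U ⊆ ℝ^d be open and connected and let f : U → ℝ be a real analytic function. Then f is a Nash function on U (i.e., there exist an algebraic lifting map Φ : U → ℝ^M with annihilating map p and a real polynomial F on ℝ^d × ℝ^M with f(x) = F(x, Φ(x)) for all x ∈ U) if and only if there exists a real polynomial q(x, z) in d+1 variables, whose partial derivative ∂q/∂z is not the zero polynomial, such that q(x, f(x)) = 0 for all x ∈ U. -/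
noncomputable section

open scoped BigOperators

namespace StatementTen

/-- `Φ` is an algebraic lifting map on `U` with annihilating polynomial map `p`. -/
def IsAlgLift (d M : ℕ) (U : Set (Fin d → ℝ)) (Φ : (Fin d → ℝ) → Fin M → ℝ)
    (p : Fin M → MvPolynomial (Fin d ⊕ Fin M) ℝ) : Prop :=
  AnalyticOnNhd ℝ Φ U ∧
  (∀ x ∈ U, ∀ j, MvPolynomial.eval (Sum.elim x (Φ x)) (p j) = 0) ∧
  (∀ V : Set (Fin d → ℝ), IsOpen V → V ⊆ U → V.Nonempty →
    ∃ x ∈ V, Matrix.det (Matrix.of fun j j' : Fin M =>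
      MvPolynomial.eval (Sum.elim x (Φ x)) (MvPolynomial.pderiv (Sum.inr j') (p j))) ≠ 0)

/-- `f` lifts to the polynomial `F` via the algebraic lifting map `Φ` with
annihilating map `p`. -/
def IsNashRep (d M : ℕ) (U : Set (Fin d → ℝ)) (f : (Fin d → ℝ) → ℝ)
    (Φ : (Fin d → ℝ) → Fin M → ℝ)
    (p : Fin M → MvPolynomial (Fin d ⊕ Fin M) ℝ)
    (F : MvPolynomial (Fin d ⊕ Fin M) ℝ) : Prop :=
  IsAlgLift d M U Φ p ∧ ∀ x ∈ U, f x = MvPolynomial.eval (Sum.elim x (Φ x)) F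

/-- `f` is a Nash function on `U`. -/
def IsNash (d : ℕ) (U : Set (Fin d → ℝ)) (f : (Fin d → ℝ) → ℝ) : Prop :=
  ∃ (M : ℕ) (Φ : (Fin d → ℝ) → Fin M → ℝ)
    (p : Fin M → MvPolynomial (Fin d ⊕ Fin M) ℝ)
    (F : MvPolynomial (Fin d ⊕ Fin M) ℝ), IsNashRep d M U f Φ p F

open Classical in
/-- The complexity of a Nash function: the minimum of `deg F · deg p¹ ⋯ deg p^M`
over all representations; the zero function has complexity `0`. -/
def complexity (d : ℕ) (U : Set (Fin d → ℝ)) (f : (Fin d → ℝ) → ℝ) : ℕ :=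
  if ∀ x ∈ U, f x = 0 then 0
  else sInf { c : ℕ | ∃ (M : ℕ) (Φ : (Fin d → ℝ) → Fin M → ℝ)
    (p : Fin M → MvPolynomial (Fin d ⊕ Fin M) ℝ)
    (F : MvPolynomial (Fin d ⊕ Fin M) ℝ), IsNashRep d M U f Φ p F ∧
    c = F.totalDegree * ∏ j, (p j).totalDegree }

section Helpers

open MvPolynomial

theorem deriv_aeval {k K L N σ : Type*} [Field k] [Field K] [Field L] [Algebra k K] [Algebra k L]
    [Algebra K L] [IsScalarTower k K L] [AddCommGroup N] [Module K N] [Module L N]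
    [Fintype σ] (D : Derivation K L N) (z : σ → L) (p : MvPolynomial σ k) :
    D (aeval z p) = ∑ i, aeval z (pderiv i p) • D (z i) := by
  classical
  induction p using MvPolynomial.induction_on with
  | C a => 
    rw [aeval_C, IsScalarTower.algebraMap_apply k K L]
    simp
  | add p q hp hq => simp [hp, hq, add_smul, Finset.sum_add_distrib]
  | mul_X p j h =>
    have : ∀ i, (aeval z (pderiv i (p * X j))) • D (z i)
        = (if j = i then aeval z p • D (z i) else 0) + z j • (aeval z (pderiv i p) • D (z i)) := by
      intro i
      rw [pderiv_mul, pderiv_X]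
      by_cases hij : j = i
      · subst hij
        simp only [Pi.single_eq_same, map_add, map_mul, aeval_X, mul_one, add_smul, if_true,
          smul_smul]
        rw [add_comm, mul_comm]
      · simp [hij, smul_smul, mul_comm]
    rw [Finset.sum_congr rfl fun i _ => this i, Finset.sum_add_distrib, Finset.sum_ite_eq,
      ← Finset.smul_sum, map_mul, aeval_X, Derivation.leibniz, h]
    simp

theorem algA {k K L σ : Type*} {M : ℕ} [Field k] [Field K] [Field L] [Algebra k K] [Algebra k L]
    [Algebra K L] [IsScalarTower k K L] [CharZero K] [Fintype σ] (x : σ → K) (y : Fin M → L)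
    (p : Fin M → MvPolynomial (σ ⊕ Fin M) k)
    (hy : IntermediateField.adjoin K (Set.range y) = ⊤)
    (hp : ∀ j, aeval (Sum.elim (fun i => algebraMap K L (x i)) y) (p j) = 0)
    (hdet : Matrix.det (Matrix.of fun j j' : Fin M =>
      aeval (Sum.elim (fun i => algebraMap K L (x i)) y) (pderiv (Sum.inr j') (p j))) ≠ 0) :
    Algebra.IsAlgebraic K L := by
  have : Algebra.EssFiniteType K L := by
    rw [← IntermediateField.fg_top_iff, ← hy]
    exact IntermediateField.fg_adjoin_of_finite (Set.finite_range y)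
  set J := (Matrix.of fun j j' : Fin M =>
      aeval (Sum.elim (fun i => algebraMap K L (x i)) y) (pderiv (Sum.inr j') (p j))) with hJ
  let D := KaehlerDifferential.D K L
  have h1 : ∀ j, ∑ j', J j j' • D (y j') = 0 := by
    intro j
    have := deriv_aeval D (Sum.elim (fun i => algebraMap K L (x i)) y) (p j)
    rw [hp, map_zero, Fintype.sum_sum_type] at this
    simpa [hJ] using this.symm
  have h2 : ∀ i, D (y i) = 0 := by
    intro i
    have h3 : ∑ j, J.adjugate i j • ∑ j', J j j' • D (y j') = 0 := by simp [h1]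
    simp only [Finset.smul_sum, smul_smul] at h3
    rw [Finset.sum_comm] at h3
    simp only [← Finset.sum_smul] at h3
    have h4 : ∀ l, ∑ j, J.adjugate i j * J j l = J.det * (1 : Matrix (Fin M) (Fin M) L) i l := by
      intro l
      rw [← Matrix.mul_apply, Matrix.adjugate_mul, Matrix.smul_apply, smul_eq_mul]
    simp only [h4, Matrix.one_apply, mul_ite, mul_one, mul_zero, ite_smul, zero_smul,
      Finset.sum_ite_eq, Finset.mem_univ, if_true] at h3
    exact (smul_eq_zero.mp h3).resolve_left hdet
  have h5 : ∀ a : L, D a = 0 := by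
    intro a
    have ha : a ∈ IntermediateField.adjoin K (Set.range y) := by rw [hy]; trivial
    induction ha using IntermediateField.adjoin_induction with
    | mem a ha => obtain ⟨i, rfl⟩ := ha; exact h2 i
    | algebraMap a => simp
    | add a b _ _ ha hb => simp [ha, hb]
    | inv a _ ha => rw [Derivation.leibniz_inv, ha, smul_zero]
    | mul a b _ _ ha hb => simp [ha, hb]
  have h6 : Algebra.FormallyUnramified K L := by
    rw [Algebra.formallyUnramified_iff]
    refine ⟨fun a b => ?_⟩
    have : (⊤ : Submodule L (Ω[L⁄K])) = ⊥ := by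
      rw [← KaehlerDifferential.span_range_derivation, Submodule.span_eq_bot]
      rintro _ ⟨c, rfl⟩
      exact h5 c
    have h7 : ∀ a : Ω[L⁄K], a = 0 := fun a => by
      rw [← Submodule.mem_bot L, ← this]; trivial
    rw [h7 a, h7 b]
  have := (Algebra.FormallyUnramified.isSeparable K L)
  infer_instance

open scoped IntermediateField.algebraAdjoinAdjoin in
theorem algB {k L σ : Type*} {M : ℕ} [Field k] [Field L] [Algebra k L]
    [CharZero k] [Fintype σ] (x : σ → L) (y : Fin M → L)
    (p : Fin M → MvPolynomial (σ ⊕ Fin M) k) (F : MvPolynomial (σ ⊕ Fin M) k)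
    (hp : ∀ j, aeval (Sum.elim x y) (p j) = 0)
    (hdet : Matrix.det (Matrix.of fun j j' : Fin M =>
      aeval (Sum.elim x y) (pderiv (Sum.inr j') (p j))) ≠ 0) :
    IsAlgebraic (Algebra.adjoin k (Set.range x)) (aeval (Sum.elim x y) F : L) := by
  let K := IntermediateField.adjoin k (Set.range x)
  let E := IntermediateField.adjoin K (Set.range y)
  let x' : σ → K := fun i => ⟨x i, IntermediateField.subset_adjoin _ _ ⟨i, rfl⟩⟩
  let y' : Fin M → E := fun i => ⟨y i, IntermediateField.subset_adjoin _ _ ⟨i, rfl⟩⟩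
  let φ : E →ₐ[k] L := (E.val).restrictScalars k
  have hφ : Function.Injective φ := φ.toRingHom.injective
  have hz : ∀ q : MvPolynomial (σ ⊕ Fin M) k, φ (aeval (Sum.elim (fun i => algebraMap K E (x' i)) y') q) =
      aeval (Sum.elim x y) q := by
    intro q
    rw [← AlgHom.comp_apply, MvPolynomial.comp_aeval]
    congr 2
    ext i
    rcases i with i | i <;> rfl
  have : CharZero K := charZero_of_injective_algebraMap (algebraMap k K).injective
  have hE : Algebra.IsAlgebraic K E := by
    refine algA x' y' p ?_ ?_ ?_
    · apply IntermediateField.lift_injective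
      rw [IntermediateField.lift_adjoin, IntermediateField.lift_top, ← Set.range_comp]
      rfl
    · intro j
      apply hφ
      rw [hz, hp, map_zero]
    · intro h
      apply hdet
      have := congrArg φ h
      rw [map_zero, AlgHom.map_det] at this
      rw [← this]
      congr 1
      ext i j
      simp only [AlgHom.mapMatrix_apply, Matrix.map_apply, Matrix.of_apply, hz]
  rw [← hz]
  have h8 : IsAlgebraic K (φ (aeval (Sum.elim (fun i => algebraMap K E (x' i)) y') F)) :=
    (hE.isAlgebraic _).algHom E.val
  exact (IsFractionRing.isAlgebraic_iff (Algebra.adjoin k (Set.range x)) K L).mpr h8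

theorem poly_zero {d : ℕ} {U : Set (Fin d → ℝ)} (hU : IsOpen U) (hne : U.Nonempty)
    (a : MvPolynomial (Fin d) ℝ) (h : ∀ x ∈ U, eval x a = 0) : a = 0 := by
  obtain ⟨x, hx⟩ := hne
  obtain ⟨e, he, hball⟩ := Metric.isOpen_iff.mp hU x hx
  refine funext_set (fun i => Metric.ball (x i) e) (fun i => ?_) fun z hz => ?_
  · rw [Real.ball_eq_Ioo]
    exact Set.Ioo_infinite (by linarith)
  · rw [map_zero]
    apply h
    apply hball
    rw [ball_pi _ he]
    exact hz

theorem q_zero {d : ℕ} {U : Set (Fin d → ℝ)} (hU : IsOpen U) (hne : U.Nonempty)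
    (f : (Fin d → ℝ) → ℝ) (q : MvPolynomial (Fin (d + 1)) ℝ)
    (hd : pderiv (Fin.last d) q = 0)
    (h : ∀ x ∈ U, eval (Fin.snoc x (f x) : Fin (d + 1) → ℝ) q = 0) : q = 0 := by
  classical
  have hv : Fin.last d ∉ q.vars := by
    rw [mem_vars_iff_mem_support]
    rintro ⟨m, hm, hl⟩
    rw [Finsupp.mem_support_iff] at hl
    have h1 := coeff_pderiv (i := Fin.last d) q (m - Finsupp.single (Fin.last d) 1)
    have h2 : m - Finsupp.single (Fin.last d) 1 + Finsupp.single (Fin.last d) 1 = m :=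
      tsub_add_cancel_of_le (by
        rw [Finsupp.single_le_iff]; omega)
    rw [hd, coeff_zero, h2] at h1
    rw [mem_support_iff] at hm
    have h3 : ((((m - Finsupp.single (Fin.last d) 1 : Fin (d + 1) →₀ ℕ) (Fin.last d) : ℕ) : ℝ) + 1) ≠ 0 := by positivity
    exact (mul_ne_zero hm h3) h1.symm
  obtain ⟨a, rfl⟩ := exists_rename_eq_of_vars_subset_range q Fin.castSucc
    (Fin.castSucc_injective d) (by
      intro i hi
      exact ⟨i.castPred (fun h0 => hv (h0 ▸ hi)), Fin.castSucc_castPred _ _⟩)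
  rw [poly_zero hU hne a, map_zero]
  intro x hx
  have := h x hx
  rw [eval_rename] at this
  have hc : (Fin.snoc x (f x) : Fin (d + 1) → ℝ) ∘ Fin.castSucc = x := by
    ext i
    simp
  rwa [hc] at this

theorem iter_zero {σ : Type*} (i : σ) (n : ℕ) : ∀ q : MvPolynomial σ ℝ,
    (∀ m, n ≤ m i → coeff m q = 0) → (pderiv i)^[n] q = 0 := by
  induction n with
  | zero => 
    intro q h
    ext m
    simp [h]
  | succ n ih =>
    intro q h
    rw [Function.iterate_succ_apply]
    apply ih
    intro m hm
    rw [coeff_pderiv, h _ (by simpa using hm), zero_mul]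

theorem analytic_snoc {d : ℕ} {U : Set (Fin d → ℝ)}
    (f : (Fin d → ℝ) → ℝ) (hf : AnalyticOnNhd ℝ f U) (q : MvPolynomial (Fin (d + 1)) ℝ) :
    AnalyticOnNhd ℝ (fun x => eval (Fin.snoc x (f x) : Fin (d + 1) → ℝ) q) U := by
  have := AnalyticOnNhd.aeval_mvPolynomial (𝕜 := ℝ) (A := ℝ) (B := ℝ) (s := U)
    (f := fun x => (Fin.snoc x (f x) : Fin (d + 1) → ℝ)) (fun i => ?_) q
  · simpa [MvPolynomial.aeval_eq_eval] using this
  · refine Fin.lastCases ?_ (fun i => ?_) i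
    · simpa using hf
    · simp only [Fin.snoc_castSucc]
      exact fun x _ => (ContinuousLinearMap.proj (R := ℝ) (φ := fun _ : Fin d => ℝ) i).analyticAt x

theorem exists_good {d : ℕ} {U : Set (Fin d → ℝ)} (hU : IsOpen U) (hne : U.Nonempty)
    (f : (Fin d → ℝ) → ℝ) (q : MvPolynomial (Fin (d + 1)) ℝ)
    (hd : q ≠ 0)
    (h : ∀ x ∈ U, eval (Fin.snoc x (f x) : Fin (d + 1) → ℝ) q = 0) :
    ∃ p : MvPolynomial (Fin (d + 1)) ℝ,
      (∀ x ∈ U, eval (Fin.snoc x (f x) : Fin (d + 1) → ℝ) p = 0) ∧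
      ¬ (∀ x ∈ U, eval (Fin.snoc x (f x) : Fin (d + 1) → ℝ) (pderiv (Fin.last d) p) = 0) := by
  by_contra hcon
  push Not at hcon
  have h1 : ∀ n, ∀ x ∈ U, eval (Fin.snoc x (f x) : Fin (d + 1) → ℝ)
      ((pderiv (Fin.last d))^[n] q) = 0 := by
    intro n
    induction n with
    | zero => simpa using h
    | succ n ih =>
      simp only [Function.iterate_succ_apply']
      exact hcon _ ih
  have h2 : ∀ n, (pderiv (Fin.last d))^[n] q ≠ 0 := by
    intro n
    induction n with
    | zero => simpa using hd
    | succ n ih =>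
      intro h0
      rw [Function.iterate_succ_apply'] at h0
      exact ih (q_zero hU hne f _ h0 (h1 n))
  apply h2 (degreeOf (Fin.last d) q + 1)
  apply iter_zero
  intro m hm
  by_contra hc
  have := monomial_le_degreeOf (Fin.last d) (mem_support_iff.mpr hc)
  omega

theorem dir2 (d : ℕ) (U : Set (Fin d → ℝ)) (hUopen : IsOpen U)
    (hUconn : IsConnected U)
    (f : (Fin d → ℝ) → ℝ) (hf : AnalyticOnNhd ℝ f U) (q : MvPolynomial (Fin (d + 1)) ℝ)
    (hd : q ≠ 0)
    (h : ∀ x ∈ U, eval (Fin.snoc x (f x) : Fin (d + 1) → ℝ) q = 0) : 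
  ∃ (p : Fin 1 → MvPolynomial (Fin d ⊕ Fin 1) ℝ),
  (∀ x ∈ U, ∀ j, MvPolynomial.eval (Sum.elim x (fun _ => f x)) (p j) = 0) ∧
  (∀ V : Set (Fin d → ℝ), IsOpen V → V ⊆ U → V.Nonempty →
    ∃ x ∈ V, Matrix.det (Matrix.of fun j j' : Fin 1 =>
      MvPolynomial.eval (Sum.elim x (fun _ => f x)) (MvPolynomial.pderiv (Sum.inr j') (p j))) ≠ 0) := by
  obtain ⟨p, hp, hp'⟩ := exists_good hUopen hUconn.nonempty f q hd h
  let e : Fin (d + 1) → Fin d ⊕ Fin 1 := finSumFinEquiv.symm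
  have he : Function.Injective e := finSumFinEquiv.symm.injective
  have hcomp : ∀ x : Fin d → ℝ, (Sum.elim x (fun _ => f x)) ∘ e = (Fin.snoc x (f x) : Fin (d+1) → ℝ) := by
    intro x
    ext i
    refine Fin.lastCases ?_ (fun i => ?_) i
    · simp only [Function.comp, e, finSumFinEquiv_symm_last]; simp
    · simp only [Function.comp, e, finSumFinEquiv_symm_apply_castSucc]; simp
  refine ⟨fun _ => rename e p, fun x hx j => ?_, fun V hV hVU hVne => ?_⟩
  · rw [eval_rename, hcomp]; exact hp x hx
  · by_contra hcon
    push Not at hcon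
    apply hp'
    obtain ⟨x0, hx0⟩ := hVne
    refine (analytic_snoc f hf _).eqOn_zero_of_preconnected_of_eventuallyEq_zero
      hUconn.isPreconnected (hVU hx0) ?_
    filter_upwards [hV.mem_nhds hx0] with x hx
    have := hcon x hx
    have he0 : (Sum.inr 0 : Fin d ⊕ Fin 1) = e (Fin.last d) := finSumFinEquiv_symm_last.symm
    rw [Matrix.det_fin_one, Matrix.of_apply, he0, pderiv_rename he, eval_rename, hcomp] at this
    simpa using this

/-- The algebra of real analytic functions on `U`. -/
def anAlg {d : ℕ} (U : Set (Fin d → ℝ)) : Subalgebra ℝ (U → ℝ) where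
  carrier := {g | ∃ G : (Fin d → ℝ) → ℝ, AnalyticOnNhd ℝ G U ∧ ∀ u : U, g u = G u}
  mul_mem' := by
    rintro a b ⟨A, hA, ha⟩ ⟨B, hB, hb⟩
    exact ⟨fun x => A x * B x, hA.mul hB, fun u => by simp [ha, hb]⟩
  add_mem' := by
    rintro a b ⟨A, hA, ha⟩ ⟨B, hB, hb⟩
    exact ⟨fun x => A x + B x, hA.add hB, fun u => by simp [ha, hb]⟩
  algebraMap_mem' r := ⟨fun _ => r, analyticOnNhd_const, fun u => by simp⟩

theorem anAlg_domain {d : ℕ} {U : Set (Fin d → ℝ)} (hU : IsOpen U) (hc : IsConnected U) :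
    IsDomain (anAlg U) := by
  have : Nonempty U := hc.nonempty.to_subtype
  have : NoZeroDivisors (anAlg U) := by
    refine ⟨?_⟩
    rintro ⟨a, A, hA, ha⟩ ⟨b, B, hB, hb⟩ hab
    by_contra hcon
    push Not at hcon
    obtain ⟨h1, h2⟩ := hcon
    apply h2
    have h3 : ∃ u : U, a u ≠ 0 := by
      by_contra h4
      push Not at h4
      exact h1 (Subtype.ext (funext h4))
    obtain ⟨u, hu⟩ := h3
    rw [ha] at hu
    have hzero : Set.EqOn B 0 U := by
      refine hB.eqOn_zero_of_preconnected_of_eventuallyEq_zero hc.isPreconnected u.2 ?_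
      filter_upwards [hU.mem_nhds u.2, (hA u u.2).continuousAt.eventually_ne hu] with x hx hne
      have h5 : a ⟨x, hx⟩ * b ⟨x, hx⟩ = 0 := congrFun (congrArg Subtype.val hab) ⟨x, hx⟩
      rw [ha, hb] at h5
      exact (mul_eq_zero.mp h5).resolve_left hne
    apply Subtype.ext
    funext v
    change b v = 0
    rw [hb]
    exact hzero v.2
  have : Nontrivial (anAlg U) := inferInstance
  exact NoZeroDivisors.to_isDomain _

/-- Evaluation at a point. -/
def evAt {d : ℕ} {U : Set (Fin d → ℝ)} (u : U) : anAlg U →ₐ[ℝ] ℝ :=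
  (Pi.evalAlgHom ℝ (fun _ : U => ℝ) u).comp (anAlg U).val

theorem evAt_aeval {d : ℕ} {U : Set (Fin d → ℝ)} {σ : Type*} (u : U) (z : σ → anAlg U)
    (p : MvPolynomial σ ℝ) : evAt u (aeval z p) = eval (fun i => evAt u (z i)) p := by
  rw [← AlgHom.comp_apply, MvPolynomial.comp_aeval]
  rfl

theorem an_ext {d : ℕ} {U : Set (Fin d → ℝ)} {a b : anAlg U} (h : ∀ u, evAt u a = evAt u b) :
    a = b := Subtype.ext (funext h)

theorem dir1 (d M : ℕ) (U : Set (Fin d → ℝ)) (hUopen : IsOpen U)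
    (hUconn : IsConnected U)
    (f : (Fin d → ℝ) → ℝ) (hf : AnalyticOnNhd ℝ f U) 
    (Φ : (Fin d → ℝ) → Fin M → ℝ) (p : Fin M → MvPolynomial (Fin d ⊕ Fin M) ℝ)
    (F : MvPolynomial (Fin d ⊕ Fin M) ℝ) (hΦ : AnalyticOnNhd ℝ Φ U)
    (hp : ∀ x ∈ U, ∀ j, MvPolynomial.eval (Sum.elim x (Φ x)) (p j) = 0)
    (hdet : ∃ x ∈ U, Matrix.det (Matrix.of fun j j' : Fin M =>
      MvPolynomial.eval (Sum.elim x (Φ x)) (MvPolynomial.pderiv (Sum.inr j') (p j))) ≠ 0)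
    (hF : ∀ x ∈ U, f x = MvPolynomial.eval (Sum.elim x (Φ x)) F) :
    ∃ q : MvPolynomial (Fin (d + 1)) ℝ, q ≠ 0 ∧
        ∀ x ∈ U, MvPolynomial.eval (Fin.snoc x (f x) : Fin (d + 1) → ℝ) q = 0 := by
  have := anAlg_domain hUopen hUconn
  let L := FractionRing (anAlg U)
  let ι : anAlg U →ₐ[ℝ] L := IsScalarTower.toAlgHom ℝ (anAlg U) L
  have hι : Function.Injective ι := IsFractionRing.injective (anAlg U) L
  let x₀ : Fin d → anAlg U := fun i => ⟨fun u => u.1 i, fun x => x i,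
    fun x _ => (ContinuousLinearMap.proj (R := ℝ) (φ := fun _ : Fin d => ℝ) i).analyticAt x,
    fun _ => rfl⟩
  let y₀ : Fin M → anAlg U := fun i => ⟨fun u => Φ u.1 i, fun x => Φ x i,
    fun x hx => analyticAt_pi_iff.mp (hΦ x hx) i, fun _ => rfl⟩
  let f₀ : anAlg U := ⟨fun u => f u, f, hf, fun _ => rfl⟩
  have hcomp : ∀ q : MvPolynomial (Fin d ⊕ Fin M) ℝ,
      aeval (Sum.elim (fun i => ι (x₀ i)) (fun i => ι (y₀ i))) q = ι (aeval (Sum.elim x₀ y₀) q) := by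
    intro q
    rw [← AlgHom.comp_apply ι, MvPolynomial.comp_aeval]
    congr 2
    ext i
    rcases i with i | i <;> rfl
  have hev : ∀ (u : U) (q : MvPolynomial (Fin d ⊕ Fin M) ℝ),
      evAt u (aeval (Sum.elim x₀ y₀) q) = eval (Sum.elim u.1 (Φ u.1)) q := by
    intro u q
    rw [evAt_aeval]
    congr 2
    ext i
    rcases i with i | i <;> rfl
  have halg := algB (fun i => ι (x₀ i)) (fun i => ι (y₀ i)) p F
    (by
      intro j
      rw [hcomp, ← map_zero ι]
      congr 1
      apply an_ext
      intro u
      rw [hev, map_zero, hp u u.2])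
    (by
      intro h
      obtain ⟨x, hx, hne⟩ := hdet
      apply hne
      simp only [hcomp] at h
      have h1 : Matrix.det (Matrix.of fun j j' : Fin M =>
          aeval (Sum.elim x₀ y₀) (MvPolynomial.pderiv (Sum.inr j') (p j))) = 0 := by
        apply hι
        rw [map_zero, AlgHom.map_det, ← h]
        rfl
      have h2 := congrArg (evAt ⟨x, hx⟩) h1
      rw [map_zero, AlgHom.map_det] at h2
      rw [← h2]
      congr 1
      ext i j
      simp only [AlgHom.mapMatrix_apply, Matrix.map_apply, Matrix.of_apply, hev])
  have hfF : aeval (Sum.elim (fun i => ι (x₀ i)) (fun i => ι (y₀ i))) F = ι f₀ := by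
    rw [hcomp]
    congr 1
    apply an_ext
    intro u
    rw [hev, ← hF u u.2]
    rfl
  rw [hfF] at halg
  have hx : AlgebraicIndependent ℝ (fun i => ι (x₀ i)) := by
    rw [algebraicIndependent_iff]
    intro a ha
    apply poly_zero hUopen hUconn.nonempty
    intro x hx
    have h1 : aeval x₀ a = 0 := by
      apply hι
      rw [map_zero, ← ha, ← AlgHom.comp_apply ι, MvPolynomial.comp_aeval]
    have h2 := congrArg (evAt ⟨x, hx⟩) h1
    rw [evAt_aeval, map_zero] at h2
    exact h2
  have hnot : ¬ AlgebraicIndependent ℝ (fun o : Option (Fin d) => o.elim (ι f₀) (fun i => ι (x₀ i))) := by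
    rw [hx.option_iff_transcendental]
    exact fun h => h halg
  rw [algebraicIndependent_iff] at hnot
  push Not at hnot
  obtain ⟨q, hq, hq0⟩ := hnot
  let e : Option (Fin d) → Fin (d + 1) := (finSuccEquivLast (n := d)).symm
  refine ⟨rename e q, fun h => hq0 ?_, fun x hx => ?_⟩
  · exact rename_injective e (finSuccEquivLast (n := d)).symm.injective (by rw [h, map_zero])
  · rw [eval_rename]
    have h1 : aeval (fun o : Option (Fin d) => o.elim f₀ x₀) q = 0 := by
      apply hι
      rw [map_zero, ← hq, ← AlgHom.comp_apply ι, MvPolynomial.comp_aeval]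
      congr 2
      ext o
      cases o <;> rfl
    have h2 := congrArg (evAt ⟨x, hx⟩) h1
    rw [evAt_aeval, map_zero] at h2
    rw [← h2]
    congr 2
    ext o
    cases o with
    | none => simp [e]; rfl
    | some i => simp [e]; rfl

end Helpers

theorem statement10 (d : ℕ) (U : Set (Fin d → ℝ)) (hUopen : IsOpen U)
    (hUconn : IsConnected U)
    (f : (Fin d → ℝ) → ℝ) (hf : AnalyticOnNhd ℝ f U) :
    IsNash d U f ↔
      ∃ q : MvPolynomial (Fin (d + 1)) ℝ,
        MvPolynomial.pderiv (Fin.last d) q ≠ 0 ∧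
        ∀ x ∈ U, MvPolynomial.eval (Fin.snoc x (f x)) q = 0 := by
  constructor
  · rintro ⟨M, Φ, p, F, ⟨hΦ, hp, hdet⟩, hF⟩
    obtain ⟨q, hq, hq0⟩ := dir1 d M U hUopen hUconn f hf Φ p F hΦ hp
      (hdet U hUopen le_rfl hUconn.nonempty) hF
    exact ⟨q, fun h => hq (q_zero hUopen hUconn.nonempty f q h hq0), hq0⟩
  · rintro ⟨q, hq, hq0⟩
    obtain ⟨p, hp, hdet⟩ := dir2 d U hUopen hUconn f hf q
      (fun h => hq (by rw [h, map_zero])) hq0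
    refine ⟨1, fun x _ => f x, p, MvPolynomial.X (Sum.inr 0), ⟨?_, hp, hdet⟩, fun x _ => by simp⟩
    exact fun x hx => analyticAt_pi_iff.mpr fun _ => hf x hx

end StatementTen
end
end

section
/- Let U ⊆ ℝ^d be open and let f = (f₁,…,f_d) : U → ℝ^d be real analytic, where for each j ∈ {1,…,d} there are a real analytic map Φ_j : U → ℝ^{M_j}, a polynomial map p_j : ℝ^d × ℝ^{M_j} → ℝ^{M_j} with p_j(x, Φ_j(x)) = 0 for all x ∈ U, and a real polynomial F_j on ℝ^d × ℝ^{M_j} with f_j(x) = F_j(x, Φ_j(x)) for all x ∈ U. Define F̄(x, y₁,…,y_d) := (F₁(x,y₁),…,F_d(x,y_d), p₁(x,y₁),…,p_d(x,y_d)), a map from ℝ^d × ℝ^{M₁} × ⋯ × ℝ^{M_d} to itself. Then for every x ∈ U, the Jacobian determinant of F̄ with respect to all of its variables, evaluated at (x, Φ₁(x),…,Φ_d(x)), equals det D_x f(x) · ∏_{j=1}^d det D_{y_j} p_j(x, y_j)|_{y_j = Φ_j(x)}. -/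
noncomputable section

open scoped BigOperators

namespace Statement11

/-- The entries of the Jacobian matrix of the combined map
`F̄(x, y₁,…,y_d) = (F₁(x,y₁),…,F_d(x,y_d), p₁(x,y₁),…,p_d(x,y_d))`, with respect to all
of its variables, evaluated at the lifted point `(x, Φ₁(x),…,Φ_d(x))`. -/
def JacEntry (d : ℕ) (M : Fin d → ℕ)
    (Φ : (j : Fin d) → (Fin d → ℝ) → Fin (M j) → ℝ)
    (p : (j : Fin d) → Fin (M j) → MvPolynomial (Fin d ⊕ Fin (M j)) ℝ)
    (F : (j : Fin d) → MvPolynomial (Fin d ⊕ Fin (M j)) ℝ)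
    (x : Fin d → ℝ) :
    (Fin d ⊕ ((j : Fin d) × Fin (M j))) → (Fin d ⊕ ((j : Fin d) × Fin (M j))) → ℝ
  | Sum.inl i, Sum.inl i0 =>
      MvPolynomial.eval (Sum.elim x (Φ i x)) (MvPolynomial.pderiv (Sum.inl i0) (F i))
  | Sum.inl i, Sum.inr ⟨j, r⟩ =>
      if h : j = i then
        MvPolynomial.eval (Sum.elim x (Φ i x))
          (MvPolynomial.pderiv (Sum.inr (Fin.cast (congrArg M h) r)) (F i))
      else 0
  | Sum.inr ⟨j, rr⟩, Sum.inl i0 =>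
      MvPolynomial.eval (Sum.elim x (Φ j x)) (MvPolynomial.pderiv (Sum.inl i0) (p j rr))
  | Sum.inr ⟨j, rr⟩, Sum.inr ⟨j', r'⟩ =>
      if h : j' = j then
        MvPolynomial.eval (Sum.elim x (Φ j x))
          (MvPolynomial.pderiv (Sum.inr (Fin.cast (congrArg M h) r')) (p j rr))
      else 0

theorem hasFDerivAt_eval_aux {E σ : Type*} [NormedAddCommGroup E] [NormedSpace ℝ E]
    [Fintype σ] [DecidableEq σ]
    (g : E → σ → ℝ) (g' : σ → E →L[ℝ] ℝ) (x : E)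
    (hg : ∀ i, HasFDerivAt (fun z => g z i) (g' i) x) (q : MvPolynomial σ ℝ) :
    HasFDerivAt (fun z => MvPolynomial.eval (g z) q)
      (∑ i, MvPolynomial.eval (g x) (MvPolynomial.pderiv i q) • g' i) x := by
  induction q using MvPolynomial.induction_on with
  | C a =>
    simpa using hasFDerivAt_const (𝕜 := ℝ) a x
  | add a b ha hb =>
    have := ha.add hb
    simp only [map_add, add_smul, Finset.sum_add_distrib]
    exact this
  | mul_X a n ha =>
    have := ha.mul (hg n)
    have e : (fun z => MvPolynomial.eval (g z) (a * MvPolynomial.X n)) =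
        (fun z => MvPolynomial.eval (g z) a) * fun z => g z n := by
      ext z; simp
    rw [e]
    refine this.congr_fderiv ?_
    simp only [Derivation.leibniz, MvPolynomial.pderiv_X, map_add, smul_eq_mul, map_mul,
      MvPolynomial.eval_X, add_smul, Finset.sum_add_distrib, Finset.smul_sum, mul_smul]
    congr 1
    rw [Finset.sum_eq_single n]
    · simp
    · intro b _ hb
      simp [Pi.single_apply, hb.symm]
    · simp

theorem det_blockDiag_aux {o : Type*} [Fintype o] [LinearOrder o] {m : o → Type*}
    [∀ i, Fintype (m i)] [∀ i, DecidableEq (m i)] (D : (i : o) → Matrix (m i) (m i) ℝ) :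
    (Matrix.blockDiagonal' D).det = ∏ i, (D i).det := by
  have hb : (Matrix.blockDiagonal' D).BlockTriangular Sigma.fst := by
    rintro ⟨i, a⟩ ⟨j, b⟩ h
    exact Matrix.blockDiagonal'_apply_ne D a b (ne_of_gt h)
  rw [hb.det_fintype]
  refine Finset.prod_congr rfl fun k _ => ?_
  rw [← Matrix.det_submatrix_equiv_self (Equiv.sigmaSubtype k) (D k)]
  congr 1
  ext ⟨⟨i, a⟩, hi⟩ ⟨⟨j, b⟩, hj⟩
  dsimp at hi hj
  subst hi
  subst hj
  exact Matrix.blockDiagonal'_apply_eq D _ a b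

theorem chain_aux {d m : ℕ} (Φ : (Fin d → ℝ) → Fin m → ℝ) (x : Fin d → ℝ)
    (hΦ : DifferentiableAt ℝ Φ x) (q : MvPolynomial (Fin d ⊕ Fin m) ℝ) (i0 : Fin d) :
    fderiv ℝ (fun z => MvPolynomial.eval (Sum.elim z (Φ z)) q) x (Pi.single i0 1) =
      MvPolynomial.eval (Sum.elim x (Φ x)) (MvPolynomial.pderiv (Sum.inl i0) q) +
      ∑ r, MvPolynomial.eval (Sum.elim x (Φ x)) (MvPolynomial.pderiv (Sum.inr r) q) *
        fderiv ℝ Φ x (Pi.single i0 1) r := by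
  have h := hasFDerivAt_eval_aux (fun z : Fin d → ℝ => Sum.elim z (Φ z))
    (Sum.elim (fun i => ContinuousLinearMap.proj i)
      (fun r => (ContinuousLinearMap.proj r).comp (fderiv ℝ Φ x))) x
    (by
      rintro (i | r)
      · exact hasFDerivAt_apply i x
      · exact (hasFDerivAt_pi'.1 hΦ.hasFDerivAt) r) q
  rw [h.fderiv]
  simp [Fintype.sum_sum_type, Pi.single_apply]

theorem statement11 (d : ℕ) (hd : 0 < d) (U : Set (Fin d → ℝ)) (hU : IsOpen U)
    (M : Fin d → ℕ)
    (f : Fin d → (Fin d → ℝ) → ℝ)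
    (Φ : (j : Fin d) → (Fin d → ℝ) → Fin (M j) → ℝ)
    (p : (j : Fin d) → Fin (M j) → MvPolynomial (Fin d ⊕ Fin (M j)) ℝ)
    (F : (j : Fin d) → MvPolynomial (Fin d ⊕ Fin (M j)) ℝ)
    (hf : ∀ j, AnalyticOnNhd ℝ (f j) U)
    (hΦ : ∀ j, AnalyticOnNhd ℝ (Φ j) U)
    (hp : ∀ j, ∀ x ∈ U, ∀ r, MvPolynomial.eval (Sum.elim x (Φ j x)) (p j r) = 0)
    (hF : ∀ j, ∀ x ∈ U, f j x = MvPolynomial.eval (Sum.elim x (Φ j x)) (F j)) :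
    ∀ x ∈ U,
      Matrix.det (Matrix.of (JacEntry d M Φ p F x)) =
        Matrix.det (Matrix.of fun i i0 : Fin d => fderiv ℝ (f i) x (Pi.single i0 1)) *
          ∏ j : Fin d,
            Matrix.det (Matrix.of fun r r' : Fin (M j) =>
              MvPolynomial.eval (Sum.elim x (Φ j x))
                (MvPolynomial.pderiv (Sum.inr r') (p j r))) := by
  intro x hx
  have hUx : U ∈ nhds x := hU.mem_nhds hx
  have hd : ∀ j, DifferentiableAt ℝ (Φ j) x := fun j => (hΦ j x hx).differentiableAt
  let P : Matrix ((j : Fin d) × Fin (M j)) (Fin d) ℝ :=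
    Matrix.of fun s i0 => fderiv ℝ (Φ s.1) x (Pi.single i0 1) s.2
  let J := Matrix.of (JacEntry d M Φ p F x)
  let D : (j : Fin d) → Matrix (Fin (M j)) (Fin (M j)) ℝ := fun j =>
    Matrix.of fun r r' => MvPolynomial.eval (Sum.elim x (Φ j x))
                (MvPolynomial.pderiv (Sum.inr r') (p j r))
  have hD : J.toBlocks₂₂ = Matrix.blockDiagonal' D := by
    ext ⟨j, r⟩ ⟨j', r'⟩
    rw [Matrix.blockDiagonal'_apply]
    by_cases h : j = j'
    · subst h
      simp [J, D, JacEntry, Matrix.toBlocks₂₂]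
    · simp [J, JacEntry, Matrix.toBlocks₂₂, h, Ne.symm h]
  have h1 : J.toBlocks₁₁ + J.toBlocks₁₂ * P =
      Matrix.of fun i i0 : Fin d => fderiv ℝ (f i) x (Pi.single i0 1) := by
    ext i i0
    have e : f i =ᶠ[nhds x] fun z => MvPolynomial.eval (Sum.elim z (Φ i z)) (F i) := by
      filter_upwards [hUx] with z hz using hF i z hz
    rw [Matrix.of_apply, e.fderiv_eq, chain_aux _ _ (hd i)]
    rw [Matrix.add_apply, Matrix.mul_apply, Fintype.sum_sigma, Finset.sum_eq_single i]
    · simp [J, P, JacEntry, Matrix.toBlocks₁₁, Matrix.toBlocks₁₂]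
    · intro b _ hb
      simp [J, JacEntry, Matrix.toBlocks₁₂, hb]
    · simp
  have h2 : J.toBlocks₂₁ + J.toBlocks₂₂ * P = 0 := by
    ext ⟨j, r⟩ i0
    have e : (fun z => MvPolynomial.eval (Sum.elim z (Φ j z)) (p j r)) =ᶠ[nhds x]
        fun _ => (0 : ℝ) := by
      filter_upwards [hUx] with z hz using hp j z hz r
    have e2 := chain_aux _ _ (hd j) (p j r) i0
    rw [e.fderiv_eq] at e2
    rw [Matrix.add_apply, Matrix.mul_apply, Fintype.sum_sigma, Finset.sum_eq_single j]
    · simpa [J, P, JacEntry, Matrix.toBlocks₂₁, Matrix.toBlocks₂₂] using e2.symm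
    · intro b _ hb
      simp [J, JacEntry, Matrix.toBlocks₂₂, hb]
    · simp
  have h3 : J * Matrix.fromBlocks 1 0 P 1 =
      Matrix.fromBlocks (Matrix.of fun i i0 : Fin d => fderiv ℝ (f i) x (Pi.single i0 1))
        J.toBlocks₁₂ 0 (Matrix.blockDiagonal' D) := by
    rw [← h1, ← h2, ← hD]
    conv_lhs => rw [← Matrix.fromBlocks_toBlocks J]
    rw [Matrix.fromBlocks_multiply]
    simp
  have h4 := congrArg Matrix.det h3
  rw [Matrix.det_mul, Matrix.det_fromBlocks_zero₁₂, Matrix.det_fromBlocks_zero₂₁,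
    det_blockDiag_aux] at h4
  simpa only [Matrix.det_one, mul_one] using h4

end Statement11
end
end

section
/- Let f₁,…,f_d be Nash functions on an open set U ⊆ ℝ^d. Then for every a = (a₁,…,a_d) ∈ ℝ^d, the set of nondegenerate solutions {x ∈ U : f_i(x) = a_i for all i ∈ {1,…,d} and det(∂f_i/∂x^j(x))_{i,j=1}^d ≠ 0} is finite, with at most c(f₁) ⋯ c(f_d) elements. -/
noncomputable section

open scoped BigOperators

namespace StatementTwelve

/-- `Φ` is an algebraic lifting map on `U` with annihilating polynomial map `p`. -/
def IsAlgLift (d M : ℕ) (U : Set (Fin d → ℝ)) (Φ : (Fin d → ℝ) → Fin M → ℝ)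
    (p : Fin M → MvPolynomial (Fin d ⊕ Fin M) ℝ) : Prop :=
  AnalyticOnNhd ℝ Φ U ∧
  (∀ x ∈ U, ∀ j, MvPolynomial.eval (Sum.elim x (Φ x)) (p j) = 0) ∧
  (∀ V : Set (Fin d → ℝ), IsOpen V → V ⊆ U → V.Nonempty →
    ∃ x ∈ V, Matrix.det (Matrix.of fun j j' : Fin M =>
      MvPolynomial.eval (Sum.elim x (Φ x)) (MvPolynomial.pderiv (Sum.inr j') (p j))) ≠ 0)

/-- `f` lifts to the polynomial `F` via the algebraic lifting map `Φ` with
annihilating map `p`. -/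
def IsNashRep (d M : ℕ) (U : Set (Fin d → ℝ)) (f : (Fin d → ℝ) → ℝ)
    (Φ : (Fin d → ℝ) → Fin M → ℝ)
    (p : Fin M → MvPolynomial (Fin d ⊕ Fin M) ℝ)
    (F : MvPolynomial (Fin d ⊕ Fin M) ℝ) : Prop :=
  IsAlgLift d M U Φ p ∧ ∀ x ∈ U, f x = MvPolynomial.eval (Sum.elim x (Φ x)) F

/-- `f` is a Nash function on `U`. -/
def IsNash (d : ℕ) (U : Set (Fin d → ℝ)) (f : (Fin d → ℝ) → ℝ) : Prop :=
  ∃ (M : ℕ) (Φ : (Fin d → ℝ) → Fin M → ℝ)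
    (p : Fin M → MvPolynomial (Fin d ⊕ Fin M) ℝ)
    (F : MvPolynomial (Fin d ⊕ Fin M) ℝ), IsNashRep d M U f Φ p F

open Classical in
/-- The complexity of a Nash function: the minimum of `deg F · deg p¹ ⋯ deg p^M`
over all representations; the zero function has complexity `0`. -/
def complexity (d : ℕ) (U : Set (Fin d → ℝ)) (f : (Fin d → ℝ) → ℝ) : ℕ :=
  if ∀ x ∈ U, f x = 0 then 0
  else sInf { c : ℕ | ∃ (M : ℕ) (Φ : (Fin d → ℝ) → Fin M → ℝ)
    (p : Fin M → MvPolynomial (Fin d ⊕ Fin M) ℝ)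
    (F : MvPolynomial (Fin d ⊕ Fin M) ℝ), IsNashRep d M U f Φ p F ∧
    c = F.totalDegree * ∏ j, (p j).totalDegree }

set_option linter.unusedSimpArgs false
/-- The derivative of the polynomial function of `p` at `z`. -/
def polyD {ι : Type} [Fintype ι] (p : MvPolynomial ι ℝ) (z : ι → ℝ) : (ι → ℝ) →L[ℝ] ℝ :=
  ∑ j, MvPolynomial.eval z (MvPolynomial.pderiv j p) • ContinuousLinearMap.proj j

theorem polyD_apply {ι : Type} [Fintype ι] (p : MvPolynomial ι ℝ) (z v : ι → ℝ) :
    polyD p z v = ∑ j, MvPolynomial.eval z (MvPolynomial.pderiv j p) * v j := by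
  simp [polyD]

theorem polyD_hasStrict {ι : Type} [Fintype ι] (p : MvPolynomial ι ℝ) (z : ι → ℝ) :
    HasStrictFDerivAt (fun y => MvPolynomial.eval y p) (polyD p z) z := by
  classical
  induction p using MvPolynomial.induction_on with
  | C a =>
    simp only [MvPolynomial.eval_C]
    refine (hasStrictFDerivAt_const a z).congr_fderiv ?_
    ext v; simp [polyD_apply]
  | add p q hp hq =>
    simp only [map_add]
    refine (hp.add hq).congr_fderiv ?_
    ext v; simp [polyD_apply, add_mul, Finset.sum_add_distrib]
  | mul_X p i hp =>
    simp only [map_mul, MvPolynomial.eval_X]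
    have h2 : HasStrictFDerivAt (fun y : ι → ℝ => y i)
      (ContinuousLinearMap.proj i : (ι → ℝ) →L[ℝ] ℝ) z :=
      (ContinuousLinearMap.proj i : (ι → ℝ) →L[ℝ] ℝ).hasStrictFDerivAt
    refine (hp.mul h2).congr_fderiv ?_
    symm
    ext v
    simp only [polyD_apply, MvPolynomial.pderiv_mul, MvPolynomial.pderiv_X, map_add, map_mul,
      MvPolynomial.eval_X, add_mul, Finset.sum_add_distrib]
    simp only [_root_.add_apply, _root_.smul_apply, polyD_apply,
      ContinuousLinearMap.proj_apply, smul_eq_mul, Finset.mul_sum]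
    rw [add_comm]
    congr 1
    · rw [Finset.sum_eq_single i]
      · simp
      · intro b _ hb; simp [Pi.single_apply, hb.symm]
      · simp
    · exact Finset.sum_congr rfl fun j _ => by ring

theorem polyD_rename {ι κ : Type} [Fintype ι] [Fintype κ] (g : ι → κ) (p : MvPolynomial ι ℝ)
    (z v : κ → ℝ) :
    polyD (MvPolynomial.rename g p) z v = polyD p (z ∘ g) (v ∘ g) := by
  let R : (κ → ℝ) →L[ℝ] (ι → ℝ) := ContinuousLinearMap.pi fun i => ContinuousLinearMap.proj (g i)
  have h1 := (polyD_hasStrict (MvPolynomial.rename g p) z).hasFDerivAt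
  have h2 : HasFDerivAt (fun y => MvPolynomial.eval (R y) p) ((polyD p (R z)).comp R) z :=
    (polyD_hasStrict p (R z)).hasFDerivAt.comp z R.hasFDerivAt
  have h3 : (fun y : κ → ℝ => MvPolynomial.eval y (MvPolynomial.rename g p)) =
      fun y => MvPolynomial.eval (R y) p := by
    ext y; rw [MvPolynomial.eval_rename]; rfl
  rw [h3] at h1
  have := DFunLike.congr_fun (h1.unique h2) v
  exact this

/-- Nondegenerate zeros persist under small perturbations. -/
theorem persist {E : Type*} [NormedAddCommGroup E] [NormedSpace ℝ E] [FiniteDimensional ℝ E]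
    (G H : E → E) (G' H' : E →L[ℝ] E) (z : E) (hG : HasStrictFDerivAt G G' z)
    (hH : HasStrictFDerivAt H H' z) (hz : G z = 0) (hinj : ∀ v, G' v = 0 → v = 0)
    (V : Set E) (hV : V ∈ nhds z) :
    ∀ᶠ ε : ℝ in nhds 0, ∃ y ∈ V, G y + ε • H y = 0 := by
  have : CompleteSpace E := FiniteDimensional.complete ℝ E
  have hsurj : Function.Surjective G' := by
    have : Function.Injective (G' : E →ₗ[ℝ] E) :=
      (injective_iff_map_eq_zero (G' : E →ₗ[ℝ] E)).2 hinj
    exact LinearMap.injective_iff_surjective.1 this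
  let K : ℝ × E → ℝ × E := fun q => (q.1, G q.2 + q.1 • H q.2)
  have hf : HasStrictFDerivAt (fun q : ℝ × E => q.1) (ContinuousLinearMap.fst ℝ ℝ E) (0, z) :=
    hasStrictFDerivAt_fst
  have hs : HasStrictFDerivAt (fun q : ℝ × E => q.2) (ContinuousLinearMap.snd ℝ ℝ E) (0, z) :=
    hasStrictFDerivAt_snd
  have hG2 := HasStrictFDerivAt.comp (g := G) (g' := G') (0, z) hG hs
  have hH2 := HasStrictFDerivAt.comp (g := H) (g' := H') (0, z) hH hs
  have hK := hf.prodMk (hG2.add (hf.smul hH2))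
  have hm := hK.map_nhds_eq_of_surj (by
    rw [LinearMap.range_eq_top]
    rintro ⟨s, w⟩
    obtain ⟨v, hv⟩ := hsurj (w - s • H z)
    refine ⟨(s, v), ?_⟩
    simp [hv])
  have hVV : (Set.univ ×ˢ V : Set (ℝ × E)) ∈ nhds ((0 : ℝ), z) :=
    prod_mem_nhds Filter.univ_mem hV
  have him := Filter.image_mem_map (m := fun q : ℝ × E => (q.1, G q.2 + q.1 • H q.2)) hVV
  have hm' : Filter.map (fun q : ℝ × E => (q.1, G q.2 + q.1 • H q.2)) (nhds ((0 : ℝ), z)) =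
      nhds ((0 : ℝ), (0 : E)) := by
    refine Eq.trans hm ?_
    simp [hz]
  rw [hm'] at him
  have hc : Filter.Tendsto (fun ε : ℝ => (ε, (0 : E))) (nhds 0) (nhds (0, 0)) :=
    (Continuous.prodMk_left (0 : E)).tendsto' _ _ rfl
  filter_upwards [hc him] with ε hε
  obtain ⟨⟨s, y⟩, ⟨-, hy⟩, h⟩ := hε
  simp only [Prod.mk.injEq] at h
  obtain ⟨rfl, h⟩ := h
  exact ⟨y, hy, h⟩

/-- The box monomials. -/
def boxMon {ι : Type} [Fintype ι] (e : ι → ℕ) (α : ∀ i, Fin (e i)) : MvPolynomial ι ℝ :=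
  MvPolynomial.monomial (Finsupp.equivFunOnFinite.symm fun i => (α i : ℕ)) 1

/-- The span of the box monomials. -/
def boxSpan {ι : Type} [Fintype ι] (e : ι → ℕ) : Submodule ℝ (MvPolynomial ι ℝ) :=
  Submodule.span ℝ (Set.range (boxMon e))

/-- The ideal of the perturbed system. -/
def pertIdeal {ι : Type} (P : ι → MvPolynomial ι ℝ) (e : ι → ℕ) (ε : ℝ) :
    Ideal (MvPolynomial ι ℝ) :=
  Ideal.span (Set.range fun i => P i + MvPolynomial.C ε * MvPolynomial.X i ^ (e i))

open Classical in
/-- The reduction operator. -/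
def redOp {ι : Type} (P : ι → MvPolynomial ι ℝ) (e : ι → ℕ) :
    MvPolynomial ι ℝ →ₗ[ℝ] MvPolynomial ι ℝ :=
  (MvPolynomial.basisMonomials ι ℝ).constr ℝ fun m =>
    if h : ∃ i, e i ≤ m i then
      P h.choose * MvPolynomial.monomial (m - Finsupp.single h.choose (e h.choose)) 1
    else 0

theorem redOp_of_ex {ι : Type} (P : ι → MvPolynomial ι ℝ) (e : ι → ℕ) (m : ι →₀ ℕ)
    (h : ∃ i, e i ≤ m i) : ∃ i, e i ≤ m i ∧ redOp P e (MvPolynomial.monomial m 1) =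
      P i * MvPolynomial.monomial (m - Finsupp.single i (e i)) 1 := by
  classical
  refine ⟨h.choose, h.choose_spec, ?_⟩
  have := (MvPolynomial.basisMonomials ι ℝ).constr_basis ℝ (fun m =>
    if h : ∃ i, e i ≤ m i then
      P h.choose * MvPolynomial.monomial (m - Finsupp.single h.choose (e h.choose)) 1
    else 0) m
  rw [MvPolynomial.coe_basisMonomials, dif_pos h] at this
  exact this

theorem redOp_of_not_ex {ι : Type} (P : ι → MvPolynomial ι ℝ) (e : ι → ℕ) (m : ι →₀ ℕ)
    (h : ¬ ∃ i, e i ≤ m i) : redOp P e (MvPolynomial.monomial m 1) = 0 := by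
  classical
  have := (MvPolynomial.basisMonomials ι ℝ).constr_basis ℝ (fun m =>
    if h : ∃ i, e i ≤ m i then
      P h.choose * MvPolynomial.monomial (m - Finsupp.single h.choose (e h.choose)) 1
    else 0) m
  rw [MvPolynomial.coe_basisMonomials, dif_neg h] at this
  exact this

theorem sub_single_add {ι : Type} (m : ι →₀ ℕ) (i : ι) (k : ℕ) (h : k ≤ m i) :
    m - Finsupp.single i k + Finsupp.single i k = m :=
  tsub_add_cancel_of_le (by simpa using h)

theorem redOp_degree {ι : Type} [Fintype ι] (P : ι → MvPolynomial ι ℝ) (e : ι → ℕ)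
    (hP : ∀ i, (P i).totalDegree ≤ e i) (D : ℕ) (q : MvPolynomial ι ℝ)
    (hq : q ∈ MvPolynomial.restrictTotalDegree ι ℝ D) :
    redOp P e q ∈ MvPolynomial.restrictTotalDegree ι ℝ D := by
  classical
  rw [MvPolynomial.as_sum q, map_sum]
  refine Submodule.sum_mem _ fun m hm => ?_
  rw [MvPolynomial.mem_restrictTotalDegree] at hq
  have hmD : (m.sum fun _ e => e) ≤ D := (MvPolynomial.le_totalDegree hm).trans hq
  have : MvPolynomial.monomial m (MvPolynomial.coeff m q) =
      (MvPolynomial.coeff m q) • (MvPolynomial.monomial m (1 : ℝ)) := by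
    rw [MvPolynomial.smul_monomial]; simp
  rw [this, map_smul]
  refine Submodule.smul_mem _ _ ?_
  by_cases h : ∃ i, e i ≤ m i
  · obtain ⟨i, hi, hr⟩ := redOp_of_ex P e m h
    rw [hr, MvPolynomial.mem_restrictTotalDegree]
    refine (MvPolynomial.totalDegree_mul _ _).trans ?_
    have h1 := MvPolynomial.totalDegree_monomial_le (m - Finsupp.single i (e i)) (1 : ℝ)
    have h2 : ((m - Finsupp.single i (e i)).sum fun _ e => e) + e i = m.sum fun _ e => e := by
      conv_rhs => rw [← sub_single_add m i (e i) hi]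
      rw [Finsupp.sum_add_index' (by simp) (by simp), Finsupp.sum_single_index rfl]
    have h3 := hP i
    have h1' : (MvPolynomial.monomial (m - Finsupp.single i (e i)) (1 : ℝ)).totalDegree ≤
      ((m - Finsupp.single i (e i)).sum fun _ e => e) := h1
    omega
  · rw [redOp_of_not_ex P e m h]; exact Submodule.zero_mem _

theorem redOp_mem {ι : Type} [Fintype ι] (P : ι → MvPolynomial ι ℝ) (e : ι → ℕ) (ε : ℝ)
    (q : MvPolynomial ι ℝ) :
    redOp P e q + ε • q ∈ (pertIdeal P e ε).restrictScalars ℝ ⊔ boxSpan e := by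
  classical
  have key : ∀ m : ι →₀ ℕ, redOp P e (MvPolynomial.monomial m 1) +
      ε • MvPolynomial.monomial m (1 : ℝ) ∈
      (pertIdeal P e ε).restrictScalars ℝ ⊔ boxSpan e := by
    intro m
    by_cases h : ∃ i, e i ≤ m i
    · obtain ⟨i, hi, hr⟩ := redOp_of_ex P e m h
      refine Submodule.mem_sup_left ?_
      have : redOp P e (MvPolynomial.monomial m 1) + ε • MvPolynomial.monomial m (1 : ℝ) =
          MvPolynomial.monomial (m - Finsupp.single i (e i)) 1 *
          (P i + MvPolynomial.C ε * MvPolynomial.X i ^ (e i)) := by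
        have hm : MvPolynomial.monomial m (1 : ℝ) =
            MvPolynomial.monomial (m - Finsupp.single i (e i)) 1 * MvPolynomial.X i ^ (e i) := by
          rw [MvPolynomial.X_pow_eq_monomial, MvPolynomial.monomial_mul, sub_single_add m i _ hi,
            one_mul]
        rw [hr, hm, MvPolynomial.smul_eq_C_mul]
        ring
      rw [this]
      exact Ideal.mul_mem_left _ _ (Ideal.subset_span ⟨i, rfl⟩)
    · rw [redOp_of_not_ex P e m h, zero_add]
      push Not at h
      refine Submodule.mem_sup_right (Submodule.smul_mem _ _ (Submodule.subset_span ?_))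
      refine ⟨fun i => ⟨m i, h i⟩, ?_⟩
      unfold boxMon
      congr 2
      ext i
      rfl
  induction q using MvPolynomial.induction_on' with
  | add p q hp hq =>
    have := Submodule.add_mem _ hp hq
    rw [map_add, smul_add]
    convert this using 1
    abel
  | monomial m c =>
    have : MvPolynomial.monomial m c = c • (MvPolynomial.monomial m (1 : ℝ)) := by
      rw [MvPolynomial.smul_monomial]; simp
    rw [this, map_smul, smul_comm, ← smul_add]
    exact Submodule.smul_mem _ _ (key m)

theorem boxMon_degree {ι : Type} [Fintype ι] (e : ι → ℕ) (α : ∀ i, Fin (e i)) :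
    (boxMon e α).totalDegree ≤ ∑ i, e i := by
  refine (MvPolynomial.totalDegree_monomial_le _ _).trans ?_
  rw [Finsupp.sum_fintype _ _ (by simp)]
  exact Finset.sum_le_sum fun i _ => (α i).2.le

theorem box_span {ι : Type} [Fintype ι] (P : ι → MvPolynomial ι ℝ) (e : ι → ℕ)
    (hP : ∀ i, (P i).totalDegree ≤ e i) :
    ∃ S : Set ℝ, S.Finite ∧ ∀ ε ∉ S, ∀ q,
      q ∈ (pertIdeal P e ε).restrictScalars ℝ ⊔ boxSpan e := by
  classical
  set D := ∑ i, e i + 1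
  let W := MvPolynomial.restrictTotalDegree ι ℝ D
  let N : Module.End ℝ W := (redOp P e).restrict (redOp_degree P e hP D)
  refine ⟨{ε | N.HasEigenvalue (-ε)}, ?_, ?_⟩
  · have := Module.End.finite_hasEigenvalue N
    exact this.preimage (neg_injective.injOn)
  intro ε hε
  have hinj : Function.Injective (N + ε • LinearMap.id : W →ₗ[ℝ] W) := by
    rw [injective_iff_map_eq_zero]
    intro w hw
    by_contra hne
    apply hε
    apply Module.End.hasEigenvalue_of_hasEigenvector (x := w)
    refine Module.End.hasEigenvector_iff.2 ⟨?_, hne⟩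
    rw [Module.End.mem_eigenspace_iff, neg_smul]
    exact eq_neg_of_add_eq_zero_left hw
  have hsurj := LinearMap.injective_iff_surjective.1 hinj
  have hW : ∀ w ∈ W, w ∈ (pertIdeal P e ε).restrictScalars ℝ ⊔ boxSpan e := by
    intro w hw
    obtain ⟨u, hu⟩ := hsurj ⟨w, hw⟩
    have := congrArg Subtype.val hu
    have h2 := redOp_mem P e ε u.1
    convert h2 using 1
    exact this.symm
  intro q
  induction q using MvPolynomial.induction_on with
  | C a =>
    apply hW
    rw [MvPolynomial.mem_restrictTotalDegree]
    simp
  | add p q hp hq => exact Submodule.add_mem _ hp hq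
  | mul_X p j hp =>
    obtain ⟨g, hg, b, hb, rfl⟩ := Submodule.mem_sup.1 hp
    rw [add_mul]
    refine Submodule.add_mem _ (Submodule.mem_sup_left ?_) ?_
    · exact Ideal.mul_mem_right _ _ hg
    · clear hp hg
      unfold boxSpan at hb
      induction hb using Submodule.span_induction with
      | mem x hx =>
        obtain ⟨α, rfl⟩ := hx
        apply hW
        rw [MvPolynomial.mem_restrictTotalDegree]
        refine (MvPolynomial.totalDegree_mul _ _).trans ?_
        have := boxMon_degree e α
        rw [MvPolynomial.totalDegree_X]
        omega
      | zero => simp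
      | add x y _ _ hx hy => rw [add_mul]; exact Submodule.add_mem _ hx hy
      | smul c x _ hx => rw [smul_mul_assoc]; exact Submodule.smul_mem _ _ hx

theorem exists_interp {ι : Type} (Z : Finset (ι → ℝ)) (v : Z → ℝ) :
    ∃ q : MvPolynomial ι ℝ, ∀ z : Z, MvPolynomial.eval z.1 q = v z := by
  classical
  have sep : ∀ z w : Z, z ≠ w → ∃ q : MvPolynomial ι ℝ,
      MvPolynomial.eval z.1 q = 1 ∧ MvPolynomial.eval w.1 q = 0 := by
    intro z w h
    have : ∃ i, z.1 i ≠ w.1 i := by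
      by_contra hc
      push Not at hc
      exact h (Subtype.ext (funext hc))
    obtain ⟨i, hi⟩ := this
    refine ⟨MvPolynomial.C (z.1 i - w.1 i)⁻¹ * (MvPolynomial.X i - MvPolynomial.C (w.1 i)), ?_, ?_⟩
    · have : z.1 i - w.1 i ≠ 0 := sub_ne_zero.2 hi
      simp [this]
    · simp
  choose! s hs1 hs0 using sep
  refine ⟨∑ z : Z, MvPolynomial.C (v z) * ∏ w ∈ Finset.univ.erase z, s z w, fun z => ?_⟩
  rw [map_sum, Finset.sum_eq_single z]
  · rw [map_mul, map_prod, Finset.prod_eq_one]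
    · simp
    · intro w hw
      exact hs1 z w (Finset.ne_of_mem_erase hw).symm
  · intro w _ hw
    rw [map_mul, map_prod, Finset.prod_eq_zero (i := z)]
    · simp
    · simp [hw.symm]
    · exact hs0 w z hw
  · simp

/-- The number of common zeros of a good perturbed system. -/
theorem card_zeros_le {ι : Type} [Fintype ι] (P : ι → MvPolynomial ι ℝ) (e : ι → ℕ) (ε : ℝ)
    (hspan : ∀ q, q ∈ (pertIdeal P e ε).restrictScalars ℝ ⊔ boxSpan e)
    (Z : Finset (ι → ℝ))
    (hZ : ∀ z ∈ Z, ∀ i, MvPolynomial.eval z (P i) + ε * z i ^ e i = 0) :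
    Z.card ≤ ∏ i, e i := by
  classical
  let ev : MvPolynomial ι ℝ →ₗ[ℝ] (Z → ℝ) :=
    LinearMap.pi fun z => (MvPolynomial.aeval z.1 : MvPolynomial ι ℝ →ₐ[ℝ] ℝ).toLinearMap
  have hev : ∀ q z, ev q z = MvPolynomial.eval z.1 q := fun q z => by
    simp [ev, MvPolynomial.aeval_eq_eval]
  have hI : ∀ q ∈ pertIdeal P e ε, ev q = 0 := by
    intro q hq
    ext z
    rw [hev]
    have : pertIdeal P e ε ≤ RingHom.ker (MvPolynomial.eval z.1) := by
      refine Ideal.span_le.2 ?_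
      rintro _ ⟨i, rfl⟩
      have := hZ z.1 z.2 i
      simpa [RingHom.mem_ker] using this
    exact this hq
  have hs : Function.Surjective (ev.comp (boxSpan e).subtype) := by
    intro v
    obtain ⟨q, hq⟩ := exists_interp Z v
    obtain ⟨g, hg, b, hb, hgb⟩ := Submodule.mem_sup.1 (hspan q)
    refine ⟨⟨b, hb⟩, ?_⟩
    have h1 : ev q = v := funext fun z => by rw [hev, hq]
    rw [← hgb, map_add, hI g hg, zero_add] at h1
    exact h1
  have : Module.Finite ℝ (boxSpan e) :=
    Module.Finite.span_of_finite ℝ (Set.finite_range _)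
  have h1 := LinearMap.finrank_le_finrank_of_surjective hs
  have h2 : Module.finrank ℝ (boxSpan e) ≤ Fintype.card (∀ i, Fin (e i)) :=
    finrank_range_le_card (R := ℝ) (boxMon e)
  simp only [Module.finrank_fintype_fun_eq_card, Fintype.card_coe] at h1
  simp only [Fintype.card_pi, Fintype.card_fin] at h2
  exact h1.trans h2

/-- Bezout bound for nondegenerate zeros. -/
theorem bezout {ι : Type} [Fintype ι] (P : ι → MvPolynomial ι ℝ) (e : ι → ℕ)
    (hP : ∀ i, (P i).totalDegree ≤ e i) (Z : Finset (ι → ℝ))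
    (hZ : ∀ z ∈ Z, ∀ i, MvPolynomial.eval z (P i) = 0)
    (hnd : ∀ z ∈ Z, ∀ v, (∀ i, polyD (P i) z v = 0) → v = 0) :
    Z.card ≤ ∏ i, e i := by
  classical
  obtain ⟨S, hS, hspan⟩ := box_span P e hP
  obtain ⟨V, hV, hdisj⟩ := Z.finite_toSet.t2_separation
  have hper : ∀ z ∈ Z, ∀ᶠ ε : ℝ in nhds 0, ∃ y ∈ V z, ∀ i,
      MvPolynomial.eval y (P i) + ε * y i ^ e i = 0 := by
    intro z hz
    have hG : HasStrictFDerivAt (fun y : ι → ℝ => fun i => MvPolynomial.eval y (P i))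
        (ContinuousLinearMap.pi fun i => polyD (P i) z) z :=
      hasStrictFDerivAt_pi.2 fun i => polyD_hasStrict (P i) z
    have hH : HasStrictFDerivAt
        (fun y : ι → ℝ => fun i => MvPolynomial.eval y (MvPolynomial.X i ^ e i))
        (ContinuousLinearMap.pi fun i => polyD (MvPolynomial.X i ^ e i) z) z :=
      hasStrictFDerivAt_pi.2 fun i => polyD_hasStrict _ z
    have := persist _ _ _ _ z hG hH (funext fun i => hZ z hz i)
      (fun v hv => hnd z hz v fun i => congrFun hv i) (V z) ((hV z).2.mem_nhds (hV z).1)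
    filter_upwards [this] with ε hε
    obtain ⟨y, hy, h⟩ := hε
    refine ⟨y, hy, fun i => ?_⟩
    simpa using congrFun h i
  have hall : ∀ᶠ ε : ℝ in nhds 0, ∀ z ∈ Z, ∃ y ∈ V z, ∀ i,
      MvPolynomial.eval y (P i) + ε * y i ^ e i = 0 :=
    (Filter.eventually_all_finset Z).2 hper
  have hne : ∃ᶠ ε : ℝ in nhds 0, ε ∉ S := by
    have : (Sᶜ : Set ℝ) ∈ nhdsWithin 0 {0}ᶜ := by
      have h3 : (S \ {0})ᶜ ∈ nhds (0 : ℝ) :=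
        (hS.subset Set.sdiff_subset).isClosed.isOpen_compl.mem_nhds (by simp)
      filter_upwards [mem_nhdsWithin_of_mem_nhds h3, self_mem_nhdsWithin] with x hx hx0 hxS
      exact hx ⟨hxS, hx0⟩
    have h4 : ∃ᶠ ε : ℝ in nhdsWithin 0 {0}ᶜ, ε ∉ S := Filter.Eventually.frequently this
    exact h4.filter_mono nhdsWithin_le_nhds
  obtain ⟨ε, hεS, hε⟩ := (hne.and_eventually hall).exists
  choose! y hyV hy using hε
  have hinj : Set.InjOn y Z := by
    intro z hz w hw h
    by_contra hne
    exact Set.disjoint_left.1 (hdisj hz hw hne) (hyV z hz) (h ▸ hyV w hw)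
  rw [← Finset.card_image_of_injOn hinj]
  refine card_zeros_le P e ε (hspan ε hεS) _ ?_
  intro z hz
  obtain ⟨w, hw, rfl⟩ := Finset.mem_image.1 hz
  exact hy w hw

theorem inj_of_det {d : ℕ} (D : Fin d → (Fin d → ℝ) →L[ℝ] ℝ)
    (h : Matrix.det (Matrix.of fun i j : Fin d => D i (Pi.single j 1)) ≠ 0)
    (v : Fin d → ℝ) (hv : ∀ i, D i v = 0) : v = 0 := by
  refine Matrix.eq_zero_of_mulVec_eq_zero h ?_
  ext i
  have h1 : v = ∑ j, v j • (Pi.single j (1 : ℝ) : Fin d → ℝ) := by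
    ext k; simp [Finset.sum_apply, Pi.single_apply]
  have h2 := hv i
  rw [h1, map_sum] at h2
  simp only [map_smul, smul_eq_mul] at h2
  simp only [Matrix.mulVec, dotProduct, Matrix.of_apply, Pi.zero_apply]
  rw [← h2]
  exact Finset.sum_congr rfl fun j _ => mul_comm _ _

theorem polyD_sumElim_zero {d M : ℕ} (q : MvPolynomial (Fin d ⊕ Fin M) ℝ)
    (z : Fin d ⊕ Fin M → ℝ) (w : Fin M → ℝ) :
    polyD q z (Sum.elim 0 w) =
      ∑ j, MvPolynomial.eval z (MvPolynomial.pderiv (Sum.inr j) q) * w j := by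
  simp [polyD_apply, Fintype.sum_sum_type]

theorem hasFDerivAt_lift {d M : ℕ} (Φ : (Fin d → ℝ) → Fin M → ℝ) (x : Fin d → ℝ)
    (hΦ : DifferentiableAt ℝ Φ x) (q : MvPolynomial (Fin d ⊕ Fin M) ℝ) :
    ∃ L : (Fin d → ℝ) →L[ℝ] ℝ,
      HasFDerivAt (fun y => MvPolynomial.eval (Sum.elim y (Φ y)) q) L x ∧
      ∀ v, L v = polyD q (Sum.elim x (Φ x)) (Sum.elim v (fderiv ℝ Φ x v)) := by
  let T : (Fin d → ℝ) →L[ℝ] (Fin d ⊕ Fin M → ℝ) := ContinuousLinearMap.pi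
    (Sum.rec (fun i => ContinuousLinearMap.proj i)
      (fun j => (ContinuousLinearMap.proj j).comp (fderiv ℝ Φ x)))
  have hT : ∀ v, T v = Sum.elim v (fderiv ℝ Φ x v) := by
    intro v; ext s; cases s <;> simp [T]
  have h1 : HasFDerivAt (fun y => (Sum.elim y (Φ y) : Fin d ⊕ Fin M → ℝ)) T x := by
    rw [hasFDerivAt_pi]
    rintro (i | j)
    · exact (ContinuousLinearMap.proj i : (Fin d → ℝ) →L[ℝ] ℝ).hasFDerivAt
    · exact hasFDerivAt_pi'.1 hΦ.hasFDerivAt j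
  refine ⟨(polyD q (Sum.elim x (Φ x))).comp T, ?_, fun v => ?_⟩
  · exact (polyD_hasStrict q (Sum.elim x (Φ x))).hasFDerivAt.comp x h1
  · rw [ContinuousLinearMap.comp_apply, hT]

/-- The count at good points. -/
theorem count_good (d : ℕ) (U : Set (Fin d → ℝ)) (hU : IsOpen U)
    (f : Fin d → (Fin d → ℝ) → ℝ) (a : Fin d → ℝ)
    (M : Fin d → ℕ) (Φ : ∀ i, (Fin d → ℝ) → Fin (M i) → ℝ)
    (p : ∀ i, Fin (M i) → MvPolynomial (Fin d ⊕ Fin (M i)) ℝ)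
    (F : ∀ i, MvPolynomial (Fin d ⊕ Fin (M i)) ℝ)
    (hrep : ∀ i, IsNashRep d (M i) U (f i) (Φ i) (p i) (F i))
    (Z : Finset (Fin d → ℝ)) (hZU : ∀ x ∈ Z, x ∈ U) (hZa : ∀ x ∈ Z, ∀ i, f i x = a i)
    (hZd : ∀ x ∈ Z, Matrix.det (Matrix.of fun i j : Fin d =>
          fderiv ℝ (f i) x (Pi.single j 1)) ≠ 0)
    (hZp : ∀ x ∈ Z, ∀ i, Matrix.det (Matrix.of fun j j' : Fin (M i) =>
      MvPolynomial.eval (Sum.elim x (Φ i x))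
        (MvPolynomial.pderiv (Sum.inr j') (p i j))) ≠ 0) :
    Z.card ≤ ∏ i, ((F i).totalDegree * ∏ j, (p i j).totalDegree) := by
  classical
  let g : ∀ i, Fin d ⊕ Fin (M i) → Fin d ⊕ (Σ i, Fin (M i)) := fun i =>
    Sum.map id (fun j => (⟨i, j⟩ : Σ i, Fin (M i)))
  let P : Fin d ⊕ (Σ i, Fin (M i)) → MvPolynomial (Fin d ⊕ (Σ i, Fin (M i))) ℝ :=
    Sum.elim (fun i => MvPolynomial.rename (g i) (F i) - MvPolynomial.C (a i))
      (fun s => MvPolynomial.rename (g s.1) (p s.1 s.2))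
  let e : Fin d ⊕ (Σ i, Fin (M i)) → ℕ :=
    Sum.elim (fun i => (F i).totalDegree) (fun s => (p s.1 s.2).totalDegree)
  let ζ : (Fin d → ℝ) → (Fin d ⊕ (Σ i, Fin (M i)) → ℝ) :=
    fun x => Sum.elim x (fun s => Φ s.1 x s.2)
  have hζg : ∀ x i, ζ x ∘ g i = Sum.elim x (Φ i x) := by
    intro x i; ext s; cases s <;> rfl
  have hζ : Function.Injective ζ := by
    intro x y h
    ext i
    exact congrFun h (Sum.inl i)
  have hcard := bezout P e ?_ (Z.image ζ) ?_ ?_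
  · rw [Finset.card_image_of_injective _ hζ] at hcard
    refine hcard.trans (le_of_eq ?_)
    rw [Fintype.prod_sum_type, Finset.prod_mul_distrib, Fintype.prod_sigma]
    rfl
  · rintro (i | s)
    · exact (MvPolynomial.totalDegree_sub_C_le _ _).trans (MvPolynomial.totalDegree_rename_le _ _)
    · exact MvPolynomial.totalDegree_rename_le _ _
  · intro z hz
    obtain ⟨x, hx, rfl⟩ := Finset.mem_image.1 hz
    rintro (i | ⟨i, j⟩)
    · simp only [P, Sum.elim_inl, map_sub, MvPolynomial.eval_C, MvPolynomial.eval_rename, hζg]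
      rw [← (hrep i).2 x (hZU x hx), hZa x hx, sub_self]
    · simp only [P, Sum.elim_inr, MvPolynomial.eval_rename, hζg]
      exact (hrep i).1.2.1 x (hZU x hx) j
  · intro z hz v hv
    obtain ⟨x, hx, rfl⟩ := Finset.mem_image.1 hz
    have hxU := hZU x hx
    have hUn : U ∈ nhds x := hU.mem_nhds hxU
    have hd : ∀ i, DifferentiableAt ℝ (Φ i) x := fun i =>
      ((hrep i).1.1 x hxU).differentiableAt
    let vx : Fin d → ℝ := fun i => v (Sum.inl i)
    let w : ∀ i, Fin (M i) → ℝ := fun i j => v (Sum.inr ⟨i, j⟩)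
    have hvg : ∀ i, v ∘ g i = Sum.elim vx (w i) := by
      intro i; ext s; cases s <;> rfl
    have hw : ∀ i, w i = fderiv ℝ (Φ i) x vx := by
      intro i
      rw [← sub_eq_zero]
      refine Matrix.eq_zero_of_mulVec_eq_zero (hZp x hx i) ?_
      ext j
      have h1 : polyD (p i j) (Sum.elim x (Φ i x)) (Sum.elim vx (w i)) = 0 := by
        have := hv (Sum.inr ⟨i, j⟩)
        simp only [P, Sum.elim_inr, polyD_rename, hζg, hvg] at this
        exact this
      obtain ⟨L, hL, hLv⟩ := hasFDerivAt_lift (Φ i) x (hd i) (p i j)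
      have hL0 : L = 0 := by
        refine hL.unique ?_
        refine (hasFDerivAt_const (0 : ℝ) x).congr_of_eventuallyEq ?_
        filter_upwards [hUn] with y hy
        exact (hrep i).1.2.1 y hy j
      have h2 := hLv vx
      rw [hL0] at h2
      have h3 : (Sum.elim 0 (w i - fderiv ℝ (Φ i) x vx) : Fin d ⊕ Fin (M i) → ℝ) =
          Sum.elim vx (w i) - Sum.elim vx (fderiv ℝ (Φ i) x vx) := by
        ext s; cases s <;> simp
      have h4 := polyD_sumElim_zero (p i j) (Sum.elim x (Φ i x)) (w i - fderiv ℝ (Φ i) x vx)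
      rw [h3, map_sub, h1, ← h2] at h4
      simp only [Matrix.mulVec, dotProduct, Matrix.of_apply, Pi.zero_apply]
      rw [← h4]; simp
    have hvx : vx = 0 := by
      refine inj_of_det (fun i => fderiv ℝ (f i) x) (hZd x hx) vx fun i => ?_
      obtain ⟨L, hL, hLv⟩ := hasFDerivAt_lift (Φ i) x (hd i) (F i)
      have hfi : HasFDerivAt (f i) L x := by
        refine hL.congr_of_eventuallyEq ?_
        filter_upwards [hUn] with y hy
        exact (hrep i).2 y hy
      rw [hfi.fderiv, hLv, ← hw]
      have := hv (Sum.inl i)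
      simp only [P, Sum.elim_inl] at this
      have h5 : polyD (MvPolynomial.rename (g i) (F i) - MvPolynomial.C (a i)) (ζ x) v =
          polyD (MvPolynomial.rename (g i) (F i)) (ζ x) v := by
        simp [polyD_apply]
      rw [h5, polyD_rename, hζg, hvg] at this
      exact this
    ext s
    rcases s with i | ⟨i, j⟩
    · exact congrFun hvx i
    · have := congrFun (hw i) j
      rw [hvx, map_zero] at this
      exact this

/-- `O` contains a nonempty open subset of each nonempty open subset of `U`. -/
def LocDense {X : Type*} [TopologicalSpace X] (O U : Set X) : Prop :=
  ∀ V : Set X, IsOpen V → V ⊆ U → V.Nonempty →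
    ∃ V' : Set X, IsOpen V' ∧ V'.Nonempty ∧ V' ⊆ V ∧ V' ⊆ O

theorem locDense_inter {X α : Type*} [TopologicalSpace X] (U : Set X) (O : α → Set X)
    (s : Finset α) (h : ∀ i ∈ s, LocDense (O i) U) : LocDense (⋂ i ∈ s, O i) U := by
  classical
  induction s using Finset.induction_on with
  | empty => intro V hV _ hne; exact ⟨V, hV, hne, le_rfl, by simp⟩
  | insert i s _ ih =>
    intro V hV hVU hne
    obtain ⟨V1, h1, h2, h3, h4⟩ := ih (fun j hj => h j (Finset.mem_insert_of_mem hj)) V hV hVU hne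
    obtain ⟨V2, k1, k2, k3, k4⟩ := h i (Finset.mem_insert_self _ _) V1 h1 (h3.trans hVU) h2
    refine ⟨V2, k1, k2, k3.trans h3, ?_⟩
    rw [Finset.set_biInter_insert]
    exact Set.subset_inter k4 (k3.trans h4)

theorem analytic_lift {d M : ℕ} {U : Set (Fin d → ℝ)} (Φ : (Fin d → ℝ) → Fin M → ℝ)
    (hΦ : AnalyticOnNhd ℝ Φ U) (q : MvPolynomial (Fin d ⊕ Fin M) ℝ) :
    AnalyticOnNhd ℝ (fun y => MvPolynomial.eval (Sum.elim y (Φ y)) q) U := by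
  have : AnalyticOnNhd ℝ (fun y => MvPolynomial.aeval
      (Sum.elim y (Φ y) : Fin d ⊕ Fin M → ℝ) q) U := by
    refine AnalyticOnNhd.aeval_mvPolynomial ?_ q
    rintro (i | j)
    · exact (ContinuousLinearMap.proj i : (Fin d → ℝ) →L[ℝ] ℝ).analyticOnNhd _
    · exact fun x hx => (analyticAt_pi_iff.1 (hΦ x hx)) j
  simpa [MvPolynomial.aeval_eq_eval] using this

/-- The count in general. -/
theorem count_all (d : ℕ) (U : Set (Fin d → ℝ)) (hU : IsOpen U)
    (f : Fin d → (Fin d → ℝ) → ℝ) (a : Fin d → ℝ)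
    (M : Fin d → ℕ) (Φ : ∀ i, (Fin d → ℝ) → Fin (M i) → ℝ)
    (p : ∀ i, Fin (M i) → MvPolynomial (Fin d ⊕ Fin (M i)) ℝ)
    (F : ∀ i, MvPolynomial (Fin d ⊕ Fin (M i)) ℝ)
    (hrep : ∀ i, IsNashRep d (M i) U (f i) (Φ i) (p i) (F i))
    (Z : Finset (Fin d → ℝ)) (hZU : ∀ x ∈ Z, x ∈ U) (hZa : ∀ x ∈ Z, ∀ i, f i x = a i)
    (hZd : ∀ x ∈ Z, Matrix.det (Matrix.of fun i j : Fin d =>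
          fderiv ℝ (f i) x (Pi.single j 1)) ≠ 0) :
    Z.card ≤ ∏ i, ((F i).totalDegree * ∏ j, (p i j).totalDegree) := by
  classical
  have hfan : ∀ i, AnalyticOnNhd ℝ (f i) U := fun i =>
    (analytic_lift (Φ i) (hrep i).1.1 (F i)).congr hU fun x hx => ((hrep i).2 x hx).symm
  let J : (Fin d → ℝ) → ℝ := fun x => Matrix.det (Matrix.of fun i j : Fin d =>
          fderiv ℝ (f i) x (Pi.single j 1))
  have hJ : ContinuousOn J U := by
    rw [continuousOn_iff_continuous_domRestrict]
    refine Continuous.matrix_det ?_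
    refine continuous_matrix fun i j => ?_
    have h1 : ContinuousOn (fun x => fderiv ℝ (f i) x (Pi.single j 1)) U :=
      (hfan i).fderiv.continuousOn.clm_apply continuousOn_const
    exact continuousOn_iff_continuous_domRestrict.1 h1
  let K : ∀ i : Fin d, (Fin d → ℝ) → ℝ := fun i x => Matrix.det (Matrix.of fun j j' : Fin (M i) =>
      MvPolynomial.eval (Sum.elim x (Φ i x)) (MvPolynomial.pderiv (Sum.inr j') (p i j)))
  have hK : ∀ i, ContinuousOn (K i) U := by
    intro i
    rw [continuousOn_iff_continuous_domRestrict]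
    refine Continuous.matrix_det ?_
    refine continuous_matrix fun j j' => ?_
    exact continuousOn_iff_continuous_domRestrict.1
      (analytic_lift (Φ i) (hrep i).1.1 (MvPolynomial.pderiv (Sum.inr j') (p i j))).continuousOn
  have hKd : LocDense (⋂ i ∈ (Finset.univ : Finset (Fin d)), (K i) ⁻¹' {0}ᶜ) U := by
    refine locDense_inter U _ _ fun i _ => ?_
    intro V hV hVU hne
    obtain ⟨x, hxV, hx⟩ := (hrep i).1.2.2 V hV hVU hne
    exact ⟨V ∩ (K i) ⁻¹' {0}ᶜ, ((hK i).mono hVU).isOpen_inter_preimage hV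
      isOpen_compl_singleton, ⟨x, hxV, hx⟩, Set.inter_subset_left, Set.inter_subset_right⟩
  let G : (Fin d → ℝ) → (Fin d → ℝ) := fun x i => f i x
  have hGc : ContinuousOn G U := continuousOn_pi.2 fun i => (hfan i).continuousOn
  let ND : Set (Fin d → ℝ) := U ∩ J ⁻¹' {0}ᶜ
  have hND : IsOpen ND := hJ.isOpen_inter_preimage hU isOpen_compl_singleton
  have hNDU : ND ⊆ U := Set.inter_subset_left
  have hopen : ∀ V ⊆ ND, IsOpen V → IsOpen (G '' V) := by
    intro V hVND hV
    rw [isOpen_iff_mem_nhds]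
    rintro _ ⟨x, hxV, rfl⟩
    have hs : HasStrictFDerivAt G (ContinuousLinearMap.pi fun i => fderiv ℝ (f i) x) x :=
      hasStrictFDerivAt_pi.2 fun i => ((hfan i) x (hNDU (hVND hxV))).hasStrictFDerivAt
    have hm := hs.map_nhds_eq_of_surj (by
      rw [LinearMap.range_eq_top]
      refine LinearMap.injective_iff_surjective.1 ?_
      rw [injective_iff_map_eq_zero]
      intro v hv
      exact inj_of_det (fun i => fderiv ℝ (f i) x) (hVND hxV).2 v fun i => congrFun hv i)
    rw [← hm]
    exact Filter.image_mem_map (hV.mem_nhds hxV)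
  obtain ⟨N, hN, hdisj⟩ := Z.finite_toSet.t2_separation
  let W : Set (Fin d → ℝ) := ⋂ x ∈ Z, G '' (N x ∩ ND)
  have hW : IsOpen W := isOpen_biInter_finset fun x _ =>
    hopen _ Set.inter_subset_right ((hN x).2.inter hND)
  have haW : a ∈ W := by
    refine Set.mem_iInter₂.2 fun x hx => ⟨x, ⟨(hN x).1, hZU x hx, hZd x hx⟩, ?_⟩
    exact funext fun i => hZa x hx i
  have hWd : LocDense (⋂ x ∈ Z,
      G '' (N x ∩ ND ∩ ⋂ i ∈ (Finset.univ : Finset (Fin d)), (K i) ⁻¹' {0}ᶜ)) W := by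
    refine locDense_inter W _ Z fun x hx => ?_
    intro V hV hVW hne
    obtain ⟨b, hb⟩ := hne
    obtain ⟨y, hy, hyb⟩ := Set.mem_iInter₂.1 (hVW hb) x hx
    have hsub : N x ∩ ND ⊆ U := Set.inter_subset_right.trans hNDU
    obtain ⟨V', h1, h2, h3, h4⟩ := hKd ((N x ∩ ND) ∩ G ⁻¹' V)
      ((hGc.mono hsub).isOpen_inter_preimage ((hN x).2.inter hND) hV)
      (Set.inter_subset_left.trans hsub) ⟨y, hy, by rw [Set.mem_preimage, hyb]; exact hb⟩
    refine ⟨G '' V', hopen V' (fun t ht => (h3 ht).1.2) h1, h2.image G, ?_, ?_⟩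
    · rintro _ ⟨t, ht, rfl⟩
      exact (h3 ht).2
    · exact Set.image_mono fun t ht => ⟨(h3 ht).1, h4 ht⟩
  obtain ⟨V, -, ⟨b, hb⟩, -, hVs⟩ := hWd W hW le_rfl ⟨a, haW⟩
  have hb' := fun x hx => Set.mem_iInter₂.1 (hVs hb) x hx
  choose! y hy hyb using hb'
  have hinj : Set.InjOn y Z := by
    intro z hz w hw h
    by_contra hne
    exact Set.disjoint_left.1 (hdisj hz hw hne) (hy z hz).1.1 (h ▸ (hy w hw).1.1)
  rw [← Finset.card_image_of_injOn hinj]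
  refine count_good d U hU f b M Φ p F hrep _ ?_ ?_ ?_ ?_
  · intro x hx
    obtain ⟨w, hw, rfl⟩ := Finset.mem_image.1 hx
    exact hNDU (hy w hw).1.2
  · intro x hx i
    obtain ⟨w, hw, rfl⟩ := Finset.mem_image.1 hx
    exact congrFun (hyb w hw) i
  · intro x hx
    obtain ⟨w, hw, rfl⟩ := Finset.mem_image.1 hx
    exact (hy w hw).1.2.2
  · intro x hx i
    obtain ⟨w, hw, rfl⟩ := Finset.mem_image.1 hx
    exact Set.mem_iInter₂.1 (hy w hw).2 i (Finset.mem_univ i)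

theorem statement12 (d : ℕ) (hd : 0 < d) (U : Set (Fin d → ℝ)) (hU : IsOpen U)
    (f : Fin d → (Fin d → ℝ) → ℝ) (hf : ∀ i, IsNash d U (f i)) (a : Fin d → ℝ) :
    { x : Fin d → ℝ | x ∈ U ∧ (∀ i, f i x = a i) ∧
        Matrix.det (Matrix.of fun i j : Fin d =>
          fderiv ℝ (f i) x (Pi.single j 1)) ≠ 0 }.Finite ∧
    { x : Fin d → ℝ | x ∈ U ∧ (∀ i, f i x = a i) ∧
        Matrix.det (Matrix.of fun i j : Fin d =>
          fderiv ℝ (f i) x (Pi.single j 1)) ≠ 0 }.ncard ≤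
      ∏ i : Fin d, complexity d U (f i) := by
  classical
  set S := { x : Fin d → ℝ | x ∈ U ∧ (∀ i, f i x = a i) ∧
        Matrix.det (Matrix.of fun i j : Fin d =>
          fderiv ℝ (f i) x (Pi.single j 1)) ≠ 0 } with hS
  have hcard : ∀ Z : Finset (Fin d → ℝ), (Z : Set (Fin d → ℝ)) ⊆ S →
      Z.card ≤ ∏ i : Fin d, complexity d U (f i) := by
    intro Z hZ
    by_cases h0 : ∃ i, ∀ x ∈ U, f i x = 0
    · obtain ⟨i, hi⟩ := h0
      have : Z = ∅ := by
        rw [Finset.eq_empty_iff_forall_notMem]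
        intro x hx
        obtain ⟨hxU, -, hdet⟩ := hZ hx
        apply hdet
        refine Matrix.det_eq_zero_of_row_eq_zero i fun j => ?_
        have hz : HasFDerivAt (f i) (0 : (Fin d → ℝ) →L[ℝ] ℝ) x := by
          refine (hasFDerivAt_const (0 : ℝ) x).congr_of_eventuallyEq ?_
          filter_upwards [hU.mem_nhds hxU] with y hy
          exact hi y hy
        simp [hz.fderiv]
      simp [this]
    · push Not at h0
      have hex : ∀ i, ∃ (M : ℕ) (Φ : (Fin d → ℝ) → Fin M → ℝ)
          (p : Fin M → MvPolynomial (Fin d ⊕ Fin M) ℝ)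
          (F : MvPolynomial (Fin d ⊕ Fin M) ℝ), IsNashRep d M U (f i) Φ p F ∧
          complexity d U (f i) = F.totalDegree * ∏ j, (p j).totalDegree := by
        intro i
        have hne : ¬ ∀ x ∈ U, f i x = 0 := by
          push Not
          exact h0 i
        have hc : complexity d U (f i) ∈ { c : ℕ | ∃ (M : ℕ) (Φ : (Fin d → ℝ) → Fin M → ℝ)
            (p : Fin M → MvPolynomial (Fin d ⊕ Fin M) ℝ)
            (F : MvPolynomial (Fin d ⊕ Fin M) ℝ), IsNashRep d M U (f i) Φ p F ∧
            c = F.totalDegree * ∏ j, (p j).totalDegree } := by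
          rw [complexity, if_neg hne]
          refine Nat.sInf_mem ?_
          obtain ⟨M, Φ, p, F, h⟩ := hf i
          exact ⟨_, M, Φ, p, F, h, rfl⟩
        exact hc
      choose M Φ p F hrep hc using hex
      simp only [hc]
      exact count_all d U hU f a M Φ p F hrep Z (fun x hx => (hZ hx).1)
        (fun x hx => (hZ hx).2.1) (fun x hx => (hZ hx).2.2)
  have hfin : S.Finite := by
    by_contra hinf
    obtain ⟨Z, hZ, hZc⟩ := Set.Infinite.exists_subset_card_eq hinf
      (∏ i : Fin d, complexity d U (f i) + 1)
    have := hcard Z hZ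
    omega
  refine ⟨hfin, ?_⟩
  rw [Set.ncard_eq_toFinset_card S hfin]
  exact hcard _ (by simp)

end StatementTwelve
end
end
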